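/- arXiv:2307.01815 — 4 statements merged into one kernel-verified Lean document; each statement's English description precedes it below -/
import Mathlib

section
/- There are infinitely many triples of integers (x, r, y) with r > 0, gcd(x, r) = 1 and xy ≠ 0 satisfying (x−4r)³ + (x−3r)³ + (x−2r)³ + (x−r)³ + x³ + (x+r)³ + (x+2r)³ + (x+3r)³ + (x+4r)³ = y², equivalently 9x(x² + 20r²) = y². -/
/-!
The sum of nine cubes equals `9 * x * (x ^ 2 + 20 * r ^ 2)`. Since `9` is a square, taking `x = 1`
leaves the Pell equation `b ^ 2 - 20 * r ^ 2 = 1` with `y = 3 * b`, and coprimality is automatic.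
As `20` is not a square, the powers of the fundamental solution give infinitely many `(b, r)`.
-/

theorem sum_nine_cubes {R : Type*} [CommRing R] (x r : R) :
    (x - 4 * r) ^ 3 + (x - 3 * r) ^ 3 + (x - 2 * r) ^ 3 + (x - r) ^ 3 + x ^ 3
      + (x + r) ^ 3 + (x + 2 * r) ^ 3 + (x + 3 * r) ^ 3 + (x + 4 * r) ^ 3
      = 9 * x * (x ^ 2 + 20 * r ^ 2) := by
  ring

theorem infinite_setOf_pell_solution_y_pos {d : ℤ} (hd_pos : 0 < d) (hd : ¬IsSquare d) :
    {a : Pell.Solution₁ d | 0 < a.y}.Infinite := by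
  obtain ⟨a₁, ha₁⟩ := Pell.IsFundamental.exists_of_not_isSquare hd_pos hd
  have zpow_injective : Function.Injective fun n : ℤ => a₁ ^ n :=
    Function.Injective.of_comp (f := Pell.Solution₁.y) ha₁.y_strictMono.injective
  have zpow_y_pos (n : ℤ) (hn : 0 < n) : 0 < (a₁ ^ n).y := by
    simpa only [zpow_zero, Pell.Solution₁.y_one] using ha₁.y_strictMono hn
  exact Set.infinite_of_injOn_mapsTo zpow_injective.injOn zpow_y_pos (Set.Ioi_infinite 0)

theorem infinitely_many_solutions_exponent_two :
    {t : ℤ × ℤ × ℤ | 0 < t.2.1 ∧ Int.gcd t.1 t.2.1 = 1 ∧ t.1 * t.2.2 ≠ 0 ∧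
      (t.1 - 4*t.2.1)^3 + (t.1 - 3*t.2.1)^3 + (t.1 - 2*t.2.1)^3 + (t.1 - t.2.1)^3 + t.1^3
        + (t.1 + t.2.1)^3 + (t.1 + 2*t.2.1)^3 + (t.1 + 3*t.2.1)^3 + (t.1 + 4*t.2.1)^3
        = t.2.2 ^ 2}.Infinite := by
  let toTriple (a : Pell.Solution₁ 20) : ℤ × ℤ × ℤ := (1, a.y, 3 * a.x)
  have toTriple_injective : Function.Injective toTriple := fun a b hab => by
    obtain ⟨hy, hx⟩ : a.y = b.y ∧ a.x = b.x := by simpa [toTriple] using hab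
    exact Pell.Solution₁.ext hx hy
  refine Set.infinite_of_injOn_mapsTo toTriple_injective.injOn (fun a ha => ?_)
    (infinite_setOf_pell_solution_y_pos (by norm_num) (by norm_num))
  refine ⟨ha, Int.one_gcd, ?_, ?_⟩
  · simpa [toTriple] using a.x_ne_zero (by norm_num)
  · rw [sum_nine_cubes]
    linear_combination -9 * a.prop
end

section
/- Let x, r, y be integers with gcd(x, r) = 1 and 0 < r < 10^6. If (x−4r)³ + (x−3r)³ + (x−2r)³ + (x−r)³ + x³ + (x+r)³ + (x+2r)³ + (x+3r)³ + (x+4r)³ = y⁵ (equivalently, 9x(x² + 20r²) = y⁵), then xy = 0. -/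
/-!
Separating the primes `2`, `3` and `5` from `9x(x² + 20r²) = y⁵` leaves `x` and `x² + 20r²` as
fifth powers up to bounded factors. The second one is a norm from `ℤ[√-5]`, where reduction of
binary quadratic forms shows that a primitive `w` of norm `v⁵` is a fifth power, and that one of
norm `27v⁵` satisfies `8w = (7 + √-5)z⁵` up to conjugation.

Comparing components modulo `25` settles all but two cases. In the first, `r` or `2r` is
`±a(a⁴ - 50a²b² + 125b⁴)` with `675 ∣ b ≠ 0`, which is at least `2·10⁶` in absolute value; this is
where the bound on `r` enters. The second asks for points on `16u¹⁰ + 5r² = 27v⁵`. There the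
identities

* `(15r)² = 95 N (3u⁴)² + G H` and `3G = (28u²)² + N(3v - 29u²)`,
  with `N = 3v + 26u²` and `G = 3v² - 3vu² + 10u⁴`,
* `(15r)² = -5 N (3u⁴)² + G H` and `75G = 19(4u²)² + N(15v - 7u²)`,
  with `N = 15v + 22u²` and `G = 3v² + 3vu² + 2u⁴`,

determine quadratic characters modulo `19` by reciprocity, and these contradict the classes of
`v / u²` modulo `19` allowed by `8w = (7 + √-5)z⁵`.
-/

lemma isCoprime_of_not_dvd {p a : ℤ} (hp : p.natAbs.Prime) (h : ¬ p ∣ a) : IsCoprime p a :=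
  (Prime.coprime_iff_not_dvd (Int.prime_iff_natAbs_prime.mpr hp)).mpr h

lemma isCoprime_of_modEq {a b n : ℤ} (h : a ≡ b [ZMOD n]) (hb : IsCoprime b n) :
    IsCoprime a n := by
  obtain ⟨e, he⟩ := h.symm.dvd
  rw [← sub_add_cancel a b, he, add_comm]
  exact hb.add_mul_left_left e

lemma pow_dvd_mul_add_pow {R : Type*} [CommRing R] {v σ τ : R} {n : ℕ} (h : v ^ n ∣ σ * τ)
    (x y : R) : v ^ n ∣ σ * (v * x + τ * y) ^ n := by
  have hτ : τ ∣ (v * x + τ * y) ^ n - (v * x) ^ n :=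
    (Dvd.intro y (add_sub_cancel_left _ _).symm).trans (sub_dvd_pow_sub_pow _ _ n)
  rw [← sub_add_cancel ((v * x + τ * y) ^ n) ((v * x) ^ n), mul_add]
  exact dvd_add (h.trans (mul_dvd_mul_left σ hτ)) ((mul_pow v x n ▸ dvd_mul_right _ _).mul_left σ)

/-! ### Powers in `ℤ[√d]` up to a bounded factor -/

lemma exists_two_mul_abs_sub_mul_le {a : ℤ} (ha : 0 < a) (b : ℤ) :
    ∃ k : ℤ, |2 * (b - k * a)| ≤ a := by
  have hdiv := Int.emod_add_mul_ediv (2 * b + a) (2 * a)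
  have hnonneg := Int.emod_nonneg (2 * b + a) (b := 2 * a) (by lia)
  have hlt := Int.emod_lt_of_pos (2 * b + a) (b := 2 * a) (by lia)
  refine ⟨(2 * b + a) / (2 * a), abs_le.mpr ⟨?_, ?_⟩⟩ <;> linarith

theorem exists_quadraticForm_le {D : ℤ} (hD : 0 < D) (a b c : ℤ) (ha : 0 < a)
    (hdisc : a * c - b ^ 2 = D) :
    ∃ x y : ℤ, 0 < a * x ^ 2 + 2 * b * x * y + c * y ^ 2 ∧
      3 * (a * x ^ 2 + 2 * b * x * y + c * y ^ 2) ^ 2 ≤ 4 * D := by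
  by_cases hle : 3 * a ^ 2 ≤ 4 * D
  · exact ⟨1, 0, by simpa using ha, by simpa using hle⟩
  obtain ⟨k, hk⟩ := exists_two_mul_abs_sub_mul_le ha b
  set b' := b - k * a with hb'
  set c' := c - 2 * k * b + k ^ 2 * a with hc'
  have hdisc' : a * c' - b' ^ 2 = D := by linear_combination hdisc
  have hc'_pos : 0 < c' := pos_of_mul_pos_right (by nlinarith [hdisc', sq_nonneg b']) ha.le
  obtain ⟨x, y, hpos, hsq⟩ := exists_quadraticForm_le hD c' b' a hc'_pos (by linarith [hdisc'])
  have hform : a * (y - k * x) ^ 2 + 2 * b * (y - k * x) * x + c * x ^ 2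
      = c' * x ^ 2 + 2 * b' * x * y + a * y ^ 2 := by rw [hb', hc']; ring
  exact ⟨y - k * x, x, by rwa [hform], by rwa [hform]⟩
termination_by a.toNat
decreasing_by
  have hb'_sq : (2 * b') ^ 2 ≤ a ^ 2 := sq_le_sq' (abs_le.mp hk).1 (abs_le.mp hk).2
  exact (Int.toNat_lt_toNat ha).mpr (lt_of_mul_lt_mul_left (by nlinarith [hdisc']) ha.le)

section Zsqrtd

variable {d : ℤ}

lemma re_pow_five (z : ℤ√d) :
    (z ^ 5).re = z.re ^ 5 + 10 * d * z.re ^ 3 * z.im ^ 2 + 5 * d ^ 2 * z.re * z.im ^ 4 := by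
  simp only [pow_succ, pow_zero, one_mul, Zsqrtd.re_mul, Zsqrtd.im_mul]
  ring

lemma im_pow_five (z : ℤ√d) :
    (z ^ 5).im = 5 * z.re ^ 4 * z.im + 10 * d * z.re ^ 2 * z.im ^ 3 + d ^ 2 * z.im ^ 5 := by
  simp only [pow_succ, pow_zero, one_mul, Zsqrtd.re_mul, Zsqrtd.im_mul]
  ring

lemma norm_pow_eq (z : ℤ√d) (n : ℕ) : (z ^ n).norm = z.norm ^ n :=
  map_pow Zsqrtd.normMonoidHom z n

lemma isCoprime_im_norm {w : ℤ√d} (hw : IsCoprime w.re w.im) : IsCoprime w.im w.norm := by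
  rw [Zsqrtd.norm_def, sub_eq_add_neg, mul_comm (d * w.im), ← mul_neg]
  exact (hw.symm.mul_right hw.symm).add_mul_left_right _

lemma exists_sqrt_mod_of_dvd_norm {w : ℤ√d} (hw : IsCoprime w.re w.im) {m : ℤ}
    (hm : m ∣ w.norm) :
    ∃ t : ℤ, m ∣ t ^ 2 - d ∧ (m : ℤ√d) ∣ w - w.im * ⟨t, 1⟩ := by
  obtain ⟨i, j, hij⟩ := (isCoprime_im_norm hw).of_isCoprime_of_dvd_right hm
  obtain ⟨e, he⟩ := hm
  rw [Zsqrtd.norm_def] at he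
  refine ⟨w.re * i, ⟨i ^ 2 * e - d * j * (1 + w.im * i), ?_⟩, (Zsqrtd.intCast_dvd _ _).mpr ?_⟩
  · linear_combination i ^ 2 * he + d * (1 + w.im * i) * hij
  · simp only [Zsqrtd.re_sub, Zsqrtd.im_sub, Zsqrtd.re_mul, Zsqrtd.im_mul, Zsqrtd.re_intCast,
      Zsqrtd.im_intCast]
    refine ⟨⟨w.re * j, by linear_combination -w.re * hij⟩, ⟨0, by ring⟩⟩

lemma exists_norm_eq_mul (hd : d < 0) {v t : ℤ} (hv : 0 < v) (ht : v ∣ t ^ 2 - d) :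
    ∃ k x y : ℤ, 0 < k ∧ 3 * k ^ 2 ≤ -4 * d ∧
      ((v * x + ⟨t, -1⟩ * y : ℤ√d)).norm = k * v := by
  obtain ⟨e, he⟩ := ht
  obtain ⟨x, y, hpos, hle⟩ := exists_quadraticForm_le (neg_pos.mpr hd) v t e hv (by linarith)
  refine ⟨_, x, y, hpos, by linarith, ?_⟩
  simp only [Zsqrtd.norm_def, Zsqrtd.re_add, Zsqrtd.im_add, Zsqrtd.re_mul, Zsqrtd.im_mul,
    Zsqrtd.re_intCast, Zsqrtd.im_intCast]
  linear_combination y ^ 2 * he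

lemma pow_dvd_mul_pow {w : ℤ√d} {v t : ℤ} {n : ℕ} (ht : v ^ n ∣ t ^ 2 - d)
    (hw : (v : ℤ√d) ^ n ∣ w - w.im * ⟨t, 1⟩) (x y : ℤ) :
    (v : ℤ√d) ^ n ∣ w * (v * x + ⟨t, -1⟩ * y) ^ n := by
  have hconj : (v : ℤ√d) ^ n ∣ ⟨t, 1⟩ * ⟨t, -1⟩ := by
    rw [← Int.cast_pow, Zsqrtd.intCast_dvd]
    exact ⟨by simpa [sq, sub_eq_add_neg] using ht, by simp⟩
  have := pow_dvd_mul_add_pow hconj x y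
  rw [← sub_add_cancel w (w.im * ⟨t, 1⟩), add_mul, mul_assoc (w.im : ℤ√d)]
  exact dvd_add (hw.mul_right _) (this.mul_left _)

theorem exists_pow_mul_eq_mul_pow (hd : d < 0) {n : ℕ} (hn : n ≠ 0) {w : ℤ√d}
    (hw : IsCoprime w.re w.im) {κ v : ℤ} (hv : 0 < v) (hnorm : w.norm = κ * v ^ n) :
    ∃ k : ℤ, 0 < k ∧ 3 * k ^ 2 ≤ -4 * d ∧ ∃ c z : ℤ√d,
      z.norm = k * v ∧ c.norm = κ * k ^ n ∧ (k : ℤ√d) ^ n * w = c * z ^ n := by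
  obtain ⟨t, ht, hwt⟩ := exists_sqrt_mod_of_dvd_norm hw (Dvd.intro_left κ hnorm.symm)
  obtain ⟨k, x, y, hk, hkle, hknorm⟩ := exists_norm_eq_mul hd hv ((dvd_pow_self v hn).trans ht)
  rw [Int.cast_pow] at hwt
  obtain ⟨c, hc⟩ := pow_dvd_mul_pow ht hwt x y
  set z : ℤ√d := v * x + ⟨t, -1⟩ * y
  have hvn : v ^ n ≠ 0 := pow_ne_zero n hv.ne'
  refine ⟨k, hk, hkle, c, star z, by rw [Zsqrtd.norm_conj, hknorm], ?_, ?_⟩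
  · have hnorms := congrArg Zsqrtd.norm hc
    rw [Zsqrtd.norm_mul, Zsqrtd.norm_mul, norm_pow_eq, norm_pow_eq, Zsqrtd.norm_intCast, hnorm,
      hknorm] at hnorms
    refine mul_left_cancel₀ (mul_ne_zero hvn hvn) ?_
    linear_combination -hnorms
  · refine Zsqrtd.eq_of_smul_eq_smul_left hvn ?_
    have hz : z * star z = k * v := by rw [← Zsqrtd.norm_eq_mul_conj, hknorm, Int.cast_mul]
    push_cast
    calc (v : ℤ√d) ^ n * (k ^ n * w) = w * (k * v) ^ n := by ring
      _ = w * z ^ n * star z ^ n := by rw [← hz, mul_pow, mul_assoc]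
      _ = v ^ n * (c * star z ^ n) := by rw [hc, mul_assoc]

lemma pos_of_norm_eq_mul_pow (hd : d < 0) {n : ℕ} (hn : Odd n) {w : ℤ√d}
    (hw : IsCoprime w.re w.im) {κ v : ℤ} (hκ : 0 < κ) (hnorm : w.norm = κ * v ^ n) : 0 < v := by
  have hw_ne : w ≠ 0 := by
    rintro rfl
    exact not_isCoprime_zero_zero hw
  have hnorm_pos : 0 < w.norm :=
    (Zsqrtd.norm_nonneg hd.le w).lt_of_ne' (mt (Zsqrtd.norm_eq_zero_iff hd w).mp hw_ne)
  exact hn.pow_pos_iff.mp (pos_of_mul_pos_right (hnorm ▸ hnorm_pos) hκ.le)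

lemma dvd_of_intCast_dvd_intCast_mul {w : ℤ√d} (hw : IsCoprime w.re w.im) {p m : ℤ}
    (h : (p : ℤ√d) ∣ m * w) : p ∣ m := by
  obtain ⟨i, j, hij⟩ := hw
  obtain ⟨hre, him⟩ := (Zsqrtd.intCast_dvd p _).mp h
  rw [Zsqrtd.re_smul] at hre
  rw [Zsqrtd.im_smul] at him
  have : m = i * (m * w.re) + j * (m * w.im) := by linear_combination -m * hij
  rw [this]
  exact dvd_add (hre.mul_left i) (him.mul_left j)

end Zsqrtd

/-! ### Norms in `ℤ[√-5]` -/

lemma norm_eq_sq_add_five_mul_sq (z : ℤ√(-5)) : z.norm = z.re ^ 2 + 5 * z.im ^ 2 := by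
  rw [Zsqrtd.norm_def]
  ring

lemma eq_one_or_eq_two_of_three_mul_sq_le {k : ℤ} (hk : 0 < k) (hle : 3 * k ^ 2 ≤ -4 * -5) :
    k = 1 ∨ k = 2 := by
  have : k < 3 := by nlinarith
  lia

lemma eq_one_or_eq_neg_one_of_norm_eq_one {c : ℤ√(-5)} (hc : c.norm = 1) : c = 1 ∨ c = -1 := by
  rw [norm_eq_sq_add_five_mul_sq] at hc
  have him : c.im = 0 := by
    by_contra him
    nlinarith [sq_nonneg c.re, Int.one_le_abs him, sq_abs c.im]
  have hre : c.re = 1 ∨ c.re = -1 := sq_eq_one_iff.mp (by simpa [him] using hc)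
  exact hre.imp (fun h ↦ Zsqrtd.ext h him) (fun h ↦ Zsqrtd.ext h him)

lemma norm_ne_two_pow_of_odd {n : ℕ} (hn : Odd n) (c : ℤ√(-5)) : c.norm ≠ 2 ^ n := by
  obtain ⟨m, rfl⟩ := hn
  intro hc
  rw [norm_eq_sq_add_five_mul_sq] at hc
  have hmod := congrArg (Int.cast : ℤ → ZMod 5) hc
  push_cast at hmod
  rw [pow_succ 2 (2 * m), pow_mul', show (5 : ZMod 5) = 0 from rfl, zero_mul, add_zero] at hmod
  have two_nonsquare : ∀ x y : ZMod 5, x ^ 2 = y ^ 2 * 2 → y = 0 := by decide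
  have two_ne_zero : (2 : ZMod 5) ≠ 0 := by decide
  have : Fact (Nat.Prime 5) := ⟨by norm_num⟩
  exact pow_ne_zero m two_ne_zero (two_nonsquare _ _ hmod)

theorem exists_eq_pow_of_norm_eq_pow {n : ℕ} (hn : Odd n) {w : ℤ√(-5)}
    (hw : IsCoprime w.re w.im) {v : ℤ} (hnorm : w.norm = v ^ n) : ∃ z : ℤ√(-5), w = z ^ n := by
  have hv : 0 < v := pos_of_norm_eq_mul_pow (by norm_num) hn hw one_pos (by rw [hnorm, one_mul])
  obtain ⟨k, hk, hkle, c, z, -, hc, hkw⟩ := exists_pow_mul_eq_mul_pow (κ := 1) (by norm_num)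
    hn.pos.ne' hw hv (by rw [hnorm, one_mul])
  obtain rfl | rfl := eq_one_or_eq_two_of_three_mul_sq_le hk hkle
  · simp only [Int.cast_one, one_pow, one_mul] at hc hkw
    obtain rfl | rfl := eq_one_or_eq_neg_one_of_norm_eq_one hc
    · exact ⟨z, by rw [hkw, one_mul]⟩
    · exact ⟨-z, by rw [hkw, hn.neg_pow, neg_one_mul]⟩
  · exact absurd (by rw [hc, one_mul]) (norm_ne_two_pow_of_odd hn c)

lemma norm_ne_twentySeven (c : ℤ√(-5)) : c.norm ≠ 27 := by
  rw [norm_eq_sq_add_five_mul_sq]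
  intro hc
  have hmod := congrArg (Int.cast : ℤ → ZMod 5) hc
  push_cast at hmod
  exact (by decide : ∀ x y : ZMod 5, x ^ 2 + 5 * y ^ 2 ≠ 27) _ _ hmod

lemma three_dvd_or_eq_of_norm_eq {c : ℤ√(-5)} (hc : c.norm = 27 * 2 ^ 5) :
    (3 : ℤ√(-5)) ∣ c ∨ (c = 4 * ⟨7, 1⟩ ∨ c = -(4 * ⟨7, 1⟩)) ∨
      (star c = 4 * ⟨7, 1⟩ ∨ star c = -(4 * ⟨7, 1⟩)) := by
  rw [norm_eq_sq_add_five_mul_sq, ← sq_abs c.re, ← sq_abs c.im] at hc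
  have hre_im : (|c.re| = 28 ∧ |c.im| = 4) ∨ (|c.re| = 12 ∧ |c.im| = 12) := by
    have hre_nonneg := abs_nonneg c.re
    have him_nonneg := abs_nonneg c.im
    have hre : |c.re| < 30 := by nlinarith
    have him : |c.im| < 14 := by nlinarith
    generalize |c.re| = a at *
    generalize |c.im| = b at *
    interval_cases b <;> interval_cases a <;> lia
  obtain ⟨hre, him⟩ | ⟨hre, him⟩ := hre_im
  · rw [abs_eq (by norm_num)] at hre him
    rcases hre with hre | hre <;> rcases him with him | him <;> simp [Zsqrtd.ext_iff, hre, him]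
  · exact .inl ((Zsqrtd.intCast_dvd 3 c).mpr
      ⟨(dvd_abs 3 c.re).mp (hre ▸ by norm_num), (dvd_abs 3 c.im).mp (him ▸ by norm_num)⟩)

theorem exists_eight_mul_eq_of_norm_eq {w : ℤ√(-5)} (hw : IsCoprime w.re w.im) {v : ℤ}
    (hnorm : w.norm = 27 * v ^ 5) :
    ∃ z : ℤ√(-5), z.norm = 2 * v ∧ (8 * w = ⟨7, 1⟩ * z ^ 5 ∨ 8 * star w = ⟨7, 1⟩ * z ^ 5) := by
  have hv : 0 < v := pos_of_norm_eq_mul_pow (by norm_num) (by decide) hw (by norm_num) hnorm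
  obtain ⟨k, hk, hkle, c, z, hz, hc, hkw⟩ :=
    exists_pow_mul_eq_mul_pow (by norm_num) (by norm_num) hw hv hnorm
  obtain rfl | rfl := eq_one_or_eq_two_of_three_mul_sq_le hk hkle
  · exact absurd hc (norm_ne_twentySeven c)
  have four_mul_cancel {x y : ℤ√(-5)} (h : 4 * x = 4 * y) : x = y :=
    Zsqrtd.eq_of_smul_eq_smul_left (a := 4) (by norm_num) h
  have hstar : (2 : ℤ√(-5)) ^ 5 * star w = star c * star z ^ 5 := by
    simpa [mul_comm] using congrArg star hkw
  obtain h3 | (rfl | rfl) | (hc' | hc') := three_dvd_or_eq_of_norm_eq hc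
  · exact absurd (dvd_of_intCast_dvd_intCast_mul (p := 3) (m := 2 ^ 5) hw
      (by push_cast at hkw ⊢; exact hkw ▸ h3.mul_right _)) (by norm_num)
  · exact ⟨z, hz, .inl (four_mul_cancel (by linear_combination hkw))⟩
  · exact ⟨-z, by rwa [Zsqrtd.norm_neg], .inl (four_mul_cancel (by linear_combination hkw))⟩
  · rw [hc'] at hstar
    exact ⟨star z, by rwa [Zsqrtd.norm_conj], .inr (four_mul_cancel (by linear_combination hstar))⟩
  · rw [hc'] at hstar
    exact ⟨-star z, by rwa [Zsqrtd.norm_neg, Zsqrtd.norm_conj],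
      .inr (four_mul_cancel (by linear_combination hstar))⟩

lemma five_dvd_of_zmod {u : ℤ} (h : 5 * (u : ZMod 25) = 0) : 5 ∣ u := by
  have : (25 : ℤ) ∣ 5 * u := (ZMod.intCast_zmod_eq_zero_iff_dvd _ 25).mp (by exact_mod_cast h)
  lia

lemma re_pow_five_neg_five (z : ℤ√(-5)) :
    (z ^ 5).re = z.re * (z.re ^ 4 - 50 * z.re ^ 2 * z.im ^ 2 + 125 * z.im ^ 4) := by
  rw [re_pow_five]
  ring

lemma im_pow_five_neg_five (z : ℤ√(-5)) :
    (z ^ 5).im = 5 * (z.im * (z.re ^ 4 - 10 * z.re ^ 2 * z.im ^ 2 + 5 * z.im ^ 4)) := by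
  rw [im_pow_five]
  ring

lemma intCast_zmod_re_pow_five (z : ℤ√(-5)) : ((z ^ 5).re : ZMod 25) = z.re ^ 5 := by
  rw [← sub_eq_zero]
  have : (25 : ℤ) ∣ (z ^ 5).re - z.re ^ 5 :=
    ⟨-2 * z.re ^ 3 * z.im ^ 2 + 5 * z.re * z.im ^ 4, by rw [re_pow_five]; ring⟩
  exact_mod_cast (ZMod.intCast_zmod_eq_zero_iff_dvd _ 25).mpr this

lemma five_dvd_of_norm_eq_pow_five {w : ℤ√(-5)} (hw : IsCoprime w.re w.im) {β u v : ℤ}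
    (hβ : β = 1 ∨ β = 4) (hnorm : w.norm = v ^ 5) (hre : w.re = 27 * β * u ^ 5) : 5 ∣ u := by
  obtain ⟨z, rfl⟩ := exists_eq_pow_of_norm_eq_pow (by decide) hw hnorm
  have hmod := intCast_zmod_re_pow_five z
  rw [hre] at hmod
  push_cast at hmod
  have hdecide : ∀ b x y : ZMod 25, b = 1 ∨ b = 4 → 27 * b * x ^ 5 = y ^ 5 → 5 * x = 0 := by
    decide +kernel
  exact five_dvd_of_zmod (hdecide _ _ _ (hβ.imp (by simp [·]) (by simp [·])) hmod)

lemma exists_eight_mul_re_eq_and_abs_im_eq {w : ℤ√(-5)} (hw : IsCoprime w.re w.im) {v : ℤ}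
    (hnorm : w.norm = 27 * v ^ 5) :
    ∃ z : ℤ√(-5), z.norm = 2 * v ∧ 8 * w.re = 7 * (z ^ 5).re - 5 * (z ^ 5).im ∧
      8 * |w.im| = |(z ^ 5).re + 7 * (z ^ 5).im| := by
  have components {x y : ℤ√(-5)} (h : 8 * x = ⟨7, 1⟩ * y) :
      8 * x.re = 7 * y.re - 5 * y.im ∧ 8 * |x.im| = |y.re + 7 * y.im| := by
    simp only [Zsqrtd.ext_iff, Zsqrtd.re_mul, Zsqrtd.im_mul, Zsqrtd.re_ofNat, Zsqrtd.im_ofNat] at h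
    push_cast at h
    rw [← abs_of_nonneg (by norm_num : (0 : ℤ) ≤ 8), ← abs_mul, abs_of_nonneg (by norm_num)]
    exact ⟨by linarith, congrArg _ (by linarith)⟩
  obtain ⟨z, hz, h | h⟩ := exists_eight_mul_eq_of_norm_eq hw hnorm
  · exact ⟨z, hz, components h⟩
  · exact ⟨z, hz, by simpa using components h⟩

lemma five_dvd_of_norm_eq_mul_pow_five {w : ℤ√(-5)} (hw : IsCoprime w.re w.im) {u v : ℤ}
    (hnorm : w.norm = 27 * v ^ 5) (hre : w.re = u ^ 5) : 5 ∣ u := by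
  obtain ⟨z, -, hz, -⟩ := exists_eight_mul_re_eq_and_abs_im_eq hw hnorm
  have hmod := congrArg (Int.cast : ℤ → ZMod 25) hz
  rw [hre, im_pow_five_neg_five] at hmod
  push_cast at hmod
  rw [intCast_zmod_re_pow_five, ← mul_assoc, show (5 * 5 : ZMod 25) = 0 from rfl, zero_mul,
    sub_zero] at hmod
  exact five_dvd_of_zmod
    ((by decide +kernel : ∀ x y : ZMod 25, 8 * x ^ 5 = 7 * y ^ 5 → 5 * x = 0) _ _ hmod)

lemma not_five_dvd_im_of_norm_eq {w : ℤ√(-5)} (hw : IsCoprime w.re w.im) {v : ℤ}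
    (hnorm : w.norm = 27 * v ^ 5) : ¬ 5 ∣ w.im := by
  intro him
  obtain ⟨z, -, hz_re, hz_im⟩ := exists_eight_mul_re_eq_and_abs_im_eq hw hnorm
  have hQ : 5 ∣ (z ^ 5).im := im_pow_five_neg_five z ▸ dvd_mul_right 5 _
  have hPQ : 5 ∣ (z ^ 5).re + 7 * (z ^ 5).im :=
    (dvd_abs _ _).mp (hz_im ▸ ((dvd_abs _ _).mpr him).mul_left 8)
  have hre : 5 ∣ w.re := by lia
  have := hw.isUnit_of_dvd' hre him
  norm_num [Int.isUnit_iff] at this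

/-! ### A quintic form taking no small values -/

lemma le_abs_sq_sub {k c M x : ℤ} (hk : 0 ≤ k) (hle : k ^ 2 + M ≤ c) (hge : c + M ≤ (k + 1) ^ 2) :
    M ≤ |x ^ 2 - c| := by
  rw [← sq_abs x, le_abs]
  rcases le_or_gt |x| k with hx | hx
  · right
    linarith [pow_le_pow_left₀ (abs_nonneg x) hx 2]
  · left
    linarith [pow_le_pow_left₀ (by lia) (Int.add_one_le_of_lt hx) 2]

lemma le_abs_sq_sub_five_hundred_mul_pow {b : ℤ} (hb : b ≠ 0) (hdvd : 675 ∣ b)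
    (hlt : |b| < 675 * 2963) (x : ℤ) : 2963 ≤ |x ^ 2 - 500 * b ^ 4| := by
  -- `101880847224834168 / 10 ^ 10` approximates `√500 * 675 ^ 2`.
  let sqrtFloor (n : ℕ) : ℕ := n ^ 2 * 101880847224834168 / 10 ^ 10
  have between_squares : ∀ i < 55, ∀ j < 55, 0 < 55 * i + j →
      sqrtFloor (55 * i + j) ^ 2 + 2963 ≤ 500 * (675 * (55 * i + j)) ^ 4 ∧
      500 * (675 * (55 * i + j)) ^ 4 + 2963 ≤ (sqrtFloor (55 * i + j) + 1) ^ 2 := by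
    decide +kernel
  obtain ⟨n, hn⟩ : ∃ n : ℕ, |b| = 675 * n :=
    ⟨b.natAbs / 675, by rw [Int.abs_eq_natAbs]; lia⟩
  have h := between_squares (n / 55) (by lia) (n % 55) (by lia)
  rw [Nat.div_add_mod] at h
  obtain ⟨hle, hge⟩ := h (by have := abs_pos.mpr hb; lia)
  rw [← Even.pow_abs (by decide : Even 4) b, hn]
  exact le_abs_sq_sub (Int.natCast_nonneg (sqrtFloor n)) (by exact_mod_cast hle)
    (by exact_mod_cast hge)

lemma le_abs_mul_quartic {a b : ℤ} (hb : b ≠ 0) (hdvd : 675 ∣ b)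
    (hne : a * (a ^ 4 - 50 * a ^ 2 * b ^ 2 + 125 * b ^ 4) ≠ 0) :
    2 * 10 ^ 6 ≤ |a * (a ^ 4 - 50 * a ^ 2 * b ^ 2 + 125 * b ^ 4)| := by
  by_contra! hlt
  have hb_le : 675 ≤ |b| := Int.le_of_dvd (abs_pos.mpr hb) ((dvd_abs _ _).mpr hdvd)
  set f := a ^ 4 - 50 * a ^ 2 * b ^ 2 + 125 * b ^ 4 with hf
  have ha_pos : 1 ≤ |a| := Int.one_le_abs (left_ne_zero_of_mul hne)
  have hf_pos : 1 ≤ |f| := Int.one_le_abs (right_ne_zero_of_mul hne)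
  rw [abs_mul] at hlt
  have hba : |b| < |a| := by
    by_contra! hab
    have hsq : a ^ 2 ≤ b ^ 2 := sq_le_sq.mpr hab
    have hb_sq : 675 ^ 2 ≤ b ^ 2 := sq_abs b ▸ pow_le_pow_left₀ (by norm_num) hb_le 2
    have hf_ge : 75 * (b ^ 2) ^ 2 ≤ f := by nlinarith [sq_nonneg (a ^ 2), sq_nonneg b]
    nlinarith [le_abs_self f]
  have hf_eq : f = (a ^ 2 - 25 * b ^ 2) ^ 2 - 500 * b ^ 4 := by rw [hf]; ring
  have hf_lt : |f| < 2963 := by nlinarith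
  have hb_lt : |b| < 675 * 2963 := by nlinarith
  exact hf_lt.not_ge (hf_eq ▸ le_abs_sq_sub_five_hundred_mul_pow hb hdvd hb_lt _)

lemma isCoprime_three_quartic {a b : ℤ} (hab : ¬ 3 ∣ a ∨ ¬ 3 ∣ b) :
    IsCoprime 3 (a ^ 4 - 10 * a ^ 2 * b ^ 2 + 5 * b ^ 4) := by
  refine isCoprime_of_not_dvd (by norm_num) fun h ↦ ?_
  have hdecide : ∀ x y : ZMod 3, x ^ 4 - 10 * x ^ 2 * y ^ 2 + 5 * y ^ 4 = 0 → x = 0 ∧ y = 0 := by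
    decide
  have := hdecide a b (by exact_mod_cast (ZMod.intCast_zmod_eq_zero_iff_dvd _ 3).mpr h)
  rw [ZMod.intCast_zmod_eq_zero_iff_dvd, ZMod.intCast_zmod_eq_zero_iff_dvd] at this
  exact hab.elim (· this.1) (· this.2)

lemma dvd_im_of_dvd_im_pow_five {z : ℤ√(-5)} (hz : IsCoprime (z ^ 5).re (z ^ 5).im)
    (h : 3375 ∣ (z ^ 5).im) : 675 ∣ z.im := by
  rw [im_pow_five_neg_five, re_pow_five_neg_five] at hz
  rw [im_pow_five_neg_five] at h
  set q := z.re ^ 4 - 10 * z.re ^ 2 * z.im ^ 2 + 5 * z.im ^ 4 with hq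
  have h5 : IsCoprime 5 q := by
    have : IsCoprime 5 z.re := hz.symm.of_mul_left_left.of_mul_right_left
    have hq' : q = z.re ^ 4 + 5 * (-2 * z.re ^ 2 * z.im ^ 2 + z.im ^ 4) := by rw [hq]; ring
    exact hq' ▸ this.pow_right.add_mul_left_right _
  have h3 : IsCoprime 3 q := by
    refine isCoprime_three_quartic (not_and_or.mp fun ⟨ha, hb⟩ ↦ ?_)
    have := hz.isUnit_of_dvd' (ha.mul_right _) ((hb.mul_right _).mul_left _)
    norm_num [Int.isUnit_iff] at this
  have h675 : IsCoprime (3 ^ 3 * 5 ^ 2) q := h3.pow_left.mul_left h5.pow_left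
  exact h675.dvd_of_dvd_mul_right (by lia)

lemma le_abs_re_of_norm_eq_pow_five {w : ℤ√(-5)} (hw : IsCoprime w.re w.im) {v : ℤ}
    (hnorm : w.norm = v ^ 5) (him : w.im ≠ 0) (hdvd : 3375 ∣ w.im) : 2 * 10 ^ 6 ≤ |w.re| := by
  obtain ⟨z, rfl⟩ := exists_eq_pow_of_norm_eq_pow (by decide) hw hnorm
  have hb : z.im ≠ 0 := by
    intro hb
    simp [im_pow_five_neg_five, hb] at him
  have hre : (z ^ 5).re ≠ 0 := by
    intro hre
    have := hw.isUnit_of_dvd' (hre ▸ dvd_zero 3375) hdvd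
    norm_num [Int.isUnit_iff] at this
  rw [re_pow_five_neg_five] at hre ⊢
  exact le_abs_mul_quartic hb (dvd_im_of_dvd_im_pow_five hw hdvd) hre

/-! ### Quadratic reciprocity -/

open NumberTheorySymbols

section JacobiSymbol

lemma jacobiSym_sq_eq_one {a : ℤ} {m : ℕ} (h : IsCoprime a m) : J(a | m) ^ 2 = 1 :=
  jacobiSym.sq_one (Int.isCoprime_iff_gcd_eq_one.mp h)

lemma jacobiSym_eq_of_mul_sq_modEq_mul_sq {a c x y : ℤ} {m : ℕ}
    (h : a * x ^ 2 ≡ c * y ^ 2 [ZMOD m]) (hx : IsCoprime x m) (hy : IsCoprime y m) :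
    J(a | m) = J(c | m) := by
  have := jacobiSym.mod_left' h
  rwa [jacobiSym.mul_left, jacobiSym.mul_left, jacobiSym.pow_left, jacobiSym.pow_left,
    jacobiSym_sq_eq_one hx, jacobiSym_sq_eq_one hy, mul_one, mul_one] at this

lemma jacobiSym_eq_one_of_sq_modEq {a s y : ℤ} {m : ℕ} (h : s ^ 2 ≡ a * y ^ 2 [ZMOD m])
    (ha : IsCoprime a m) (hy : IsCoprime y m) : J(a | m) = 1 := by
  have hs := jacobiSym.mod_left' h
  rw [jacobiSym.mul_left, jacobiSym.pow_left, jacobiSym.pow_left, jacobiSym_sq_eq_one hy,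
    mul_one] at hs
  have := jacobiSym_sq_eq_one ha
  rw [← hs] at this ⊢
  nlinarith [sq_nonneg J(s | m)]

lemma jacobiSym_natCast_eq_one_of_mod_eight {a n : ℕ} (ha : a % 8 = 1) (hn : n ≠ 0)
    (h : ∀ m : ℕ, Odd m → m ∣ n → J(a | m) = 1) : J(n | a) = 1 := by
  obtain ⟨k, m, hm, rfl⟩ := Nat.exists_eq_two_pow_mul_odd hn
  have h2 : J(2 | a) = 1 := by
    rw [jacobiSym.at_two (Nat.odd_iff.mpr (by lia)), ZMod.χ₈_nat_eq_if_mod_eight]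
    simp [ha, show a % 2 ≠ 0 by lia]
  push_cast
  rw [jacobiSym.mul_left, jacobiSym.pow_left, h2, one_pow, one_mul,
    jacobiSym.quadratic_reciprocity_one_mod_four' hm (by lia), h m hm (dvd_mul_left _ _)]

lemma jacobiSym_three_eq_one {n : ℕ} (hn : n % 12 = 1 ∨ n % 12 = 11) : J(3 | n) = 1 := by
  rw [jacobiSym.mod_right 3 (Nat.odd_iff.mpr (by lia))]
  rcases hn with hn | hn <;> norm_num [hn]

lemma jacobiSym_three_eq_neg_one {n : ℕ} (hn : n % 12 = 5 ∨ n % 12 = 7) : J(3 | n) = -1 := by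
  rw [jacobiSym.mod_right 3 (Nat.odd_iff.mpr (by lia))]
  rcases hn with hn | hn <;> norm_num [hn]

variable {N G : ℕ} {K s y : ℤ}

theorem jacobiSym_five_eq_jacobiSym_nineteen (hN : N % 3 = 2)
    (hmod : N % 8 = 7 ∨ (N % 8 = 5 ∧ G % 4 = 3)) (hG : G ≠ 0)
    (hK : IsCoprime K N) (hGN : 3 * G ≡ K ^ 2 [ZMOD N])
    (h95 : IsCoprime 95 (G : ℤ)) (hy : IsCoprime y G) (hs : s ^ 2 ≡ 95 * N * y ^ 2 [ZMOD G]) :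
    J(G | 5) = J(G | 19) := by
  have hNG : IsCoprime (95 * N : ℤ) G := by
    have := (isCoprime_of_modEq hGN hK.pow_left).symm
    exact h95.mul_left this.of_mul_right_right
  have h3G : J(3 | N) * J(G | N) = 1 := by
    rw [← jacobiSym.mul_left, jacobiSym.mod_left' hGN, jacobiSym.pow_left,
      jacobiSym_sq_eq_one hK]
  have hres : ∀ m : ℕ, m ∣ G → J((95 * N : ℕ) | m) = 1 := fun m hm ↦ by
    have hm : (m : ℤ) ∣ G := Int.natCast_dvd_natCast.mpr hm
    push_cast
    exact jacobiSym_eq_one_of_sq_modEq (hs.of_dvd hm) (hNG.of_isCoprime_of_dvd_right hm)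
      (hy.of_isCoprime_of_dvd_right hm)
  have hprod : J(G | 95 * N) = J(G | 5) * J(G | 19) * J(G | N) := by
    rw [jacobiSym.mul_right' _ (by norm_num) (by rintro rfl; simp at hN),
      show 95 = 5 * 19 from rfl, jacobiSym.mul_right' _ (by norm_num) (by norm_num)]
  have h5 : J(G | 5) ^ 2 = 1 := jacobiSym_sq_eq_one
    (h95.symm.of_isCoprime_of_dvd_right ⟨19, by norm_num⟩)
  obtain hN8 | ⟨hN8, hG4⟩ := hmod
  · have hG95 : J(G | 95 * N) = 1 :=
      jacobiSym_natCast_eq_one_of_mod_eight (by lia) hG fun m _ hm ↦ hres m hm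
    rw [jacobiSym_three_eq_one (by lia), one_mul] at h3G
    rw [hprod, h3G] at hG95
    linear_combination J(G | 19) * h5 - J(G | 5) * hG95
  · have hG95 : J(G | 95 * N) = -1 := by
      rw [jacobiSym.quadratic_reciprocity_three_mod_four hG4 (by lia), hres G dvd_rfl]
    rw [jacobiSym_three_eq_neg_one (by lia)] at h3G
    rw [hprod, show J(G | N) = -1 by linarith] at hG95
    linear_combination J(G | 19) * h5 + J(G | 5) * hG95

lemma jacobiSym_natCast_eq_neg_one {n : ℕ}
    (hmod : (n % 8 = 3 ∧ G % 8 = 2) ∨ (n % 8 = 5 ∧ G % 4 = 3))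
    (h : ∀ m : ℕ, Odd m → m ∣ G → J(-n | m) = 1) : J(G | n) = -1 := by
  have hres : ∀ m : ℕ, Odd m → m ∣ G → ZMod.χ₄ m * J(n | m) = 1 := fun m hm hmG ↦ by
    rw [← jacobiSym.neg _ hm, h m hm hmG]
  have hn : Odd n := Nat.odd_iff.mpr (by lia)
  obtain ⟨hn8, hG8⟩ | ⟨hn8, hG4⟩ := hmod
  · obtain ⟨m, rfl⟩ : 2 ∣ G := by lia
    have hm : J(m | n) = 1 := by
      have := hres m (Nat.odd_iff.mpr (by lia)) (dvd_mul_left m 2)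
      rwa [ZMod.χ₄_nat_one_mod_four (by lia), one_mul,
        ← jacobiSym.quadratic_reciprocity_one_mod_four (by lia) hn] at this
    have h2 : J(2 | n) = -1 := by
      rw [jacobiSym.at_two hn, ZMod.χ₈_nat_eq_if_mod_eight]
      simp [hn8, show n % 2 ≠ 0 by lia]
    push_cast
    rw [jacobiSym.mul_left, h2, hm, mul_one]
  · have hG : Odd G := Nat.odd_iff.mpr (by lia)
    have := hres G hG dvd_rfl
    rw [ZMod.χ₄_nat_three_mod_four hG4,
      jacobiSym.quadratic_reciprocity_one_mod_four (by lia) hG] at this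
    linarith

theorem jacobiSym_nineteen_eq_one (hN : N % 3 = 1)
    (hmod : (N % 8 = 7 ∧ G % 8 = 2) ∨ (N % 8 = 1 ∧ G % 4 = 3)) (hG5 : J(G | 5) = -1)
    (h5 : IsCoprime 5 (N : ℤ)) (h19 : IsCoprime 19 (N : ℤ)) (hK : IsCoprime K N)
    (hGN : 3 * G * 5 ^ 2 ≡ 19 * K ^ 2 [ZMOD N]) (h5G : IsCoprime 5 (G : ℤ))
    (hy : IsCoprime y G) (hs : s ^ 2 ≡ -(5 * N) * y ^ 2 [ZMOD G]) :
    J(N | 19) = 1 := by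
  have hNG : IsCoprime (-(5 * N) : ℤ) G := by
    have := (isCoprime_of_modEq hGN (h19.mul_left hK.pow_left)).symm
    exact (h5G.mul_left this.of_mul_right_left.of_mul_right_right).neg_left
  have h3G : J(3 | N) * J(G | N) = J(19 | N) := by
    rw [← jacobiSym.mul_left, jacobiSym_eq_of_mul_sq_modEq_mul_sq hGN h5 hK]
  have hG5N : J(G | 5 * N) = -1 := by
    refine jacobiSym_natCast_eq_neg_one (by lia) fun m _ hmG ↦ ?_
    have hmG : (m : ℤ) ∣ G := Int.natCast_dvd_natCast.mpr hmG
    push_cast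
    exact jacobiSym_eq_one_of_sq_modEq (hs.of_dvd hmG) (hNG.of_isCoprime_of_dvd_right hmG)
      (hy.of_isCoprime_of_dvd_right hmG)
  rw [jacobiSym.mul_right' _ (by norm_num) (by rintro rfl; simp at hN), hG5] at hG5N
  rw [show J(G | N) = 1 by linarith, mul_one] at h3G
  obtain ⟨hN8, -⟩ | ⟨hN8, -⟩ := hmod
  · have hqr := jacobiSym.quadratic_reciprocity_three_mod_four (a := 19) (b := N) rfl (by lia)
    rw [Nat.cast_ofNat, ← h3G, jacobiSym_three_eq_neg_one (by lia)] at hqr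
    linarith
  · have hqr := jacobiSym.quadratic_reciprocity_one_mod_four' (a := 19) (b := N) (by decide)
      (by lia)
    rw [Nat.cast_ofNat, ← h3G, jacobiSym_three_eq_one (by lia)] at hqr
    exact hqr.symm

end JacobiSymbol

/-! ### The curve `16 u¹⁰ + 5 r² = 27 v⁵` -/

lemma sq_dvd_of_dvd {p : ℤ} (hp : Prime p) {m N G s a b c e f : ℤ} (hm : IsCoprime p m)
    (hc : IsCoprime p c) (hN : p ∣ N) (hG : m * G = p ^ 2 * a + N * b)
    (hs : s ^ 2 = c * N + G * (N * e + p * f)) : p ^ 2 ∣ N ∧ p ^ 2 ∣ G ∧ p ∣ s := by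
  obtain ⟨n, hn⟩ := hN
  obtain ⟨g, hg⟩ : p ∣ G :=
    hm.dvd_of_dvd_mul_left ⟨p * a + n * b, by linear_combination hG + b * hn⟩
  obtain ⟨σ, hσ⟩ : p ∣ s := hp.dvd_of_dvd_pow (n := 2)
    ⟨c * n + g * (N * e + p * f), by linear_combination hs + c * hn + (N * e + p * f) * hg⟩
  have hpN : p ^ 2 ∣ N := hc.pow_left.dvd_of_dvd_mul_left
    ⟨σ ^ 2 - g * (n * e + f), by
      subst hn hg hσ
      linear_combination -hs⟩
  refine ⟨hpN, hm.pow_left.dvd_of_dvd_mul_left ?_, ⟨σ, hσ⟩⟩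
  exact hG ▸ dvd_add (dvd_mul_right _ _) (hpN.mul_right b)

lemma sq_emod_eight_eq_one_or_emod_four_eq_zero (u : ℤ) : u ^ 2 % 8 = 1 ∨ u ^ 2 % 4 = 0 := by
  obtain ⟨k, rfl⟩ | hu := u.even_or_odd
  · exact .inr (Int.emod_eq_zero_of_dvd ⟨k ^ 2, by ring⟩)
  · have := Int.eight_dvd_sq_sub_one_of_odd hu
    lia

lemma zmod_nineteen_of_eight_mul_eq (a b x : ZMod 19)
    (h : 8 * (2 ^ 2 * x ^ 5) = 7 * (a * (a ^ 4 - 50 * a ^ 2 * b ^ 2 + 125 * b ^ 4))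
      - 5 * (5 * (b * (a ^ 4 - 10 * a ^ 2 * b ^ 2 + 5 * b ^ 4)))) :
    ∃ c : ZMod 19, (c = 3 ∨ c = 6 ∨ c = 9 ∨ c = 13) ∧ a ^ 2 + 5 * b ^ 2 = 2 * (c * x ^ 2) := by
  decide +kernel +revert

/-- The integral points of `16 u¹⁰ + 5 r² = 27 v⁵` left over by the other descents: they would come
from `x = 8 u⁵` with `x` divisible by neither `3` nor `5`. -/
structure IsDecicPoint (u v r : ℤ) : Prop where
  eqn : 16 * u ^ 10 + 5 * r ^ 2 = 27 * v ^ 5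
  odd : Odd r
  not_three_dvd : ¬ 3 ∣ u
  not_five_dvd : ¬ 5 ∣ u
  isCoprime : IsCoprime u r

namespace IsDecicPoint

variable {u v r : ℤ}

lemma v_pos (h : IsDecicPoint u v r) : 0 < v := by
  have hr : r ≠ 0 := by
    rintro rfl
    exact Int.not_odd_zero h.odd
  have : 0 < 27 * v ^ 5 := h.eqn ▸ by positivity
  exact (by decide : Odd 5).pow_pos_iff.mp (pos_of_mul_pos_right this (by norm_num))

lemma isCoprime_three_u (h : IsDecicPoint u v r) : IsCoprime 3 u :=
  isCoprime_of_not_dvd (by norm_num) h.not_three_dvd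

lemma isCoprime_five_u (h : IsDecicPoint u v r) : IsCoprime 5 u :=
  isCoprime_of_not_dvd (by norm_num) h.not_five_dvd

lemma isCoprime_u_v (h : IsDecicPoint u v r) : IsCoprime u v := by
  have h5 : IsCoprime u 5 := h.isCoprime_five_u.symm
  have : IsCoprime u (27 * v ^ 5) := by
    rw [← h.eqn, show 16 * u ^ 10 + 5 * r ^ 2 = 5 * r ^ 2 + u * (16 * u ^ 9) by ring]
    exact (h5.mul_right h.isCoprime.pow_right).add_mul_left_right _
  exact (IsCoprime.pow_right_iff (by norm_num)).mp this.of_mul_right_right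

lemma u_sq_emod_three (h : IsDecicPoint u v r) : u ^ 2 % 3 = 1 := by
  have := h.not_three_dvd
  obtain hu | hu : u % 3 = 1 ∨ u % 3 = 2 := by lia
  all_goals simp [sq, Int.mul_emod, hu]

lemma v_emod_eight (h : IsDecicPoint u v r) : v % 8 = 7 := by
  obtain ⟨k, hk⟩ := Int.eight_dvd_sq_sub_one_of_odd h.odd
  have heqn : 16 * u ^ 10 + 40 * k + 5 = 27 * v ^ 5 := by linear_combination h.eqn - 5 * hk
  have hmod := congrArg (Int.cast : ℤ → ZMod 8) heqn
  push_cast at hmod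
  have := (by decide : ∀ a b c : ZMod 8, 16 * a ^ 10 + 40 * c + 5 = 27 * b ^ 5 → b = 7) _ _ _ hmod
  exact (ZMod.intCast_eq_intCast_iff v 7 8).mp (by exact_mod_cast this)

lemma v_zmod_five (h : IsDecicPoint u v r) :
    (v : ZMod 5) = 3 * u ^ 2 ∧ (u : ZMod 5) ^ 4 = 1 := by
  have hmod := congrArg (Int.cast : ℤ → ZMod 5) h.eqn
  push_cast at hmod
  have hdecide : ∀ a b c : ZMod 5, a ≠ 0 → 16 * a ^ 10 + 5 * c ^ 2 = 27 * b ^ 5 →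
      b = 3 * a ^ 2 ∧ a ^ 4 = 1 := by decide
  exact hdecide _ _ _ (mt (ZMod.intCast_zmod_eq_zero_iff_dvd u 5).mp h.not_five_dvd) hmod

lemma quadratic_emod_five (h : IsDecicPoint u v r) :
    (3 * v ^ 2 - 3 * v * u ^ 2 + 10 * u ^ 4) % 5 = 3 ∧
     (3 * v ^ 2 + 3 * v * u ^ 2 + 2 * u ^ 4) % 5 = 3 := by
  obtain ⟨hv, hu⟩ := h.v_zmod_five
  have h25 : (25 : ZMod 5) = 0 := rfl
  have h35 : (35 : ZMod 5) = 0 := rfl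
  constructor <;> refine (ZMod.intCast_eq_intCast_iff _ 3 5).mp ?_ <;> push_cast <;> rw [hv]
  · linear_combination 28 * hu + h25
  · linear_combination 38 * hu + h35

lemma quadratic_emod_four (h : IsDecicPoint u v r) (hu : u ^ 2 % 4 = 0) (k c : ℤ) :
    (3 * v ^ 2 + k * v * u ^ 2 + c * u ^ 4) % 4 = 3 := by
  obtain ⟨m, hm⟩ := Int.dvd_of_emod_eq_zero hu
  have hv_odd : Odd v := Int.odd_iff.mpr (by have := h.v_emod_eight; lia)
  have hv_sq := Int.eight_dvd_sq_sub_one_of_odd hv_odd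
  rw [show 3 * v ^ 2 + k * v * u ^ 2 + c * u ^ 4 = 3 * v ^ 2 + 4 * (m * (k * v + c * u ^ 2)) by
    linear_combination (k * v + c * u ^ 2) * hm]
  lia

lemma isCoprime_three_mul_pow_quadratic (h : IsDecicPoint u v r) (k : ℤ) {c : ℤ} (hc : ¬ 3 ∣ c) :
    IsCoprime (3 * u ^ 4) (3 * v ^ 2 + 3 * k * v * u ^ 2 + c * u ^ 4) := by
  have h3c : IsCoprime 3 c := isCoprime_of_not_dvd (by norm_num) hc
  have h3 := (h3c.mul_right (h.isCoprime_three_u.pow_right (n := 4))).add_mul_left_right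
    (v ^ 2 + k * v * u ^ 2)
  have hu := (h.isCoprime_three_u.symm.mul_right
    (h.isCoprime_u_v.pow_right (n := 2))).add_mul_left_right (3 * k * v * u + c * u ^ 3)
  refine .mul_left ?_ (.pow_left ?_)
  · rwa [show 3 * v ^ 2 + 3 * k * v * u ^ 2 + c * u ^ 4
      = c * u ^ 4 + 3 * (v ^ 2 + k * v * u ^ 2) by ring]
  · rwa [show 3 * v ^ 2 + 3 * k * v * u ^ 2 + c * u ^ 4
      = 3 * v ^ 2 + u * (3 * k * v * u + c * u ^ 3) by ring]

lemma isCoprime_u_linear (h : IsDecicPoint u v r) {k : ℤ} (hk : IsCoprime u k) (c : ℤ) :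
    IsCoprime u (k * v + c * u ^ 2) := by
  rw [sq, ← mul_assoc, mul_comm _ u]
  exact (hk.mul_right h.isCoprime_u_v).add_mul_left_right _

lemma seven_sq_dvd_of_seven_dvd (h : IsDecicPoint u v r) (h7 : 7 ∣ 3 * v + 26 * u ^ 2) :
    7 ^ 2 ∣ 3 * v + 26 * u ^ 2 ∧ 7 ^ 2 ∣ 3 * v ^ 2 - 3 * v * u ^ 2 + 10 * u ^ 4 ∧ 7 ∣ 15 * r := by
  have prime_seven : Prime (7 : ℤ) := by norm_num [Int.prime_iff_natAbs_prime]
  have h7u : IsCoprime 7 u :=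
    ((h.isCoprime_u_linear h.isCoprime_three_u.symm 26).of_isCoprime_of_dvd_right h7).symm
  refine sq_dvd_of_dvd prime_seven (m := 3) (c := 855 * u ^ 8)
    (by norm_num) (.mul_right (by norm_num) h7u.pow_right) h7
    (a := 16 * u ^ 4) (b := 3 * v - 29 * u ^ 2) (by ring)
    (e := 15 * (9 * v ^ 2 - 69 * v * u ^ 2 + 577 * u ^ 4)) (f := -32475 * u ^ 6) ?_
  linear_combination 45 * h.eqn

-- The case `q = 7` is needed when `7 ∣ 3v + 26u²`, which is then not prime to `28u²`.
lemma jacobiSym_quadratic_five_eq_nineteen_of_scaled (h : IsDecicPoint u v r) {q N G : ℕ}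
    {K s : ℤ} (hq : q = 1 ∨ q = 7) (hN : q ^ 2 * N = 3 * v + 26 * u ^ 2)
    (hG : q ^ 2 * G = 3 * v ^ 2 - 3 * v * u ^ 2 + 10 * u ^ 4) (hK : q * K = 28 * u ^ 2)
    (hs : q * s = 15 * r) (hKN : IsCoprime K N)
    (h19 : ¬ 19 ∣ 3 * v ^ 2 - 3 * v * u ^ 2 + 10 * u ^ 4) : J(G | 5) = J(G | 19) := by
  have hq_sq : (q : ℤ) ^ 2 ≠ 0 := by rcases hq with rfl | rfl <;> norm_num
  have hGdvd : (G : ℤ) ∣ 3 * v ^ 2 - 3 * v * u ^ 2 + 10 * u ^ 4 := Dvd.intro_left _ hG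
  have h95 : IsCoprime (5 * 19) (G : ℤ) := by
    have h5 := h.quadratic_emod_five.1
    refine (isCoprime_of_not_dvd (by norm_num) fun hd ↦ ?_).mul_left
      (isCoprime_of_not_dvd (by norm_num) fun hd ↦ h19 (hd.trans hGdvd))
    have := hd.trans hGdvd
    lia
  have hyG : IsCoprime (3 * u ^ 4) (G : ℤ) :=
    (h.isCoprime_three_mul_pow_quadratic (-1) (c := 10) (by norm_num)).of_isCoprime_of_dvd_right
      ⟨q ^ 2, by linear_combination -hG⟩
  have hmod : N % 8 = 7 ∨ (N % 8 = 5 ∧ G % 4 = 3) := by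
    have hv := h.v_emod_eight
    refine (sq_emod_eight_eq_one_or_emod_four_eq_zero u).imp (fun hu ↦ ?_) (fun hu ↦ ?_)
    · rcases hq with rfl | rfl <;> push_cast at hN <;> lia
    · have hG4 := h.quadratic_emod_four hu (-3) 10
      rcases hq with rfl | rfl <;> push_cast at hN hG <;> lia
  refine jacobiSym_five_eq_jacobiSym_nineteen (s := s) (y := 3 * u ^ 4) ?_ hmod ?_ hKN ?_ h95 hyG ?_
  · have := h.u_sq_emod_three
    rcases hq with rfl | rfl <;> push_cast at hN <;> lia
  · rintro rfl
    exact h19 (by rw [← hG]; simp)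
  · refine (Int.modEq_iff_dvd.mpr ⟨3 * v - 29 * u ^ 2, mul_left_cancel₀ hq_sq ?_⟩).symm
    linear_combination 3 * hG - (3 * v - 29 * u ^ 2) * hN - (q * K + 28 * u ^ 2) * hK
  · let H := 15 * (27 * v ^ 3 + 27 * v ^ 2 * u ^ 2 - 63 * v * u ^ 4 - 153 * u ^ 6)
    refine (Int.modEq_iff_dvd.mpr ⟨H, mul_left_cancel₀ hq_sq ?_⟩).symm
    linear_combination (q * s + 15 * r) * hs - 95 * (3 * u ^ 4) ^ 2 * hN - H * hG + 45 * h.eqn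

lemma jacobiSym_quadratic_five_eq_nineteen (h : IsDecicPoint u v r)
    (h19 : ¬ 19 ∣ 3 * v ^ 2 - 3 * v * u ^ 2 + 10 * u ^ 4) :
    J(3 * v ^ 2 - 3 * v * u ^ 2 + 10 * u ^ 4 | 5)
      = J(3 * v ^ 2 - 3 * v * u ^ 2 + 10 * u ^ 4 | 19) := by
  have hv := h.v_pos
  have hv8 := h.v_emod_eight
  have hN_pos : 0 < 3 * v + 26 * u ^ 2 := by positivity
  have hG_pos : 0 < 3 * v ^ 2 - 3 * v * u ^ 2 + 10 * u ^ 4 := by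
    nlinarith [sq_nonneg (v - u ^ 2), sq_nonneg (u ^ 2)]
  have huN := h.isCoprime_u_linear h.isCoprime_three_u.symm 26
  have isCoprime_two_sq {N : ℤ} (hN : N % 2 = 1) : IsCoprime (2 ^ 2) N :=
    (isCoprime_of_not_dvd (by norm_num) (by lia)).pow_left
  by_cases h7 : 7 ∣ 3 * v + 26 * u ^ 2
  · obtain ⟨⟨N, hN⟩, ⟨G, hG⟩, ⟨s, hs⟩⟩ := h.seven_sq_dvd_of_seven_dvd h7
    lift N to ℕ using by lia
    lift G to ℕ using by lia
    have hscaled := h.jacobiSym_quadratic_five_eq_nineteen_of_scaled (K := 2 ^ 2 * u ^ 2) (.inr rfl)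
      hN.symm hG.symm (by push_cast; ring) hs.symm ((isCoprime_two_sq (by lia)).mul_left
        (huN.of_isCoprime_of_dvd_right (Dvd.intro_left _ hN.symm)).pow_left) h19
    rw [hG, jacobiSym.mul_left, jacobiSym.mul_left, hscaled]
    norm_num
  · lift 3 * v + 26 * u ^ 2 to ℕ using hN_pos.le with N hN
    lift 3 * v ^ 2 - 3 * v * u ^ 2 + 10 * u ^ 4 to ℕ using hG_pos.le with G hG
    have hKN : IsCoprime (2 ^ 2 * 7 * u ^ 2) (N : ℤ) := ((isCoprime_two_sq (by lia)).mul_left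
      (isCoprime_of_not_dvd (by norm_num) h7)).mul_left huN.pow_left
    exact h.jacobiSym_quadratic_five_eq_nineteen_of_scaled (q := 1) (s := 15 * r) (.inl rfl)
      (by simp [hN]) (by simp [hG]) (by push_cast; ring) (by simp) hKN (hG ▸ h19)

lemma linear_and_quadratic_emod (h : IsDecicPoint u v r) :
    (15 * v + 22 * u ^ 2) % 8 = 7 ∧ (3 * v ^ 2 + 3 * v * u ^ 2 + 2 * u ^ 4) % 8 = 2 ∨
      (15 * v + 22 * u ^ 2) % 8 = 1 ∧ (3 * v ^ 2 + 3 * v * u ^ 2 + 2 * u ^ 4) % 4 = 3 := by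
  have hv := h.v_emod_eight
  refine (sq_emod_eight_eq_one_or_emod_four_eq_zero u).imp (fun hu ↦ ⟨by lia, ?_⟩)
    (fun hu ↦ ⟨by lia, h.quadratic_emod_four hu 3 2⟩)
  have hv' : v ≡ 7 [ZMOD 8] := hv
  have hu' : u ^ 2 ≡ 1 [ZMOD 8] := hu
  calc 3 * v ^ 2 + 3 * v * u ^ 2 + 2 * u ^ 4
    _ = 3 * v ^ 2 + 3 * v * u ^ 2 + 2 * (u ^ 2) ^ 2 := by ring
    _ ≡ 3 * 7 ^ 2 + 3 * 7 * 1 + 2 * 1 ^ 2 [ZMOD 8] := by gcongr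
    _ ≡ 2 [ZMOD 8] := by decide

lemma jacobiSym_linear_nineteen_eq_one (h : IsDecicPoint u v r) (h19 : ¬ 19 ∣ 15 * v + 22 * u ^ 2) :
    J(15 * v + 22 * u ^ 2 | 19) = 1 := by
  have hv := h.v_pos
  have hu3 := h.u_sq_emod_three
  have hmod := h.linear_and_quadratic_emod
  have hG5 := h.quadratic_emod_five.2
  have hJ5 : J(3 * v ^ 2 + 3 * v * u ^ 2 + 2 * u ^ 4 | 5) = -1 := by
    rw [jacobiSym.mod_left, Nat.cast_ofNat, hG5]
    norm_num
  have hyG : IsCoprime (3 * u ^ 4) (3 * v ^ 2 + 3 * v * u ^ 2 + 2 * u ^ 4) := by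
    simpa using h.isCoprime_three_mul_pow_quadratic 1 (c := 2) (by norm_num)
  have hKN : IsCoprime (2 ^ 2 * u ^ 2) (15 * v + 22 * u ^ 2) :=
    (isCoprime_of_not_dvd (by norm_num) (by lia)).pow_left.mul_left (h.isCoprime_u_linear
      (h.isCoprime_three_u.symm.mul_right h.isCoprime_five_u.symm) 22).pow_left
  have h5N : IsCoprime 5 (15 * v + 22 * u ^ 2) := by
    rw [show 15 * v + 22 * u ^ 2 = 22 * u ^ 2 + 5 * (3 * v) by ring]
    exact (IsCoprime.mul_right (by norm_num) h.isCoprime_five_u.pow_right).add_mul_left_right _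
  obtain ⟨N, hN⟩ := Int.eq_ofNat_of_zero_le (show 0 ≤ 15 * v + 22 * u ^ 2 by positivity)
  obtain ⟨G, hG⟩ := Int.eq_ofNat_of_zero_le
    (show 0 ≤ 3 * v ^ 2 + 3 * v * u ^ 2 + 2 * u ^ 4 by positivity)
  rw [hN] at h19 hmod hKN h5N ⊢
  rw [hG] at hmod hG5 hJ5 hyG
  refine jacobiSym_nineteen_eq_one (s := 15 * r) (by lia) (by lia) hJ5 h5N
    (isCoprime_of_not_dvd (by norm_num) h19) hKN ?_ (isCoprime_of_not_dvd (by norm_num) (by lia))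
    hyG ?_
  · refine (Int.modEq_iff_dvd.mpr ⟨15 * v - 7 * u ^ 2, ?_⟩).symm
    rw [← hN, ← hG]
    ring
  · refine (Int.modEq_iff_dvd.mpr ⟨15 * (27 * v ^ 3 - 27 * v ^ 2 * u ^ 2 + 9 * v * u ^ 4
      + 9 * u ^ 6), ?_⟩).symm
    rw [← hN, ← hG]
    linear_combination 45 * h.eqn

lemma exists_v_zmod_nineteen_eq_mul_sq (h : IsDecicPoint u v r) :
    ∃ c : ZMod 19, (c = 3 ∨ c = 6 ∨ c = 9 ∨ c = 13) ∧ (v : ZMod 19) = c * u ^ 2 := by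
  have hw : IsCoprime (2 ^ 2 * u ^ 5) r :=
    (Int.isCoprime_two_left.mpr h.odd).pow_left.mul_left h.isCoprime.pow_left
  obtain ⟨z, hz, hre, -⟩ := exists_eight_mul_re_eq_and_abs_im_eq (w := ⟨2 ^ 2 * u ^ 5, r⟩) hw
    (v := v) (by rw [norm_eq_sq_add_five_mul_sq]; linear_combination h.eqn)
  rw [re_pow_five_neg_five, im_pow_five_neg_five] at hre
  have hre_mod := congrArg (Int.cast : ℤ → ZMod 19) hre
  push_cast at hre_mod
  obtain ⟨c, hc, hc_norm⟩ := zmod_nineteen_of_eight_mul_eq _ _ _ hre_mod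
  have hz_mod := congrArg (Int.cast : ℤ → ZMod 19) ((norm_eq_sq_add_five_mul_sq z).symm.trans hz)
  push_cast at hz_mod
  have two_ne_zero : (2 : ZMod 19) ≠ 0 := by decide
  have : Fact (Nat.Prime 19) := ⟨by norm_num⟩
  exact ⟨c, hc, mul_left_cancel₀ two_ne_zero (hz_mod.symm.trans hc_norm)⟩

lemma quadratic_not_modEq_sq (h : IsDecicPoint u v r) {t : ℤ} (ht : IsCoprime t 19) :
    ¬ 3 * v ^ 2 - 3 * v * u ^ 2 + 10 * u ^ 4 ≡ t ^ 2 [ZMOD 19] := by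
  intro hG
  have hJ5 : J(3 * v ^ 2 - 3 * v * u ^ 2 + 10 * u ^ 4 | 5) = -1 := by
    rw [jacobiSym.mod_left, Nat.cast_ofNat, h.quadratic_emod_five.1]
    norm_num
  have hJ19 : J(3 * v ^ 2 - 3 * v * u ^ 2 + 10 * u ^ 4 | 19) = 1 := by
    rw [jacobiSym.mod_left' hG, jacobiSym.pow_left, jacobiSym_sq_eq_one ht]
  have h19 : ¬ 19 ∣ 3 * v ^ 2 - 3 * v * u ^ 2 + 10 * u ^ 4 := fun hd ↦ by
    norm_num [jacobiSym.mod_left, Int.emod_eq_zero_of_dvd hd] at hJ19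
  have := h.jacobiSym_quadratic_five_eq_nineteen h19
  lia

lemma linear_not_modEq_eight_mul_sq (h : IsDecicPoint u v r) {t : ℤ} (ht : IsCoprime t 19) :
    ¬ 15 * v + 22 * u ^ 2 ≡ 8 * t ^ 2 [ZMOD 19] := by
  intro hN
  have hJ : J(15 * v + 22 * u ^ 2 | 19) = -1 := by
    rw [jacobiSym.mod_left' hN, jacobiSym.mul_left, jacobiSym.pow_left, jacobiSym_sq_eq_one ht]
    norm_num
  have h19 : ¬ 19 ∣ 15 * v + 22 * u ^ 2 := fun hd ↦ by
    norm_num [jacobiSym.mod_left, Int.emod_eq_zero_of_dvd hd] at hJ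
  have := h.jacobiSym_linear_nineteen_eq_one h19
  lia

end IsDecicPoint

theorem not_isDecicPoint (u v r : ℤ) : ¬ IsDecicPoint u v r := by
  intro h
  obtain ⟨c, hc, hv⟩ := h.exists_v_zmod_nineteen_eq_mul_sq
  have hu : IsCoprime u 19 := by
    refine (isCoprime_of_not_dvd (by norm_num) fun hdvd ↦ ?_).symm
    rw [(ZMod.intCast_zmod_eq_zero_iff_dvd u 19).mpr hdvd, zero_pow two_ne_zero, mul_zero,
      ZMod.intCast_zmod_eq_zero_iff_dvd] at hv
    have := h.isCoprime_u_v.isUnit_of_dvd' hdvd hv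
    norm_num [Int.isUnit_iff] at this
  have not_square {k : ℤ} (hk : IsCoprime k 19)
      (hck : 3 * c ^ 2 - 3 * c + 10 = (k : ZMod 19) ^ 2) : False := by
    refine h.quadratic_not_modEq_sq (hk.mul_left (hu.pow_left (m := 2)))
      ((ZMod.intCast_eq_intCast_iff _ _ 19).mp ?_)
    push_cast
    rw [hv]
    linear_combination (u : ZMod 19) ^ 4 * hck
  obtain rfl | rfl | rfl | rfl := hc
  · exact not_square (k := 3) (by norm_num) (by decide)
  · exact not_square (k := 10) (by norm_num) (by decide)
  · exact not_square (k := 6) (by norm_num) (by decide)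
  · refine h.linear_not_modEq_eight_mul_sq hu ((ZMod.intCast_eq_intCast_iff _ _ 19).mp ?_)
    push_cast
    rw [hv]
    have : (15 * 13 + 22 : ZMod 19) = 8 := by decide
    linear_combination (u : ZMod 19) ^ 2 * this

/-! ### Reduction to norm equations -/

/-- `X` and `X² + 5ρ²` become complementary factors of a fifth power once divided by `β` and `κ`.
Up to the bounded factors `β` and `κ` this records the hypothesis `9x(x² + 20r²) = y⁵`, with
`X = x` and `ρ = 2r`, or `X = x / 2` and `ρ = r`. -/
def FifthPowerCofactors (β κ X ρ : ℤ) : Prop :=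
  ∃ s t y : ℤ, X = β * s ∧ X ^ 2 + 5 * ρ ^ 2 = κ * t ∧ s * t = y ^ 5

lemma fifthPowerCofactors_of_nine_mul_eq {x r y : ℤ} (hc : IsCoprime x r)
    (h : 9 * x * (x ^ 2 + 20 * r ^ 2) = y ^ 5) :
    FifthPowerCofactors 27 1 x (2 * r) ∨ (¬ 3 ∣ x ∧ FifthPowerCofactors 1 27 x (2 * r)) := by
  obtain ⟨z, rfl⟩ : 3 ∣ y :=
    Int.prime_three.dvd_of_dvd_pow (n := 5) ⟨3 * x * (x ^ 2 + 20 * r ^ 2), by linear_combination -h⟩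
  have hprod : x * (x ^ 2 + 20 * r ^ 2) = 3 ^ 3 * z ^ 5 := by linarith
  by_cases h3 : 3 ∣ x
  · have h3P : IsCoprime 3 (x ^ 2 + 20 * r ^ 2) := by
      have h3r : IsCoprime 3 r := hc.of_isCoprime_of_dvd_left h3
      obtain ⟨m, rfl⟩ := h3
      rw [show (3 * m) ^ 2 + 20 * r ^ 2 = 20 * r ^ 2 + 3 * (3 * m ^ 2) by ring]
      exact (IsCoprime.mul_right (by norm_num) h3r.pow_right).add_mul_left_right _
    obtain ⟨s, rfl⟩ := h3P.pow_left.dvd_of_dvd_mul_right (Dvd.intro _ hprod.symm)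
    exact .inl ⟨s, _, z, by ring, (one_mul _).symm, by linarith⟩
  · have h3x : IsCoprime 3 x := isCoprime_of_not_dvd (by norm_num) h3
    obtain ⟨t, ht⟩ := h3x.pow_left.dvd_of_dvd_mul_left (Dvd.intro _ hprod.symm)
    rw [ht] at hprod
    exact .inr ⟨h3, x, t, z, by ring, by linarith, by linarith⟩

namespace FifthPowerCofactors

variable {β κ X ρ : ℤ}

lemma of_two_mul (h : FifthPowerCofactors β κ (2 * X) (2 * ρ)) (hβ : Odd β) (hκ : Odd κ)
    (hρ : Odd ρ) : FifthPowerCofactors (4 * β) κ X ρ := by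
  obtain ⟨s, t, y, hs, ht, hst⟩ := h
  have isCoprime_four {a : ℤ} (ha : Odd a) : IsCoprime (2 ^ 2) a :=
    (Int.isCoprime_two_left.mpr ha).pow_left
  obtain ⟨s, rfl⟩ : 2 ∣ s :=
    (Int.isCoprime_two_left.mpr hβ).dvd_of_dvd_mul_left (Dvd.intro _ hs)
  obtain ⟨t, rfl⟩ : 2 ^ 2 ∣ t := (isCoprime_four hκ).dvd_of_dvd_mul_left
    ⟨X ^ 2 + 5 * ρ ^ 2, by linear_combination -ht⟩
  obtain ⟨y, rfl⟩ : 2 ∣ y := Int.prime_two.dvd_of_dvd_pow (n := 5) ⟨4 * s * t, by linarith⟩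
  have hXs : X = β * s := by linarith
  have hXt : X ^ 2 + 5 * ρ ^ 2 = κ * t := by linarith
  have hst : s * t = 2 ^ 2 * y ^ 5 := by linarith
  have hX : Even X := by
    by_contra! hX
    rw [Int.not_even_iff_odd] at hX
    have hs_odd : Odd s := (Int.odd_mul.mp (hXs ▸ hX)).2
    have h4 : 2 ^ 2 ∣ κ * t :=
      ((isCoprime_four hs_odd).dvd_of_dvd_mul_left (Dvd.intro _ hst.symm)).mul_left κ
    have := Int.eight_dvd_sq_sub_one_of_odd hX
    have := Int.eight_dvd_sq_sub_one_of_odd hρ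
    lia
  have ht_odd : Odd t := by
    have : Odd (X ^ 2 + 5 * ρ ^ 2) :=
      (hX.pow_of_ne_zero two_ne_zero).add_odd ((by decide : Odd (5 : ℤ)).mul hρ.pow)
    exact (Int.odd_mul.mp (hXt ▸ this)).2
  obtain ⟨s, rfl⟩ := (isCoprime_four ht_odd).dvd_of_dvd_mul_right (Dvd.intro _ hst.symm)
  exact ⟨s, t, y, by linarith, hXt, by linarith⟩

lemma exists_eq_pow_of_not_five_dvd (h : FifthPowerCofactors β κ X ρ) (hc : IsCoprime X ρ)
    (h5 : ¬ 5 ∣ X) : ∃ u v : ℤ, X = β * u ^ 5 ∧ X ^ 2 + 5 * ρ ^ 2 = κ * v ^ 5 := by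
  obtain ⟨s, t, y, hs, ht, hst⟩ := h
  have h5X : IsCoprime 5 X := isCoprime_of_not_dvd (by norm_num) h5
  have hXt : IsCoprime X (κ * t) := by
    rw [← ht, sq, add_comm]
    exact (h5X.symm.mul_right hc.pow_right).add_mul_left_right X
  rw [hs] at hXt
  obtain ⟨⟨u, rfl⟩, v, rfl⟩ := Int.eq_pow_of_mul_eq_pow_odd
    hXt.of_mul_left_right.of_mul_right_right (by decide) hst
  exact ⟨u, v, hs, ht⟩

lemma exists_eq_pow_of_five_dvd (h : FifthPowerCofactors β κ X ρ) (hβ : IsCoprime 5 β)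
    (hκ : IsCoprime 5 κ) (hc : IsCoprime X ρ) (h5 : 5 ∣ X) :
    ∃ u v : ℤ, X = 5 * (125 * β * u ^ 5) ∧ ρ ^ 2 + 5 * (125 * β * u ^ 5) ^ 2 = κ * v ^ 5 := by
  obtain ⟨s, t, y, rfl, ht, hst⟩ := h
  obtain ⟨s, rfl⟩ := hβ.dvd_of_dvd_mul_left h5
  obtain ⟨t, rfl⟩ : 5 ∣ t := hκ.dvd_of_dvd_mul_left
    ⟨5 * (β * s) ^ 2 + ρ ^ 2, by linear_combination -ht⟩
  have prime_five : Prime (5 : ℤ) := by norm_num [Int.prime_iff_natAbs_prime]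
  obtain ⟨y, rfl⟩ : 5 ∣ y := prime_five.dvd_of_dvd_pow (n := 5) ⟨5 * s * t, by linarith⟩
  have hst : s * t = 5 ^ 3 * y ^ 5 := by linarith
  have hρt : ρ ^ 2 + 5 * (β * s) ^ 2 = κ * t := by linarith
  have hs_t : IsCoprime (5 * (β * s)) (κ * t) := by
    rw [← hρt, show ρ ^ 2 + 5 * (β * s) ^ 2 = ρ ^ 2 + 5 * (β * s) * (β * s) by ring]
    rw [mul_left_comm] at hc
    exact hc.pow_right.add_mul_left_right _
  obtain ⟨s, rfl⟩ := hs_t.of_mul_left_left.of_mul_right_right.pow_left.dvd_of_dvd_mul_right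
    (Dvd.intro _ hst.symm)
  obtain ⟨⟨u, rfl⟩, v, rfl⟩ := Int.eq_pow_of_mul_eq_pow_odd (k := 5)
    hs_t.of_mul_left_right.of_mul_left_right.of_mul_left_right.of_mul_right_right (by decide)
    (by linarith)
  exact ⟨u, v, by ring, by linear_combination hρt⟩

end FifthPowerCofactors

lemma not_fifthPowerCofactors_one {β X ρ : ℤ} (hβ : β = 1 ∨ β = 4) (hc : IsCoprime X ρ)
    (hX : X ≠ 0) (hρ : |ρ| < 2 * 10 ^ 6) : ¬ FifthPowerCofactors (27 * β) 1 X ρ := by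
  intro h
  by_cases h5 : 5 ∣ X
  · obtain ⟨u, v, rfl, hv⟩ :=
      h.exists_eq_pow_of_five_dvd (by rcases hβ with rfl | rfl <;> norm_num) (by norm_num) hc h5
    refine hρ.not_ge (le_abs_re_of_norm_eq_pow_five (w := ⟨ρ, 125 * (27 * β) * u ^ 5⟩) (v := v)
      hc.symm.of_mul_right_right ?_ (right_ne_zero_of_mul hX) ⟨β * u ^ 5, by ring⟩)
    rw [norm_eq_sq_add_five_mul_sq, hv, one_mul]
  · obtain ⟨u, v, rfl, hv⟩ := h.exists_eq_pow_of_not_five_dvd hc h5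
    have hu : 5 ∣ u := by
      refine five_dvd_of_norm_eq_pow_five (w := ⟨27 * β * u ^ 5, ρ⟩) (v := v) hc hβ ?_ rfl
      rw [norm_eq_sq_add_five_mul_sq, hv, one_mul]
    exact h5 ((dvd_pow hu (by norm_num)).mul_left _)

lemma not_fifthPowerCofactors_twentySeven {β X ρ : ℤ} (hβ : β = 1 ∨ (β = 4 ∧ Odd ρ))
    (hc : IsCoprime X ρ) (h3 : ¬ 3 ∣ X) : ¬ FifthPowerCofactors β 27 X ρ := by
  intro h
  by_cases h5 : 5 ∣ X
  · obtain ⟨u, v, rfl, hv⟩ := h.exists_eq_pow_of_five_dvd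
      (by rcases hβ with rfl | ⟨rfl, -⟩ <;> norm_num) (by norm_num) hc h5
    refine not_five_dvd_im_of_norm_eq (w := ⟨ρ, 125 * β * u ^ 5⟩) (v := v)
      hc.symm.of_mul_right_right ?_ ⟨25 * β * u ^ 5, by ring⟩
    rw [norm_eq_sq_add_five_mul_sq, hv]
  · obtain ⟨u, v, rfl, hv⟩ := h.exists_eq_pow_of_not_five_dvd hc h5
    have not_dvd {p : ℤ} (hp : ¬ p ∣ β * u ^ 5) : ¬ p ∣ u :=
      fun hd ↦ hp ((dvd_pow hd (by norm_num)).mul_left β)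
    obtain rfl | ⟨rfl, hodd⟩ := hβ
    · refine not_dvd h5 (five_dvd_of_norm_eq_mul_pow_five (w := ⟨1 * u ^ 5, ρ⟩) (v := v) hc ?_
        (one_mul _))
      rw [norm_eq_sq_add_five_mul_sq, hv]
    · exact not_isDecicPoint u v ρ ⟨by linear_combination hv, hodd, not_dvd h3, not_dvd h5,
        (IsCoprime.pow_left_iff (by norm_num)).mp hc.of_mul_left_right⟩

theorem no_solutions_exponent_five (x r y : ℤ) (hgcd : Int.gcd x r = 1)
    (hr0 : 0 < r) (hr : r < 10 ^ 6)
    (h : (x - 4*r)^3 + (x - 3*r)^3 + (x - 2*r)^3 + (x - r)^3 + x^3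
        + (x + r)^3 + (x + 2*r)^3 + (x + 3*r)^3 + (x + 4*r)^3 = y ^ 5) :
    x * y = 0 := by
  by_contra hxy
  have hx : x ≠ 0 := left_ne_zero_of_mul hxy
  have hc : IsCoprime x r := Int.isCoprime_iff_gcd_eq_one.mpr hgcd
  have hcofactors := fifthPowerCofactors_of_nine_mul_eq (y := y) hc (by linear_combination h)
  obtain hx2 | hx2 := x.even_or_odd
  · obtain ⟨X, rfl⟩ := hx2.two_dvd
    have hr_odd : Odd r := Int.isCoprime_two_left.mp hc.of_mul_left_left
    have hXr : IsCoprime X r := hc.of_mul_left_right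
    obtain h27 | ⟨h3, h27⟩ := hcofactors
    · exact not_fifthPowerCofactors_one (β := 4) (.inr rfl) hXr (right_ne_zero_of_mul hx)
        (abs_lt.mpr ⟨by linarith, by linarith⟩) (h27.of_two_mul (by decide) (by decide) hr_odd)
    · exact not_fifthPowerCofactors_twentySeven (.inr ⟨rfl, hr_odd⟩) hXr
        (fun h ↦ h3 (h.mul_left 2)) (h27.of_two_mul (by decide) (by decide) hr_odd)
  · have hx2r : IsCoprime x (2 * r) := (Int.isCoprime_two_right.mpr hx2).mul_right hc
    obtain h27 | ⟨h3, h27⟩ := hcofactors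
    · exact not_fifthPowerCofactors_one (β := 1) (.inl rfl) hx2r hx
        (abs_lt.mpr ⟨by linarith, by linarith⟩) h27
    · exact not_fifthPowerCofactors_twentySeven (.inl rfl) hx2r h3 h27
end

section
/- Let x, r, y be integers with gcd(x, r) = 1, r > 0, and 3 ∣ x. If (x−4r)³ + (x−3r)³ + (x−2r)³ + (x−r)³ + x³ + (x+r)³ + (x+2r)³ + (x+3r)³ + (x+4r)³ = y⁷ (equivalently, 9x(x² + 20r²) = y⁷), then xy = 0. -/
/-!
After the powers of 2 and 3 are removed the equation reads `x (x² + 5 r²) = c y⁷`, where `c` is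
`3⁵` or `2⁴ 3⁵`. If `5 ∤ x` the factors are coprime, so that `x = c s⁷` and `x² + 5 r² = t⁷`. If
`5 ∣ x`, write `x = 5 k`; then `k = 5⁵ c s⁷` and `r² + 5 k² = t⁷`. The class group of `ℤ[√-5]` has
order 2, hence `x + r √-5`, respectively `r + k √-5`, is a seventh power `(a + b √-5)⁷`. Its
coordinates are, up to sign, `a F(m, 4 a²)` and `b F(m, 20 b²)`, where `m = a² + 5 b²` and `F` is a
norm form of the real cubic subfield of `ℚ(ζ₇)`.

If 7 divides `a`, respectively `b`, the norm is 7 times a seventh power, and its linear factors lead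
to a Fermat-type equation with exponent 7 over `ℤ[ζ₇]`. Kummer's descent rules this out: `ℤ[ζ₇]` is
principal, and its units that are rational modulo 7 are seventh powers. The primes over 30, which
divide the coefficients, are too few to obstruct it. Otherwise the norm is a seventh power. When
`5 ∤ x` this is impossible modulo 49. When `5 ∣ x` the congruence modulo 49 leaves one residue class
of `b² / m` modulo 7, in which Kummer's lemma makes every linear factor an explicit cyclotomic unit
times a seventh power, and this fails modulo the primes over 43.
-/

open NumberField Polynomial

section CoprimeFactors

variable {R : Type*} [CommRing R]

theorem exists_eq_mul_pow_and_dvd_of_isCoprime [IsDomain R] [IsPrincipalIdealRing R] {n : ℕ}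
    {d : R} (hd : d ≠ 0) {a b w : R} (hab : IsCoprime a b) (h : a * b = d * w ^ n) :
    ∃ d' w' : R, a = d' * w' ^ n ∧ d' ∣ d := by
  induction d using UniqueFactorizationMonoid.induction_on_prime generalizing a b with
  | h₁ => exact absurd rfl hd
  | h₂ u hu =>
    obtain ⟨u, rfl⟩ := hu
    have hpow : a * (b * ↑u⁻¹) = w ^ n := by
      rw [← mul_assoc, h, mul_right_comm, Units.mul_inv, one_mul]
    have hcop : IsCoprime a (b * ↑u⁻¹) :=
      (isCoprime_mul_unit_right_right u⁻¹.isUnit a b).2 hab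
    obtain ⟨w', e, he⟩ := exists_associated_pow_of_mul_eq_pow' hcop hpow
    exact ⟨e, w', by rw [← he, mul_comm], e.isUnit.dvd⟩
  | h₃ d q hd0 hq ih =>
    rcases hq.dvd_or_dvd (h ▸ (dvd_mul_right q d).mul_right _) with ⟨a', rfl⟩ | ⟨b', rfl⟩
    · obtain ⟨d', w', rfl, hdvd⟩ := ih hd0 hab.of_mul_left_right
        (mul_left_cancel₀ hq.ne_zero (by linear_combination h))
      exact ⟨q * d', w', by ring, mul_dvd_mul_left q hdvd⟩
    · obtain ⟨d', w', rfl, hdvd⟩ := ih hd0 hab.of_mul_right_right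
        (mul_left_cancel₀ hq.ne_zero (by linear_combination h))
      exact ⟨d', w', rfl, hdvd.mul_left q⟩

theorem exists_eq_mul_pow_and_dvd_of_prod_eq [IsDomain R] [IsPrincipalIdealRing R] {n : ℕ}
    {ι : Type*} {s : Finset ι} {g : ι → R}
    (hg : (s : Set ι).Pairwise fun i j => IsCoprime (g i) (g j)) {d w : R} (hd : d ≠ 0)
    (h : ∏ i ∈ s, g i = d * w ^ n) {i : ι} (hi : i ∈ s) :
    ∃ d' w' : R, g i = d' * w' ^ n ∧ d' ∣ d := by
  classical
  refine exists_eq_mul_pow_and_dvd_of_isCoprime hd (b := ∏ j ∈ s.erase i, g j) (w := w) ?_ ?_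
  · exact IsCoprime.prod_right fun j hj =>
      hg hi (Finset.mem_of_mem_erase hj) (Finset.ne_of_mem_erase hj).symm
  · rw [Finset.mul_prod_erase _ _ hi, h]

theorem exists_eq_unit_mul_pow_of_prod_eq [IsDomain R] [IsPrincipalIdealRing R] {n : ℕ}
    {ι : Type*} {s : Finset ι} {g : ι → R}
    (hg : (s : Set ι).Pairwise fun i j => IsCoprime (g i) (g j)) {d w : R} (hd : d ≠ 0)
    (h : ∏ i ∈ s, g i = d * w ^ n) {i : ι} (hi : i ∈ s) (hid : IsCoprime (g i) d) :
    ∃ (u : Rˣ) (w' : R), g i = u * w' ^ n := by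
  obtain ⟨d', w', hgi, hdvd⟩ := exists_eq_mul_pow_and_dvd_of_prod_eq hg hd h hi
  obtain ⟨u, rfl⟩ := hid.isUnit_of_dvd' (hgi ▸ dvd_mul_right _ _) hdvd
  exact ⟨u, w', hgi⟩

theorem exists_isMaximal_mem_mem_of_not_isCoprime {a b : R} (h : ¬IsCoprime a b) :
    ∃ P : Ideal R, P.IsMaximal ∧ a ∈ P ∧ b ∈ P := by
  have hne : Ideal.span {a, b} ≠ ⊤ := fun htop => h <| by
    rw [← Ideal.isCoprime_span_singleton_iff, Ideal.isCoprime_iff_sup_eq, ← Ideal.span_union]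
    exact htop
  obtain ⟨P, hP, hle⟩ := Ideal.exists_le_maximal _ hne
  exact ⟨P, hP, hle (Ideal.subset_span (by simp)), hle (Ideal.subset_span (by simp))⟩

theorem card_filter_not_isCoprime_le {ι : Type*} {s : Finset ι} {g : ι → R} {M : R}
    [DecidablePred fun i => ¬IsCoprime (g i) M]
    (hg : (s : Set ι).Pairwise fun i j => IsCoprime (g i) (g j)) :
    ((s.filter fun i => ¬IsCoprime (g i) M).card : ℕ∞) ≤
      {P : Ideal R | P.IsMaximal ∧ M ∈ P}.encard := by
  choose! P hP hgP hMP using fun i (hi : ¬IsCoprime (g i) M) =>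
    exists_isMaximal_mem_mem_of_not_isCoprime hi
  rw [← Set.encard_coe_eq_coe_finsetCard]
  refine Set.encard_le_encard_of_injOn (f := P) (fun i hi => ?_) fun i hi j hj hij => ?_
  · exact ⟨hP i (Finset.mem_filter.1 hi).2, hMP i (Finset.mem_filter.1 hi).2⟩
  · obtain ⟨his, hiM⟩ := Finset.mem_filter.1 hi
    obtain ⟨hjs, hjM⟩ := Finset.mem_filter.1 hj
    by_contra hne
    obtain ⟨u, v, huv⟩ := hg his hjs hne
    refine (hP i hiM).ne_top ((Ideal.eq_top_iff_one _).2 (huv ▸ ?_))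
    exact add_mem (Ideal.mul_mem_left _ _ (hgP i hiM)) (Ideal.mul_mem_left _ _ (hij ▸ hgP j hjM))

theorem exists_ne_isCoprime_of_encard_add_two_le {ι : Type*} {s : Finset ι} {g : ι → R} {M : R}
    (hg : (s : Set ι).Pairwise fun i j => IsCoprime (g i) (g j))
    (hcard : {P : Ideal R | P.IsMaximal ∧ M ∈ P}.encard + 2 ≤ s.card) :
    ∃ i ∈ s, ∃ j ∈ s, i ≠ j ∧ IsCoprime (g i) M ∧ IsCoprime (g j) M := by
  classical
  have hsum : (s.card : ℕ∞) = (s.filter fun i => IsCoprime (g i) M).card +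
      (s.filter fun i => ¬IsCoprime (g i) M).card := by
    exact_mod_cast (s.card_filter_add_card_filter_not fun i => IsCoprime (g i) M).symm
  have hle := card_filter_not_isCoprime_le (M := M) hg
  have htwo : 1 < (s.filter fun i => IsCoprime (g i) M).card := by
    have hbad : ((s.filter fun i => ¬IsCoprime (g i) M).card : ℕ∞) + 2 ≤ s.card :=
      (add_le_add_left hle 2).trans hcard
    rw [hsum] at hbad
    norm_cast at hbad
    lia
  obtain ⟨i, hi, j, hj, hij⟩ := Finset.one_lt_card.1 htwo
  rw [Finset.mem_filter] at hi hj
  exact ⟨i, hi.1, j, hj.1, hij, hi.2, hj.2⟩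

end CoprimeFactors

section IntAddSpan

variable {R : Type*} [CommRing R]

/-- The subring `ℤ + aR` of the elements congruent to a rational integer modulo `a`. -/
def intAddSpan (a : R) : Subring R :=
  (Int.castRingHom (R ⧸ Ideal.span {a})).range.comap (Ideal.Quotient.mk _)

theorem mem_intAddSpan {a x : R} : x ∈ intAddSpan a ↔ ∃ n : ℤ, a ∣ x - n := by
  simp only [intAddSpan, Subring.mem_comap, RingHom.mem_range, eq_intCast]
  refine exists_congr fun n => ?_
  rw [← map_intCast (Ideal.Quotient.mk (Ideal.span {a})), eq_comm,
    Ideal.Quotient.mk_eq_mk_iff_sub_mem, Ideal.mem_span_singleton]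

theorem mem_intAddSpan_of_dvd {a x : R} (h : a ∣ x) : x ∈ intAddSpan a :=
  mem_intAddSpan.2 ⟨0, by simpa using h⟩

theorem intAddSpan_le_of_dvd {a b : R} (h : a ∣ b) : intAddSpan b ≤ intAddSpan a := fun _ hx =>
  let ⟨n, hn⟩ := mem_intAddSpan.1 hx
  mem_intAddSpan.2 ⟨n, h.trans hn⟩

end IntAddSpan

/-- `ζ` is a primitive `p`-th root of unity for which `ζ - 1` is a prime element with residue field
`ℤ / pℤ`. These are the only features of the ring of integers of `ℚ(ζ_p)` that the arguments modulo
powers of `ζ - 1` rely on. -/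
structure IsTotallyRamifiedRoot {R : Type*} [CommRing R] (p : ℕ) (ζ : R) : Prop where
  isPrimitiveRoot : IsPrimitiveRoot ζ p
  prime_sub_one : Prime (ζ - 1)
  intAddSpan_sub_one : intAddSpan (ζ - 1) = ⊤

namespace IsTotallyRamifiedRoot

variable {R : Type*} [CommRing R] {p : ℕ} {ζ : R}

theorem exists_dvd_sub_intCast (hζ : IsTotallyRamifiedRoot p ζ) (x : R) : ∃ n : ℤ, ζ - 1 ∣ x - n :=
  mem_intAddSpan.1 (hζ.intAddSpan_sub_one ▸ Subring.mem_top x)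

variable [IsDomain R] [hp : Fact p.Prime]

theorem associated_sub_one_pow (hζ : IsTotallyRamifiedRoot p ζ) :
    Associated ((ζ - 1) ^ (p - 1)) (p : R) := by
  obtain ⟨n, rfl⟩ : ∃ n, p = n + 1 := ⟨p - 1, (Nat.sub_add_cancel hp.out.one_le).symm⟩
  rw [Nat.add_sub_cancel, ← Finset.card_range n, ← Finset.prod_const, Finset.card_range,
    Nat.cast_succ, ← hζ.isPrimitiveRoot.prod_one_sub_pow_eq_order]
  refine Associated.prod _ _ _ fun k hk => ?_
  rw [← neg_sub (ζ ^ (k + 1)) 1, Associated.neg_right_iff]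
  refine hζ.isPrimitiveRoot.associated_sub_one_pow_sub_one_of_coprime ?_
  exact (Nat.coprime_of_lt_prime k.succ_ne_zero (by simpa using hk) hp.out).symm

theorem sub_one_pow_dvd_natCast (hζ : IsTotallyRamifiedRoot p ζ) {e : ℕ} (he : e < p) :
    (ζ - 1) ^ e ∣ (p : R) :=
  (pow_dvd_pow _ (Nat.le_sub_one_of_lt he)).trans hζ.associated_sub_one_pow.dvd

theorem sub_one_dvd_natCast (hζ : IsTotallyRamifiedRoot p ζ) : ζ - 1 ∣ (p : R) := by
  simpa using hζ.sub_one_pow_dvd_natCast hp.out.one_lt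

theorem dvd_of_sub_one_dvd_intCast (hζ : IsTotallyRamifiedRoot p ζ) {n : ℤ}
    (h : ζ - 1 ∣ (n : R)) : (p : ℤ) ∣ n := by
  by_contra hn
  obtain ⟨a, b, hab⟩ := ((Nat.prime_iff_prime_int.1 hp.out).coprime_iff_not_dvd).2 hn
  refine hζ.prime_sub_one.not_isUnit (isUnit_of_dvd_one ?_)
  have hcast : (a : R) * p + b * n = 1 := mod_cast congrArg (Int.cast : ℤ → R) hab
  exact (dvd_add (hζ.sub_one_dvd_natCast.mul_left _) (h.mul_left _)).trans (dvd_of_eq hcast)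

theorem natCast_dvd_intCast_of_sub_one_dvd (hζ : IsTotallyRamifiedRoot p ζ) {n : ℤ}
    (h : ζ - 1 ∣ (n : R)) : (p : R) ∣ n := by
  exact_mod_cast Int.cast_dvd_cast (α := R) _ _ (hζ.dvd_of_sub_one_dvd_intCast h)

theorem pow_mem_intAddSpan (hζ : IsTotallyRamifiedRoot p ζ) (x : R) :
    x ^ p ∈ intAddSpan (p : R) := by
  obtain ⟨n, y, hy⟩ := hζ.exists_dvd_sub_intCast x
  obtain ⟨r, hr⟩ := exists_add_pow_prime_eq hp.out (n : R) ((ζ - 1) * y)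
  have hdvd : (p : R) ∣ ((ζ - 1) * y) ^ p := by
    rw [mul_pow]
    exact (hζ.associated_sub_one_pow.symm.dvd.trans (pow_dvd_pow _ (p.sub_le 1))).mul_right _
  refine mem_intAddSpan.2 ⟨n ^ p, ?_⟩
  rw [eq_add_of_sub_eq' hy, hr, Int.cast_pow, add_assoc, add_sub_cancel_left, mul_assoc, mul_assoc]
  exact dvd_add hdvd (dvd_mul_right _ _)

theorem exists_intCast_mul_pow_sub_one (hζ : IsTotallyRamifiedRoot p ζ) {a : R}
    (ha : ¬ζ - 1 ∣ a) : ∃ n : ℤ, (p : R) ∣ n * a ^ p - 1 := by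
  obtain ⟨m, hm⟩ := mem_intAddSpan.1 (hζ.pow_mem_intAddSpan a)
  have hpm : ¬(p : ℤ) ∣ m := fun h => ha <| hζ.prime_sub_one.dvd_of_dvd_pow (n := p) <| by
    have hdvd : (p : R) ∣ m := by exact_mod_cast Int.cast_dvd_cast (α := R) _ _ h
    exact hζ.sub_one_dvd_natCast.trans ((dvd_sub_left hdvd).1 hm)
  obtain ⟨u, v, huv⟩ := ((Nat.prime_iff_prime_int.1 hp.out).coprime_iff_not_dvd).2 hpm
  have hcast : (u : R) * p + v * m = 1 := mod_cast congrArg (Int.cast : ℤ → R) huv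
  obtain ⟨c, hc⟩ := hm
  exact ⟨v, v * c - u, by linear_combination v * hc + hcast⟩

theorem mem_intAddSpan_of_mul_pow_mem (hζ : IsTotallyRamifiedRoot p ζ) {x a : R}
    (ha : ¬ζ - 1 ∣ a) (h : x * a ^ p ∈ intAddSpan (p : R)) : x ∈ intAddSpan (p : R) := by
  obtain ⟨n, hn⟩ := hζ.exists_intCast_mul_pow_sub_one ha
  have hx : x = n * (x * a ^ p) - x * (n * a ^ p - 1) := by ring
  rw [hx]
  exact sub_mem (mul_mem (intCast_mem _ n) h) (mem_intAddSpan_of_dvd (hn.mul_left x))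

theorem pow_mul_notMem_intAddSpan (hζ : IsTotallyRamifiedRoot p ζ) {e : ℕ} (he : e ≠ 0)
    (hep : e + 1 < p) {y : R} (hy : ¬ζ - 1 ∣ y) :
    (ζ - 1) ^ e * y ∉ intAddSpan ((ζ - 1) ^ (e + 1)) := fun hmem => by
  obtain ⟨n, hn⟩ := mem_intAddSpan.1 hmem
  have hLn : ζ - 1 ∣ (n : R) :=
    (dvd_sub_right ((dvd_pow_self _ he).mul_right y)).1 ((dvd_pow_self _ e.succ_ne_zero).trans hn)
  have hpow : (ζ - 1) ^ (e + 1) ∣ (n : R) :=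
    (hζ.sub_one_pow_dvd_natCast hep).trans (hζ.natCast_dvd_intCast_of_sub_one_dvd hLn)
  refine hy ((mul_dvd_mul_iff_left (pow_ne_zero e hζ.prime_sub_one.ne_zero)).1 ?_)
  rw [← pow_succ]
  exact (dvd_sub_left hpow).1 hn

theorem exists_natCast_mul_of_not_dvd (hζ : IsTotallyRamifiedRoot p ζ) {y : R}
    (hy : ¬ζ - 1 ∣ y) (x : R) : ∃ j : ℕ, ζ - 1 ∣ x - j * y := by
  obtain ⟨a, ha⟩ := hζ.exists_dvd_sub_intCast x
  obtain ⟨b, hb⟩ := hζ.exists_dvd_sub_intCast y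
  have hb0 : ((b : ℤ) : ZMod p) ≠ 0 := fun h => hy <| by
    have hdvd := Int.cast_dvd_cast (α := R) _ _ ((ZMod.intCast_zmod_eq_zero_iff_dvd b p).1 h)
    exact (dvd_sub_left (hζ.sub_one_dvd_natCast.trans (by exact_mod_cast hdvd))).1 hb
  refine ⟨((a : ZMod p) * (b : ZMod p)⁻¹).val, ?_⟩
  set j := ((a : ZMod p) * (b : ZMod p)⁻¹).val with hj
  have hdvd : (p : ℤ) ∣ a - j * b := by
    rw [← ZMod.intCast_zmod_eq_zero_iff_dvd]
    push_cast
    rw [hj, ZMod.natCast_zmod_val, inv_mul_cancel_right₀ hb0, sub_self]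
  have hcast : (p : R) ∣ a - j * b := by exact_mod_cast Int.cast_dvd_cast (α := R) _ _ hdvd
  have hxy : x - j * y = (x - a) - j * (y - b) + (a - j * b) := by ring
  rw [hxy]
  exact dvd_add (dvd_sub ha (hb.mul_left _)) (hζ.sub_one_dvd_natCast.trans hcast)

theorem sub_one_dvd_sub_of_dvd_pow_sub_pow (hζ : IsTotallyRamifiedRoot p ζ) {x y : R}
    (h : ζ - 1 ∣ x ^ p - y ^ p) : ζ - 1 ∣ x - y := by
  obtain ⟨r, hr⟩ := exists_add_pow_prime_eq hp.out (x - y) y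
  rw [sub_add_cancel] at hr
  refine hζ.prime_sub_one.dvd_of_dvd_pow (n := p) ?_
  have hsub : (x - y) ^ p = x ^ p - y ^ p - p * ((x - y) * y * r) := by linear_combination -hr
  rw [hsub]
  exact dvd_sub h (hζ.sub_one_dvd_natCast.mul_right _)

theorem exists_pow_eq_one_sq_dvd_sub (hζ : IsTotallyRamifiedRoot p ζ) {x y : R}
    (hxy : IsCoprime x y) (h : ζ - 1 ∣ x ^ p - y ^ p) :
    ∃ η : R, η ^ p = 1 ∧ (ζ - 1) ^ 2 ∣ x - η * y := by
  have hsub : ζ - 1 ∣ x - y := hζ.sub_one_dvd_sub_of_dvd_pow_sub_pow h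
  have hy : ¬ζ - 1 ∣ y := fun hy =>
    hζ.prime_sub_one.not_isUnit (hxy.isUnit_of_dvd' ((dvd_sub_left hy).1 hsub) hy)
  obtain ⟨c, hc⟩ := hsub
  obtain ⟨j, hj⟩ := hζ.exists_natCast_mul_of_not_dvd hy c
  have hgeom : ζ - 1 ∣ ∑ i ∈ Finset.range j, ζ ^ i - j := by
    have hsum : ∑ i ∈ Finset.range j, ζ ^ i - j = ∑ i ∈ Finset.range j, (ζ ^ i - 1) := by simp
    rw [hsum]
    exact Finset.dvd_sum fun i _ => sub_one_dvd_pow_sub_one ζ i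
  refine ⟨ζ ^ j, by rw [pow_right_comm, hζ.isPrimitiveRoot.pow_eq_one, one_pow], ?_⟩
  have hfac : x - ζ ^ j * y =
      (ζ - 1) * ((c - j * y) - (∑ i ∈ Finset.range j, ζ ^ i - j) * y) := by
    linear_combination hc + y * mul_geom_sum ζ j
  rw [hfac, sq]
  exact mul_dvd_mul_left _ (dvd_sub hj (hgeom.mul_right y))

end IsTotallyRamifiedRoot

section Descent

variable {R : Type*} [CommRing R] {p : ℕ} {ζ M : R}

/-- Kummer's lemma as a property of the ring `R`: a unit congruent to a rational integer modulo `p`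
is a `p`-th power. -/
def HasKummerProperty (p : ℕ) (R : Type*) [CommRing R] : Prop :=
  ∀ u : Rˣ, (u : R) ∈ intAddSpan (p : R) → ∃ v : Rˣ, u = v ^ p

/-- `w` solves a Fermat-type equation `ε₁ x ^ p - ε₂ y ^ p = d w ^ p` with coprime `x`, `y`, units
`ε₁`, `ε₂`, and a coefficient `d` all of whose prime factors divide `M`. The descent decreases the
multiplicity of `ζ - 1` in such a `w`. -/
def IsUnitFermatRoot (p : ℕ) (M w : R) : Prop :=
  ∃ (ε₁ ε₂ : Rˣ) (x y d : R) (N : ℕ),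
    IsCoprime x y ∧ d ∣ M ^ N ∧ ε₁ * x ^ p - ε₂ * y ^ p = d * w ^ p

variable [IsDomain R] [hp : Fact p.Prime]

theorem IsUnitFermatRoot.exists_sq_dvd_sub (hζ : IsTotallyRamifiedRoot p ζ)
    (hK : HasKummerProperty p R) {w : R} (hw : IsUnitFermatRoot p M w) (hLw : ζ - 1 ∣ w) :
    ∃ (x y d : R) (N : ℕ), IsCoprime x y ∧ d ∣ M ^ N ∧ x ^ p - y ^ p = d * w ^ p ∧
      (ζ - 1) ^ 2 ∣ x - y := by
  obtain ⟨ε₁, ε₂, x, y, d, N, hxy, hd, h⟩ := hw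
  have hmonic : ((ε₂⁻¹ * ε₁ : Rˣ) : R) * x ^ p - y ^ p = (ε₂⁻¹ : Rˣ) * d * w ^ p := by
    push_cast
    linear_combination (ε₂⁻¹ : Rˣ) * h + y ^ p * ε₂.inv_mul
  have hLwp : ζ - 1 ∣ w ^ p := hLw.trans (dvd_pow_self w hp.out.ne_zero)
  have hLx : ¬ζ - 1 ∣ x := fun hx => by
    have hxp := (hx.trans (dvd_pow_self x hp.out.ne_zero)).mul_left ((ε₂⁻¹ * ε₁ : Rˣ) : R)
    have hy := hζ.prime_sub_one.dvd_of_dvd_pow ((dvd_sub_right hxp).1 (hmonic ▸ hLwp.mul_left _))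
    exact hζ.prime_sub_one.not_isUnit (hxy.isUnit_of_dvd' hx hy)
  have hpw : (p : R) ∣ w ^ p := hζ.associated_sub_one_pow.symm.dvd.trans
    ((pow_dvd_pow_of_dvd hLw _).trans (pow_dvd_pow w (p.sub_le 1)))
  obtain ⟨v, hv⟩ := hK (ε₂⁻¹ * ε₁) <| hζ.mem_intAddSpan_of_mul_pow_mem hLx <| by
    rw [sub_eq_iff_eq_add.1 hmonic]
    exact add_mem (mem_intAddSpan_of_dvd (hpw.mul_left _)) (hζ.pow_mem_intAddSpan y)
  have hvx : (v * x) ^ p - y ^ p = (ε₂⁻¹ : Rˣ) * d * w ^ p := by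
    rw [← hmonic, hv, Units.val_pow_eq_pow_val, mul_pow]
  obtain ⟨η, hη, hsq⟩ := hζ.exists_pow_eq_one_sq_dvd_sub
    ((isCoprime_mul_unit_left_left v.isUnit x y).2 hxy) (hvx ▸ hLwp.mul_left _)
  refine ⟨v * x, η * y, (ε₂⁻¹ : Rˣ) * d, N, ?_, Units.mul_left_dvd.2 hd, ?_, hsq⟩
  · rw [isCoprime_mul_unit_left_left v.isUnit,
      isCoprime_mul_unit_left_right (.of_pow_eq_one hη hp.out.ne_zero)]
    exact hxy
  · rw [mul_pow η, hη, one_mul, hvx]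

theorem IsTotallyRamifiedRoot.exists_pairwise_isCoprime_factors (hζ : IsTotallyRamifiedRoot p ζ)
    {x y : R} (hxy : IsCoprime x y) (h : ζ - 1 ∣ x - y) :
    ∃ g : R → R, (∀ η ∈ nthRootsFinset p (1 : R), x - η * y = (ζ - 1) * g η) ∧
      (nthRootsFinset p (1 : R) : Set R).Pairwise fun η θ => IsCoprime (g η) (g θ) := by
  have hassoc := hζ.isPrimitiveRoot.nthRootsFinset_pairwise_associated_sub_one_sub_of_prime hp.out
  have hdvd : ∀ η ∈ nthRootsFinset p (1 : R), ζ - 1 ∣ x - η * y := fun η hη => by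
    have hη1 : ζ - 1 ∣ 1 - η := by
      rcases eq_or_ne 1 η with rfl | hne
      · simp
      · exact (hassoc (one_mem_nthRootsFinset hp.out.pos) hη hne).dvd
    have hsplit : x - η * y = x - y + (1 - η) * y := by ring
    exact hsplit ▸ dvd_add h (hη1.mul_right y)
  choose! g hg using hdvd
  refine ⟨g, hg, fun η hη θ hθ hne => ?_⟩
  obtain ⟨u, hu⟩ := hassoc hη hθ hne
  have hy : (u : R) * y = g θ - g η := mul_left_cancel₀ hζ.prime_sub_one.ne_zero (by
    linear_combination y * hu - hg η hη + hg θ hθ)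
  obtain ⟨a, b, hab⟩ := hxy
  refine ⟨a * (ζ - 1) - (a * η + b) * (u⁻¹ : Rˣ), (a * η + b) * (u⁻¹ : Rˣ), ?_⟩
  linear_combination hab - a * hg η hη - (a * η + b) * (u⁻¹ : Rˣ) * hy +
    (a * η + b) * y * u.inv_mul

theorem isUnitFermatRoot_of_three_factors (hζ : IsTotallyRamifiedRoot p ζ) {x y : R} {g : R → R}
    (hg : ∀ η ∈ nthRootsFinset p (1 : R), x - η * y = (ζ - 1) * g η)
    {η θ : R} (hη : η ∈ nthRootsFinset p (1 : R)) (hθ : θ ∈ nthRootsFinset p (1 : R))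
    (hη1 : η ≠ 1) (hθ1 : θ ≠ 1) (hηθ : η ≠ θ) (hcop : IsCoprime (g η) (g θ))
    {ε₁ ε₂ : Rˣ} {s t d w : R} {N : ℕ} (hs : g η = ε₁ * s ^ p) (ht : g θ = ε₂ * t ^ p)
    (hw : g 1 = d * w ^ p) (hd : d ∣ M ^ N) : IsUnitFermatRoot p M w := by
  have hone : (1 : R) ∈ nthRootsFinset p (1 : R) := one_mem_nthRootsFinset hp.out.pos
  have hassoc := hζ.isPrimitiveRoot.nthRootsFinset_pairwise_associated_sub_one_sub_of_prime hp.out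
  obtain ⟨uη, huη⟩ := hassoc hη hone hη1
  obtain ⟨uθ, huθ⟩ := hassoc hθ hone hθ1
  obtain ⟨v, hv⟩ := hassoc hθ hη hηθ.symm
  have hsdvd : s ∣ g η := hs ▸ (dvd_pow_self s hp.out.ne_zero).mul_left _
  have htdvd : t ∣ g θ := ht ▸ (dvd_pow_self t hp.out.ne_zero).mul_left _
  refine ⟨uθ * ε₁, uη * ε₂, s, t, v * d, N,
    (hcop.of_isCoprime_of_dvd_left hsdvd).of_isCoprime_of_dvd_right htdvd,
    Units.mul_left_dvd.2 hd, ?_⟩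
  have hL := hζ.prime_sub_one.ne_zero
  refine mul_left_cancel₀ hL (mul_left_cancel₀ hL ?_)
  push_cast
  linear_combination (ζ - 1) * (ζ - 1) * (-uθ * hs + uη * ht + v * hw) -
    (ζ - 1) * (uθ * hg η hη - uη * hg θ hθ - v * hg 1 hone) + (x - η * y) * huθ -
    (x - θ * y) * huη - (x - y) * hv

theorem IsTotallyRamifiedRoot.prod_factors_eq (hζ : IsTotallyRamifiedRoot p ζ) {x y d w : R}
    {g : R → R} (hg : ∀ η ∈ nthRootsFinset p (1 : R), x - η * y = (ζ - 1) * g η)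
    (h : x ^ p - y ^ p = d * ((ζ - 1) * w) ^ p) :
    ∏ η ∈ nthRootsFinset p (1 : R), g η = d * w ^ p := by
  refine mul_left_cancel₀ (pow_ne_zero p hζ.prime_sub_one.ne_zero) ?_
  calc (ζ - 1) ^ p * ∏ η ∈ nthRootsFinset p (1 : R), g η
      = ∏ η ∈ nthRootsFinset p (1 : R), (ζ - 1) * g η := by
        rw [Finset.prod_mul_distrib, Finset.prod_const, hζ.isPrimitiveRoot.card_nthRootsFinset]
    _ = x ^ p - y ^ p := by
        rw [hζ.isPrimitiveRoot.pow_sub_pow_eq_prod_sub_mul x y hp.out.pos]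
        exact Finset.prod_congr rfl fun η hη => (hg η hη).symm
    _ = (ζ - 1) ^ p * (d * w ^ p) := by rw [h, mul_pow, mul_left_comm]

variable [IsPrincipalIdealRing R]

theorem IsUnitFermatRoot.exists_smaller (hζ : IsTotallyRamifiedRoot p ζ)
    (hK : HasKummerProperty p R) (hM : ¬ζ - 1 ∣ M)
    (hcard : {P : Ideal R | P.IsMaximal ∧ M ∈ P}.encard + 3 ≤ p) {w : R}
    (hw : IsUnitFermatRoot p M w) (hw0 : w ≠ 0) (hLw : ζ - 1 ∣ w) :
    ∃ w' : R, IsUnitFermatRoot p M w' ∧ w' ≠ 0 ∧ ζ - 1 ∣ w' ∧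
      ∀ k, (ζ - 1) ^ k ∣ w' → (ζ - 1) ^ (k + 1) ∣ w := by
  classical
  obtain ⟨x, y, d, N, hxy, hd, h, hsq⟩ := hw.exists_sq_dvd_sub hζ hK hLw
  have hL := hζ.prime_sub_one
  have hLd : ¬ζ - 1 ∣ d := fun hdvd => hM (hL.dvd_of_dvd_pow (hdvd.trans hd))
  have hd0 : d ≠ 0 := fun hd0 => hLd (hd0 ▸ dvd_zero _)
  obtain ⟨g, hg, hcop⟩ :=
    hζ.exists_pairwise_isCoprime_factors hxy ((dvd_pow_self _ two_ne_zero).trans hsq)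
  have hone := one_mem_nthRootsFinset (R := R) hp.out.pos
  obtain ⟨w₁, rfl⟩ := hLw
  have hprod := hζ.prod_factors_eq hg h
  obtain ⟨η, hη, θ, hθ, hne, hηM, hθM⟩ :=
    exists_ne_isCoprime_of_encard_add_two_le (s := (nthRootsFinset p (1 : R)).erase 1) (M := M)
      (hcop.mono (Finset.coe_subset.2 (Finset.erase_subset _ _))) <| by
        rw [Finset.card_erase_of_mem hone, hζ.isPrimitiveRoot.card_nthRootsFinset]
        rw [← ENat.add_le_add_iff_right ENat.one_ne_top, add_assoc, two_add_one_eq_three]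
        exact_mod_cast (Nat.sub_add_cancel hp.out.one_le).symm ▸ hcard
  rw [Finset.mem_erase] at hη hθ
  obtain ⟨ε₁, s, hs⟩ := exists_eq_unit_mul_pow_of_prod_eq hcop hd0 hprod hη.2
    (hηM.pow_right.of_isCoprime_of_dvd_right hd)
  obtain ⟨ε₂, t, ht⟩ := exists_eq_unit_mul_pow_of_prod_eq hcop hd0 hprod hθ.2
    (hθM.pow_right.of_isCoprime_of_dvd_right hd)
  obtain ⟨d', w', hw', hd'⟩ := exists_eq_mul_pow_and_dvd_of_prod_eq hcop hd0 hprod hone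
  have hdvd : g 1 ∣ d * w₁ ^ p := hprod ▸ Finset.dvd_prod_of_mem g hone
  refine ⟨w', isUnitFermatRoot_of_three_factors hζ hg hη.2 hθ.2 hη.1 hθ.1 hne
    (hcop hη.2 hθ.2 hne) hs ht hw' (hd'.trans hd), ?_, ?_, fun k hk => ?_⟩
  · rintro rfl
    rw [hw', zero_pow hp.out.ne_zero, mul_zero, zero_dvd_iff] at hdvd
    exact mul_ne_zero hd0 (pow_ne_zero p (right_ne_zero_of_mul hw0)) hdvd
  · have hLg : ζ - 1 ∣ d' * w' ^ p := by
      rw [← hw', ← mul_dvd_mul_iff_left hL.ne_zero, ← sq, ← hg 1 hone, one_mul]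
      exact hsq
    exact hL.dvd_of_dvd_pow ((hL.dvd_or_dvd hLg).resolve_left fun h' => hLd (h'.trans hd'))
  · have hpow : ((ζ - 1) ^ k) ^ p ∣ w₁ ^ p := by
      have hkp := ((pow_dvd_pow_of_dvd hk p).mul_left d').trans (hw' ▸ hdvd)
      rw [← pow_mul] at hkp ⊢
      exact hL.pow_dvd_of_dvd_mul_left _ hLd hkp
    rw [pow_succ']
    exact mul_dvd_mul_left _ ((IsIntegrallyClosed.pow_dvd_pow_iff hp.out.ne_zero).1 hpow)

theorem not_isUnitFermatRoot_of_dvd (hζ : IsTotallyRamifiedRoot p ζ)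
    (hK : HasKummerProperty p R) (hM : ¬ζ - 1 ∣ M)
    (hcard : {P : Ideal R | P.IsMaximal ∧ M ∈ P}.encard + 3 ≤ p) {w : R} (hw0 : w ≠ 0)
    (hLw : ζ - 1 ∣ w) : ¬IsUnitFermatRoot p M w := fun hw => by
  have hpow : ∀ k : ℕ, ∀ w : R, IsUnitFermatRoot p M w → w ≠ 0 → ζ - 1 ∣ w → (ζ - 1) ^ k ∣ w := by
    intro k
    induction k with
    | zero => simp
    | succ k ih =>
      intro w hw hw0 hLw
      obtain ⟨w', hw', hw'0, hLw', hstep⟩ := hw.exists_smaller hζ hK hM hcard hw0 hLw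
      exact hstep k (ih w' hw' hw'0 hLw')
  obtain ⟨n, hn⟩ := FiniteMultiplicity.of_not_isUnit hζ.prime_sub_one.not_isUnit hw0
  exact hn (hpow (n + 1) w hw hw0 hLw)

end Descent

section PowerIndex

theorem index_range_powMonoidHom_dvd {G : Type*} [CommGroup G] {S : Finset G}
    (hS : Subgroup.closure (S : Set G) = ⊤) (n : ℕ) :
    (powMonoidHom n : G →* G).range.index ∣ n ^ S.card := by
  have : Group.FG G := Group.fg_iff.2 ⟨S, hS, S.finite_toSet⟩
  refine (card_dvd_exponent_pow_rank' (G ⧸ (powMonoidHom n : G →* G).range) fun g => ?_).trans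
    (pow_dvd_pow n ?_)
  · induction g using QuotientGroup.induction_on with
    | H g => exact (QuotientGroup.eq_one_iff (g ^ n)).2 ⟨g, rfl⟩
  · exact (Group.rank_le_of_surjective _ (QuotientGroup.mk'_surjective _)).trans (Group.rank_le hS)

theorem mul_index_dvd_index_of_lt {G : Type*} [Group G] {H K : Subgroup G} {p n : ℕ}
    (hp : p.Prime) (hlt : H < K) (hH : H.index ∣ p ^ n) : p * K.index ∣ H.index := by
  rw [← Subgroup.relIndex_mul_index hlt.le]
  obtain ⟨k, -, hk⟩ :=
    (Nat.dvd_prime_pow hp).1 ((Subgroup.relIndex_dvd_index_of_le hlt.le).trans hH)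
  have hk0 : k ≠ 0 := fun h0 => hlt.not_ge (Subgroup.relIndex_eq_one.1 (by rw [hk, h0, pow_zero]))
  exact mul_dvd_mul_right (hk ▸ dvd_pow_self p hk0) _

theorem index_range_powMonoidHom_units_dvd (K : Type*) [Field K] [NumberField K] (n : ℕ) :
    (powMonoidHom n : (𝓞 K)ˣ →* (𝓞 K)ˣ).range.index ∣ n ^ (Units.rank K + 1) := by
  classical
  obtain ⟨τ, hτ⟩ := IsCyclic.exists_generator (α := Units.torsion K)
  refine (index_range_powMonoidHom_dvd (S := insert (τ : (𝓞 K)ˣ)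
    (Finset.univ.image (Units.fundSystem K))) ?_ n).trans (pow_dvd_pow n ?_)
  · rw [eq_top_iff, ← Units.closure_fundSystem_sup_torsion_eq_top K, Finset.coe_insert,
      Finset.coe_image, Finset.coe_univ, Set.image_univ]
    refine sup_le (Subgroup.closure_mono (Set.subset_insert _ _)) fun u hu => ?_
    obtain ⟨k, hk⟩ := hτ ⟨u, hu⟩
    have hu : u = (τ : (𝓞 K)ˣ) ^ k := congrArg Subtype.val hk.symm
    exact hu ▸ zpow_mem (Subgroup.subset_closure (Set.mem_insert _ _)) k
  · exact (Finset.card_insert_le _ _).trans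
      (Nat.succ_le_succ (Finset.card_image_le.trans (by simp)))

end PowerIndex

section UnitFiltration

variable {R : Type*} [CommRing R] {p : ℕ} {ζ : R}

/-- The units of `R` congruent to a rational integer modulo `(ζ - 1) ^ e`. For a totally ramified
`p`-th root of unity `ζ` this filtration ends, at `e = p - 1`, with the units congruent to a
rational integer modulo `p`; counting its jumps proves Kummer's lemma. -/
def unitFiltration (ζ : R) (e : ℕ) : Subgroup Rˣ :=
  (intAddSpan ((ζ - 1) ^ e)).toSubmonoid.units

theorem unitFiltration_antitone (ζ : R) : Antitone (unitFiltration ζ) := fun _ _ h =>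
  Submonoid.units_mono (intAddSpan_le_of_dvd (pow_dvd_pow (ζ - 1) h))

namespace IsTotallyRamifiedRoot

theorem not_sub_one_dvd_pow (hζ : IsTotallyRamifiedRoot p ζ) (k : ℕ) :
    ¬ζ - 1 ∣ ζ ^ k := fun h =>
  hζ.prime_sub_one.not_isUnit
    (isUnit_of_dvd_one ((dvd_sub_right h).1 (sub_one_dvd_pow_sub_one ζ k)))

variable [IsDomain R] [hp : Fact p.Prime]

theorem mem_unitFiltration_iff (hζ : IsTotallyRamifiedRoot p ζ) {e : ℕ}
    (he : e < p) {u : Rˣ} : u ∈ unitFiltration ζ e ↔ (u : R) ∈ intAddSpan ((ζ - 1) ^ e) := by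
  refine ⟨fun h => h.1, fun h => ⟨h, ?_⟩⟩
  have hinv : ((u⁻¹ : Rˣ) : R) = (u : R) ^ (p - 1) * ((u⁻¹ : Rˣ) : R) ^ p := by
    rw [← Nat.sub_add_cancel hp.out.one_le, Nat.add_sub_cancel, pow_succ, ← mul_assoc, ← mul_pow,
      Units.mul_inv, one_pow, one_mul]
  change ((u⁻¹ : Rˣ) : R) ∈ intAddSpan ((ζ - 1) ^ e)
  rw [hinv]
  exact mul_mem (pow_mem h _)
    (intAddSpan_le_of_dvd (hζ.sub_one_pow_dvd_natCast he) (hζ.pow_mem_intAddSpan _))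

theorem mem_unitFiltration_pred_iff (hζ : IsTotallyRamifiedRoot p ζ)
    {u : Rˣ} : u ∈ unitFiltration ζ (p - 1) ↔ (u : R) ∈ intAddSpan (p : R) := by
  rw [hζ.mem_unitFiltration_iff (Nat.sub_one_lt hp.out.ne_zero)]
  exact ⟨fun h => intAddSpan_le_of_dvd hζ.associated_sub_one_pow.symm.dvd h,
    fun h => intAddSpan_le_of_dvd hζ.associated_sub_one_pow.dvd h⟩

theorem unitFiltration_succ_lt (hζ : IsTotallyRamifiedRoot p ζ) {e : ℕ}
    (he : e ≠ 0) (hep : e + 1 < p) {u : Rˣ} {n : ℤ} {y : R} (hy : ¬ζ - 1 ∣ y)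
    (hu : (u : R) = n + (ζ - 1) ^ e * y) : unitFiltration ζ (e + 1) < unitFiltration ζ e := by
  refine SetLike.lt_iff_le_and_exists.2 ⟨unitFiltration_antitone ζ e.le_succ, u, ?_, ?_⟩
  · rw [hζ.mem_unitFiltration_iff (by lia), hu]
    exact add_mem (intCast_mem _ n) (mem_intAddSpan_of_dvd (dvd_mul_right _ _))
  · rw [hζ.mem_unitFiltration_iff hep, hu, add_mem_cancel_left (intCast_mem _ n)]
    exact hζ.pow_mul_notMem_intAddSpan he hep hy

theorem range_powMonoidHom_le_unitFiltration
    (hζ : IsTotallyRamifiedRoot p ζ) :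
    (powMonoidHom p : Rˣ →* Rˣ).range ≤ unitFiltration ζ (p - 1) := by
  rintro _ ⟨v, rfl⟩
  exact hζ.mem_unitFiltration_pred_iff.2 (by simpa using hζ.pow_mem_intAddSpan (v : R))

theorem hasKummerProperty_of_index_dvd (hζ : IsTotallyRamifiedRoot p ζ)
    (h0 : (powMonoidHom p : Rˣ →* Rˣ).range.index ≠ 0)
    (h : (powMonoidHom p : Rˣ →* Rˣ).range.index ∣ (unitFiltration ζ (p - 1)).index) :
    HasKummerProperty p R := fun u hu => by
  have hindex := Subgroup.relIndex_mul_index hζ.range_powMonoidHom_le_unitFiltration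
  rw [Nat.dvd_antisymm h (Dvd.intro_left _ hindex)] at h0 hindex
  have hone := Nat.eq_of_mul_eq_mul_right (Nat.pos_of_ne_zero h0) (hindex.trans (one_mul _).symm)
  obtain ⟨v, hv⟩ := Subgroup.relIndex_eq_one.1 hone (hζ.mem_unitFiltration_pred_iff.2 hu)
  exact ⟨v, hv.symm⟩

end IsTotallyRamifiedRoot

end UnitFiltration

section Seven

variable {R : Type*} [CommRing R] [IsDomain R] {ζ : R}

instance fact_prime_seven : Fact (Nat.Prime 7) := ⟨by norm_num⟩

theorem geom_sum_seven_eq_zero (hζ : IsPrimitiveRoot ζ 7) :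
    1 + ζ + ζ ^ 2 + ζ ^ 3 + ζ ^ 4 + ζ ^ 5 + ζ ^ 6 = 0 := by
  simpa [Finset.sum_range_succ] using hζ.geom_sum_eq_zero (by norm_num)

theorem add_pow_mul_add_pow_mul_add_pow_eq_one (hζ : IsPrimitiveRoot ζ 7) :
    (ζ + ζ ^ 6) * (ζ ^ 2 + ζ ^ 5) * (ζ ^ 3 + ζ ^ 4) = 1 := by
  have hsum := geom_sum_seven_eq_zero hζ
  grind

theorem add_pow_five_mul_add_eq (hζ : IsPrimitiveRoot ζ 7) :
    (ζ + ζ ^ 6) ^ 5 * (ζ ^ 3 + ζ ^ 4) = (ζ - 1) ^ 4 * ζ ^ 12 - 6 := by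
  have hsum := geom_sum_seven_eq_zero hζ
  grind

theorem isUnit_add_pow_six (hζ : IsPrimitiveRoot ζ 7) : IsUnit (ζ + ζ ^ 6) :=
  .of_mul_eq_one _ ((mul_assoc _ _ _).symm.trans (add_pow_mul_add_pow_mul_add_pow_eq_one hζ))

theorem isUnit_pow_three_add_pow_four (hζ : IsPrimitiveRoot ζ 7) : IsUnit (ζ ^ 3 + ζ ^ 4) :=
  .of_mul_eq_one _ ((mul_comm _ _).trans (add_pow_mul_add_pow_mul_add_pow_eq_one hζ))

namespace IsTotallyRamifiedRoot

theorem unitFiltration_two_lt_one (hζ : IsTotallyRamifiedRoot 7 ζ) :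
    unitFiltration ζ 2 < unitFiltration ζ 1 :=
  hζ.unitFiltration_succ_lt (u := (hζ.isPrimitiveRoot.isUnit (by norm_num)).unit) one_ne_zero
    (by norm_num) (n := 1) (pow_zero ζ ▸ hζ.not_sub_one_dvd_pow 0) (by simp)

theorem unitFiltration_three_lt_two (hζ : IsTotallyRamifiedRoot 7 ζ) :
    unitFiltration ζ 3 < unitFiltration ζ 2 := by
  refine hζ.unitFiltration_succ_lt (u := (isUnit_add_pow_six hζ.isPrimitiveRoot).unit) two_ne_zero
    (by norm_num) (n := 2) (hζ.not_sub_one_dvd_pow 6) ?_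
  rw [IsUnit.unit_spec]
  push_cast
  linear_combination (2 - ζ) * hζ.isPrimitiveRoot.pow_eq_one

theorem unitFiltration_five_lt_four (hζ : IsTotallyRamifiedRoot 7 ζ) :
    unitFiltration ζ 5 < unitFiltration ζ 4 := by
  refine hζ.unitFiltration_succ_lt (u := (((isUnit_add_pow_six hζ.isPrimitiveRoot).pow 5).mul
    (isUnit_pow_three_add_pow_four hζ.isPrimitiveRoot)).unit) four_ne_zero (by norm_num) (n := -6)
    (hζ.not_sub_one_dvd_pow 12) ?_
  rw [IsUnit.unit_spec, add_pow_five_mul_add_eq hζ.isPrimitiveRoot]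
  push_cast
  ring

theorem seven_pow_three_dvd_index (hζ : IsTotallyRamifiedRoot 7 ζ) {n : ℕ}
    (hn : (unitFiltration ζ 6).index ∣ 7 ^ n) : 7 ^ 3 ∣ (unitFiltration ζ 6).index := by
  have hindex {d e : ℕ} (h : d ≤ e) := Subgroup.index_dvd_of_le (unitFiltration_antitone ζ h)
  have hjump {d e : ℕ} (hlt : unitFiltration ζ e < unitFiltration ζ d) (he : e ≤ 6) :=
    mul_index_dvd_index_of_lt (Fact.out : Nat.Prime 7) hlt ((hindex he).trans hn)
  calc 7 ^ 3 ∣ 7 * (7 * (7 * (unitFiltration ζ 1).index)) := Dvd.intro _ (by ring)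
    _ ∣ 7 * (7 * (unitFiltration ζ 2).index) := by
      gcongr; exact hjump hζ.unitFiltration_two_lt_one (by norm_num)
    _ ∣ 7 * (unitFiltration ζ 3).index := by
      gcongr; exact hjump hζ.unitFiltration_three_lt_two (by norm_num)
    _ ∣ 7 * (unitFiltration ζ 4).index := by gcongr; exact hindex (by norm_num)
    _ ∣ (unitFiltration ζ 5).index := hjump hζ.unitFiltration_five_lt_four (by norm_num)
    _ ∣ (unitFiltration ζ 6).index := hindex (by norm_num)

theorem hasKummerProperty_seven (hζ : IsTotallyRamifiedRoot 7 ζ)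
    (hindex : (powMonoidHom 7 : Rˣ →* Rˣ).range.index ∣ 7 ^ 3) : HasKummerProperty 7 R := by
  have hdvd := (Subgroup.index_dvd_of_le hζ.range_powMonoidHom_le_unitFiltration).trans hindex
  exact hζ.hasKummerProperty_of_index_dvd (ne_zero_of_dvd_ne_zero (by norm_num) hindex)
    (hindex.trans (hζ.seven_pow_three_dvd_index hdvd))

end IsTotallyRamifiedRoot

end Seven

section CyclotomicIntegers

variable {K : Type*} [Field K]

theorem mem_primesOver_of_natCast_mem {p : ℕ} [hp : Fact p.Prime] {P : Ideal (𝓞 K)}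
    (hP : P.IsPrime) (h : (p : 𝓞 K) ∈ P) : P ∈ (Ideal.span {(p : ℤ)}).primesOver (𝓞 K) := by
  have : (Ideal.span {(p : ℤ)}).IsMaximal :=
    PrincipalIdealRing.isMaximal_of_irreducible (Nat.prime_iff_prime_int.1 hp.out).irreducible
  refine ⟨hP, ⟨this.eq_of_le (Ideal.IsPrime.under ℤ P).ne_top ?_⟩⟩
  rw [Ideal.span_singleton_le_iff_mem]
  simpa [Ideal.mem_comap] using h

variable [NumberField K]

theorem isTotallyRamifiedRoot_toInteger {p : ℕ} [Fact p.Prime] [IsCyclotomicExtension {p} ℚ K]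
    {ζ : K} (hζ : IsPrimitiveRoot ζ p) : IsTotallyRamifiedRoot p hζ.toInteger where
  isPrimitiveRoot := hζ.toInteger_isPrimitiveRoot
  prime_sub_one := hζ.zeta_sub_one_prime'
  intAddSpan_sub_one := by
    have hle : Algebra.adjoin ℤ {hζ.toInteger} ≤
        subalgebraOfSubring (intAddSpan (hζ.toInteger - 1)) :=
      Algebra.adjoin_le (Set.singleton_subset_iff.2 (mem_intAddSpan.2 ⟨1, by simp⟩))
    rw [IsCyclotomicExtension.Rat.adjoin_singleton_eq_top hζ] at hle
    exact eq_top_iff.2 fun x _ => hle (Algebra.mem_top (x := x))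

theorem exists_ringHom_toInteger_eq {n : ℕ} [NeZero n] [IsCyclotomicExtension {n} ℚ K] {ζ : K}
    (hζ : IsPrimitiveRoot ζ n) {S : Type*} [CommRing S] {c : S} (hc : (cyclotomic n S).IsRoot c) :
    ∃ φ : 𝓞 K →+* S, φ hζ.toInteger = c := by
  have hmin : minpoly ℤ hζ.integralPowerBasis.gen = cyclotomic n ℤ := by
    rw [hζ.integralPowerBasis_gen, cyclotomic_eq_minpoly hζ (NeZero.pos n),
      ← RingOfIntegers.minpoly_coe]
    rfl
  have hroot : aeval c (minpoly ℤ hζ.integralPowerBasis.gen) = 0 := by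
    rw [hmin, aeval_def, ← eval_map, map_cyclotomic]
    exact hc
  refine ⟨(hζ.integralPowerBasis.lift c hroot : 𝓞 K →+* S), ?_⟩
  simpa [hζ.integralPowerBasis_gen] using hζ.integralPowerBasis.lift_gen c hroot

theorem ncard_primesOver_mul_orderOf_eq_totient {n : ℕ} [NeZero n] [IsCyclotomicExtension {n} ℚ K]
    {p : ℕ} [hp : Fact p.Prime] (hpn : ¬p ∣ n) :
    ((Ideal.span {(p : ℤ)}).primesOver (𝓞 K)).ncard * orderOf (p : ZMod n) = n.totient := by
  have := IsCyclotomicExtension.isGalois {n} ℚ K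
  have hprime := Nat.prime_iff_prime_int.1 hp.out
  have : (Ideal.span {(p : ℤ)}).IsPrime := (Ideal.span_singleton_prime hprime.ne_zero).2 hprime
  have h := Ideal.ncard_primesOver_mul_ramificationIdxIn_mul_inertiaDegIn
    (Ideal.span {(p : ℤ)}) (𝓞 K) (K ≃ₐ[ℚ] K)
  rwa [IsCyclotomicExtension.Rat.inertiaDegIn_eq_of_not_dvd p K (m := n) hpn,
    IsCyclotomicExtension.Rat.ramificationIdxIn_eq_of_not_dvd p K (m := n) hpn, one_mul,
    IsGalois.card_aut_eq_finrank,
    IsCyclotomicExtension.finrank (n := n) K (cyclotomic.irreducible_rat (NeZero.pos n))] at h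

theorem encard_isMaximal_natCast_mem_le {n : ℕ} [NeZero n] [IsCyclotomicExtension {n} ℚ K] {p : ℕ}
    [Fact p.Prime] (hpn : ¬p ∣ n) :
    {P : Ideal (𝓞 K) | P.IsMaximal ∧ (p : 𝓞 K) ∈ P}.encard ≤
      (n.totient / orderOf (p : ZMod n) : ℕ) := by
  have hcard := ncard_primesOver_mul_orderOf_eq_totient (K := K) hpn
  have hpos : 0 < n.totient := Nat.totient_pos.2 (NeZero.pos n)
  have hord : 0 < orderOf (p : ZMod n) := Nat.pos_of_ne_zero fun h => by simp_all
  have hfin : ((Ideal.span {(p : ℤ)}).primesOver (𝓞 K)).Finite :=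
    Set.finite_of_ncard_ne_zero fun h => by simp_all
  rw [← hcard, Nat.mul_div_cancel _ hord, hfin.cast_ncard_eq]
  exact Set.encard_le_encard fun P hP => mem_primesOver_of_natCast_mem hP.1.isPrime hP.2

-- `CyclotomicField n ℚ` carries a `ℚ`-algebra structure of its own, equal only propositionally to
-- the one every field of characteristic zero has.
theorem isCyclotomicExtension_toRatAlgebra (n : ℕ) [NeZero n] :
    @IsCyclotomicExtension {n} ℚ (CyclotomicField n ℚ) _ _ DivisionRing.toRatAlgebra := by
  rw [Subsingleton.elim DivisionRing.toRatAlgebra (CyclotomicField.algebra n ℚ)]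
  exact CyclotomicField.isCyclotomicExtension n ℚ

end CyclotomicIntegers

section CyclotomicSeven

theorem orderOf_two_zmod_seven : orderOf ((2 : ℕ) : ZMod 7) = 3 :=
  (orderOf_eq_iff (by norm_num)).2 (by decide)

theorem orderOf_three_zmod_seven : orderOf ((3 : ℕ) : ZMod 7) = 6 :=
  (orderOf_eq_iff (by norm_num)).2 (by decide)

theorem orderOf_five_zmod_seven : orderOf ((5 : ℕ) : ZMod 7) = 6 :=
  (orderOf_eq_iff (by norm_num)).2 (by decide)

variable (K : Type*) [Field K] [NumberField K] [IsCyclotomicExtension {7} ℚ K]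

theorem finrank_cyclotomic_seven : Module.finrank ℚ K = 6 := by
  rw [IsCyclotomicExtension.finrank (n := 7) K (cyclotomic.irreducible_rat (by norm_num)),
    Nat.totient_prime Fact.out]

theorem nrComplexPlaces_cyclotomic_seven : InfinitePlace.nrComplexPlaces K = 3 := by
  rw [IsCyclotomicExtension.Rat.nrComplexPlaces_eq_totient_div_two 7, Nat.totient_prime Fact.out]

theorem rank_units_cyclotomic_seven : Units.rank K = 2 := by
  have hfinrank := InfinitePlace.card_add_two_mul_card_eq_rank K
  have hcard := InfinitePlace.card_eq_nrRealPlaces_add_nrComplexPlaces K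
  rw [finrank_cyclotomic_seven, nrComplexPlaces_cyclotomic_seven] at hfinrank
  rw [nrComplexPlaces_cyclotomic_seven] at hcard
  rw [Units.rank]
  lia

theorem minkowskiBound_cyclotomic_seven_lt :
    (4 / Real.pi) ^ InfinitePlace.nrComplexPlaces K * ((Module.finrank ℚ K).factorial /
      (Module.finrank ℚ K) ^ (Module.finrank ℚ K) * √|(discr K : ℝ)|) < 5 := by
  rw [IsCyclotomicExtension.Rat.discr_prime 7 K, finrank_cyclotomic_seven,
    nrComplexPlaces_cyclotomic_seven]
  have hpi : (4 / Real.pi) ^ 3 < (4 / 3) ^ 3 := by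
    have := Real.pi_gt_three
    gcongr
  have hsqrt : √|(((-1 : ℤ) ^ ((7 - 1) / 2) * (7 : ℕ) ^ (7 - 2) : ℤ) : ℝ)| < 130 := by
    rw [Real.sqrt_lt' (by norm_num)]
    norm_num
  have hfact : ((6).factorial : ℝ) / (6 : ℕ) ^ 6 = 5 / 324 := by norm_num [Nat.factorial]
  rw [hfact]
  calc (4 / Real.pi) ^ 3 * (5 / 324 * √|(((-1 : ℤ) ^ ((7 - 1) / 2) * (7 : ℕ) ^ (7 - 2) : ℤ) : ℝ)|)
      ≤ (4 / 3) ^ 3 * (5 / 324 * 130) := by gcongr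
    _ < 5 := by norm_num

theorem isPrincipalIdealRing_cyclotomic_seven : IsPrincipalIdealRing (𝓞 K) := by
  refine RingOfIntegers.isPrincipalIdealRing_of_isPrincipal_of_pow_le_of_mem_primesOver_of_mem_Icc
    fun p hp hprime P hP hle => ?_
  have hfloor := Nat.le_of_lt_succ
    ((Nat.floor_lt (by positivity)).2 (minkowskiBound_cyclotomic_seven_lt K))
  have hp4 : p ≤ 4 := (Finset.mem_Icc.1 hp).2.trans hfloor
  have := Fact.mk hprime
  have := hP.1
  have := hP.2
  have hp7 : ¬p ∣ 7 := fun h => by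
    have := (Nat.prime_dvd_prime_iff_eq hprime Fact.out).1 h
    lia
  rw [IsCyclotomicExtension.Rat.inertiaDeg_eq_of_not_dvd (m := 7) p K P hp7] at hle
  replace hle := hle.trans hfloor
  have hp2 : 2 ≤ p := hprime.two_le
  interval_cases p
  · rw [orderOf_two_zmod_seven] at hle
    lia
  · rw [orderOf_three_zmod_seven] at hle
    lia
  · exact absurd hprime (by norm_num)

theorem encard_isMaximal_thirty_mem_le :
    {P : Ideal (𝓞 K) | P.IsMaximal ∧ (30 : 𝓞 K) ∈ P}.encard ≤ 4 := by
  have htotient : Nat.totient 7 = 6 := Nat.totient_prime Fact.out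
  have := Fact.mk Nat.prime_five
  have h₂ := encard_isMaximal_natCast_mem_le (K := K) (n := 7) (p := 2) (by norm_num)
  have h₃ := encard_isMaximal_natCast_mem_le (K := K) (n := 7) (p := 3) (by norm_num)
  have h₅ := encard_isMaximal_natCast_mem_le (K := K) (n := 7) (p := 5) (by norm_num)
  rw [htotient, orderOf_two_zmod_seven] at h₂
  rw [htotient, orderOf_three_zmod_seven] at h₃
  rw [htotient, orderOf_five_zmod_seven] at h₅
  calc {P : Ideal (𝓞 K) | P.IsMaximal ∧ (30 : 𝓞 K) ∈ P}.encard
      ≤ ({P : Ideal (𝓞 K) | P.IsMaximal ∧ ((2 : ℕ) : 𝓞 K) ∈ P} ∪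
          ({P : Ideal (𝓞 K) | P.IsMaximal ∧ ((3 : ℕ) : 𝓞 K) ∈ P} ∪
            {P : Ideal (𝓞 K) | P.IsMaximal ∧ ((5 : ℕ) : 𝓞 K) ∈ P})).encard := by
        refine Set.encard_le_encard fun P ⟨hP, h⟩ => ?_
        rw [show (30 : 𝓞 K) = (2 : ℕ) * ((3 : ℕ) * (5 : ℕ)) by norm_num,
          hP.isPrime.mul_mem_iff_mem_or_mem, hP.isPrime.mul_mem_iff_mem_or_mem] at h
        exact h.imp (⟨hP, ·⟩) (Or.imp (⟨hP, ·⟩) (⟨hP, ·⟩))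
    _ ≤ 2 + (1 + 1) := (Set.encard_union_le _ _).trans
        (add_le_add h₂ ((Set.encard_union_le _ _).trans (add_le_add h₃ h₅)))
    _ = 4 := by norm_num

theorem hasKummerProperty_cyclotomic_seven : HasKummerProperty 7 (𝓞 K) := by
  have hζ := isTotallyRamifiedRoot_toInteger (IsCyclotomicExtension.zeta_spec 7 ℚ K)
  refine hζ.hasKummerProperty_seven ?_
  simpa [rank_units_cyclotomic_seven] using index_range_powMonoidHom_units_dvd K 7

end CyclotomicSeven

section LinearFactors

variable {R : Type*} [CommRing R] {ι : Type*} {s : Finset ι}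

theorem isCoprime_of_isUnit_right {a b : R} (hb : IsUnit b) : IsCoprime a b :=
  isCoprime_one_right.of_isCoprime_of_dvd_right (isUnit_iff_dvd_one.1 hb)

theorem isCoprime_sub_mul_left {m n : R} (h : IsCoprime n m) (l : R) : IsCoprime (n - l * m) m := by
  simpa [sub_eq_add_neg] using h.add_mul_right_left (-l)

theorem pairwise_isCoprime_sub_mul {m n : R} {l : ι → R} (hmn : IsCoprime n m)
    (hl : ∀ i ∈ s, ∀ j ∈ s, i ≠ j → IsCoprime (n - l i * m) (l i - l j)) :
    (s : Set ι).Pairwise fun i j => IsCoprime (n - l i * m) (n - l j * m) := by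
  intro i hi j hj hij
  have hsub : n - l j * m = (l i - l j) * m + (n - l i * m) * 1 := by ring
  rw [hsub]
  exact ((hl i hi j hj hij).mul_right (isCoprime_sub_mul_left hmn (l i))).add_mul_left_right 1

variable [IsDomain R] [IsPrincipalIdealRing R]

-- Dividing the factor `k - u i * m` by `u i` makes the coefficients of `m` agree, so that `m`
-- cancels in the difference of two factors.
theorem isUnitFermatRoot_of_prod_sub_mul_eq {p : ℕ} {m k t d w M : R} {N : ℕ} {u : ι → Rˣ}
    (hp : p ≠ 0) (hu : ∀ i ∈ s, ∀ j ∈ s, i ≠ j → IsUnit ((u i : R) - u j)) (hkm : IsCoprime k m)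
    {ε : Rˣ} (h : ∏ i ∈ s, (k - u i * m) = ε * t ^ p) (hk : k = d * w ^ p) (hd : d ∣ M ^ N)
    {i j : ι} (hi : i ∈ s) (hj : j ∈ s) (hij : i ≠ j) : IsUnitFermatRoot p M w := by
  have hcop := pairwise_isCoprime_sub_mul (l := fun i => (u i : R)) hkm fun i hi j hj hij =>
    isCoprime_of_isUnit_right (hu i hi j hj hij)
  have hfactor {i : ι} (hi : i ∈ s) :=
    exists_eq_unit_mul_pow_of_prod_eq hcop ε.ne_zero h hi (isCoprime_of_isUnit_right ε.isUnit)
  obtain ⟨εi, x, hx⟩ := hfactor hi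
  obtain ⟨εj, y, hy⟩ := hfactor hj
  obtain ⟨δ, hδ⟩ := hu j hj i hi hij.symm
  refine ⟨(u i)⁻¹ * εi, (u j)⁻¹ * εj, x, y, ((u i)⁻¹ * (u j)⁻¹ * δ : Rˣ) * d, N, ?_,
    Units.mul_left_dvd.2 hd, ?_⟩
  · have hxy := hcop hi hj hij
    simp only [hx, hy] at hxy
    exact (hxy.of_isCoprime_of_dvd_left ((dvd_pow_self x hp).mul_left _)).of_isCoprime_of_dvd_right
      ((dvd_pow_self y hp).mul_left _)
  · push_cast
    rw [hδ]
    linear_combination -((u i)⁻¹ : Rˣ) * hx + ((u j)⁻¹ : Rˣ) * hy +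
      ((u i)⁻¹ : Rˣ) * ((u j)⁻¹ : Rˣ) * ((u j : R) - u i) * hk +
      m * ((u j).inv_mul - (u i).inv_mul) -
      k * (((u i)⁻¹ : Rˣ) * (u j).inv_mul - ((u j)⁻¹ : Rˣ) * (u i).inv_mul)

end LinearFactors

section OneSubPowNorm

variable {R : Type*} [CommRing R] {p : ℕ} {ζ : R}

/-- The relative norm `(1 - ζ ^ i) * (1 - ζ ^ (-i))` of `1 - ζ ^ i` to the maximal real subfield,
for a `p`-th root of unity `ζ` and `i ≤ p`. -/
def oneSubPowNorm (p : ℕ) (ζ : R) (i : ℕ) : R :=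
  (1 - ζ ^ i) * (1 - ζ ^ (p - i))

theorem oneSubPowNorm_sub (ζ : R) {i j : ℕ} (hij : i ≤ j) (hjp : i + j ≤ p) :
    oneSubPowNorm p ζ j - oneSubPowNorm p ζ i =
      ζ ^ i * ((1 - ζ ^ (j - i)) * (1 - ζ ^ (p - (i + j)))) := by
  obtain ⟨a, rfl⟩ := Nat.exists_eq_add_of_le hij
  obtain ⟨b, rfl⟩ := Nat.exists_eq_add_of_le hjp
  have hj : i + (i + a) + b - (i + a) = i + b := by lia
  have hi : i + (i + a) + b - i = i + a + b := by lia
  rw [oneSubPowNorm, oneSubPowNorm, hi, hj, Nat.add_sub_cancel_left, Nat.add_sub_cancel_left]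
  ring

variable [IsDomain R] [hp : Fact p.Prime]

theorem associated_sub_one_one_sub_pow (hζ : IsPrimitiveRoot ζ p) {i : ℕ} (hi : i ≠ 0)
    (hip : i < p) : Associated (ζ - 1) (1 - ζ ^ i) := by
  rw [← neg_sub (ζ ^ i) 1, Associated.neg_right_iff]
  exact hζ.associated_sub_one_pow_sub_one_of_coprime (Nat.coprime_of_lt_prime hi hip hp.out).symm

theorem associated_oneSubPowNorm (hζ : IsPrimitiveRoot ζ p) {i : ℕ} (hi : i ≠ 0) (hip : i < p) :
    Associated ((ζ - 1) ^ 2) (oneSubPowNorm p ζ i) := by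
  rw [sq, oneSubPowNorm]
  exact (associated_sub_one_one_sub_pow hζ hi hip).mul_mul
    (associated_sub_one_one_sub_pow hζ (by lia) (by lia))

theorem associated_oneSubPowNorm_sub (hζ : IsPrimitiveRoot ζ p) {i j : ℕ} (hij : i < j)
    (hjp : i + j < p) :
    Associated ((ζ - 1) ^ 2) (oneSubPowNorm p ζ j - oneSubPowNorm p ζ i) := by
  rw [oneSubPowNorm_sub ζ hij.le hjp.le, sq]
  refine .trans ?_ (associated_unit_mul_right _ _ ((hζ.isUnit hp.out.ne_zero).pow i))
  exact (associated_sub_one_one_sub_pow hζ (by lia) (by lia)).mul_mul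
    (associated_sub_one_one_sub_pow hζ (by lia) (by lia))

theorem associated_oneSubPowNorm_sub_of_ne (hζ : IsPrimitiveRoot ζ p) {n i j : ℕ} (hn : 2 * n < p)
    (hi : i ∈ Finset.Icc 1 n) (hj : j ∈ Finset.Icc 1 n) (hij : i ≠ j) :
    Associated ((ζ - 1) ^ 2) (oneSubPowNorm p ζ i - oneSubPowNorm p ζ j) := by
  rw [Finset.mem_Icc] at hi hj
  rcases hij.lt_or_gt with h | h
  · rw [← neg_sub (oneSubPowNorm p ζ j), Associated.neg_right_iff]
    exact associated_oneSubPowNorm_sub hζ h (by lia)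
  · exact associated_oneSubPowNorm_sub hζ h (by lia)

theorem HasKummerProperty.exists_eq_pow (hK : HasKummerProperty p R)
    (hζ : IsTotallyRamifiedRoot p ζ) {u : Rˣ} {x : R} (hx : ¬ζ - 1 ∣ x)
    (h : u * x ^ p ∈ intAddSpan (p : R)) : ∃ w : R, u * x ^ p = w ^ p := by
  obtain ⟨v, hv⟩ := hK u (hζ.mem_intAddSpan_of_mul_pow_mem hx h)
  exact ⟨v * x, by rw [hv, Units.val_pow_eq_pow_val, mul_pow]⟩

theorem IsTotallyRamifiedRoot.not_sub_one_dvd_sub_oneSubPowNorm_mul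
    (hζ : IsTotallyRamifiedRoot p ζ) {n : R} (hn : ¬ζ - 1 ∣ n) (m : R) {i : ℕ} (hi : i ≠ 0)
    (hip : i < p) :
    ¬ζ - 1 ∣ n - oneSubPowNorm p ζ i * m := fun h => hn <|
  (dvd_sub_left (((dvd_pow_self _ two_ne_zero).trans
    (associated_oneSubPowNorm hζ.isPrimitiveRoot hi hip).dvd).mul_right m)).1 h

end OneSubPowNorm

section CubicForm

variable {R : Type*} [CommRing R]

/-- The form with `x ^ 7 + y ^ 7 = (x + y) * cubicForm (x * y) ((x + y) ^ 2)`; it is the norm of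
`n - (1 - ζ) * (1 - ζ⁻¹) * m` from the real cubic subfield of the seventh cyclotomic field. -/
def cubicForm (m n : R) : R :=
  n ^ 3 - 7 * n ^ 2 * m + 14 * n * m ^ 2 - 7 * m ^ 3

theorem intCast_cubicForm (m n : ℤ) : ((cubicForm m n : ℤ) : R) = cubicForm (m : R) n := by
  simp [cubicForm]

variable [IsDomain R] {ζ : R}

theorem cubicForm_eq_prod (hζ : IsPrimitiveRoot ζ 7) (m n : R) :
    cubicForm m n = ∏ i ∈ Finset.Icc 1 3, (n - oneSubPowNorm 7 ζ i * m) := by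
  have hsum := geom_sum_seven_eq_zero hζ
  have hIcc : Finset.Icc 1 3 = {1, 2, 3} := by decide
  simp only [hIcc, oneSubPowNorm, cubicForm, Finset.prod_insert, Finset.prod_singleton,
    Finset.mem_insert, Finset.mem_singleton, OfNat.one_ne_ofNat, Nat.reduceEqDiff, or_self,
    not_false_eq_true, Nat.reduceSub]
  grind

variable [IsPrincipalIdealRing R]

theorem isUnitFermatRoot_of_cubicForm_eq (hζ : IsTotallyRamifiedRoot 7 ζ) {m k t d w M : R} {N : ℕ}
    (hkm : IsCoprime k m) (h : cubicForm m ((ζ - 1) ^ 2 * k) = 7 * t ^ 7) (hk : k = d * w ^ 7)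
    (hd : d ∣ M ^ N) : IsUnitFermatRoot 7 M w := by
  have hL := hζ.prime_sub_one.ne_zero
  obtain ⟨ε, hε⟩ := hζ.associated_sub_one_pow
  have hassoc (i : Finset.Icc 1 3) : Associated ((ζ - 1) ^ 2) (oneSubPowNorm 7 ζ i) :=
    have hi := Finset.mem_Icc.1 i.2
    associated_oneSubPowNorm hζ.isPrimitiveRoot (by lia) (by lia)
  choose u hu using hassoc
  refine isUnitFermatRoot_of_prod_sub_mul_eq (s := Finset.univ) (u := u) (ε := ε) (t := t)
    (by norm_num) (fun i _ j _ hij => ?_) hkm ?_ hk hd (i := ⟨1, by simp⟩) (j := ⟨2, by simp⟩)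
    (Finset.mem_univ _) (Finset.mem_univ _) (by simp)
  · obtain ⟨v, hv⟩ := associated_oneSubPowNorm_sub_of_ne hζ.isPrimitiveRoot
      (by norm_num) i.2 j.2 (Subtype.coe_ne_coe.2 hij)
    rw [← hu, ← hu, ← mul_sub] at hv
    exact mul_left_cancel₀ (pow_ne_zero 2 hL) hv ▸ v.isUnit
  · refine mul_left_cancel₀ (pow_ne_zero 6 hL) ?_
    have hfactor (i : Finset.Icc 1 3) :
        (ζ - 1) ^ 2 * k - oneSubPowNorm 7 ζ i * m = (ζ - 1) ^ 2 * (k - u i * m) := by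
      rw [← hu]
      ring
    rw [cubicForm_eq_prod hζ.isPrimitiveRoot, ← Finset.prod_coe_sort,
      Finset.prod_congr rfl fun i _ => hfactor i, Finset.prod_mul_distrib] at h
    have h7 : (7 : R) = (ζ - 1) ^ 6 * ε := by simpa using hε.symm
    simpa only [Finset.prod_const, Finset.card_univ, Fintype.card_coe, Nat.card_Icc, ← pow_mul, h7,
      mul_assoc] using h

theorem IsTotallyRamifiedRoot.cubicForm_ne_seven_mul_pow (hζ : IsTotallyRamifiedRoot 7 ζ)
    (hK : HasKummerProperty 7 R) {M : R} (hM : ¬ζ - 1 ∣ M)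
    (hcard : {P : Ideal R | P.IsMaximal ∧ M ∈ P}.encard ≤ 4) {m n e s : R} {N : ℕ} (hn0 : n ≠ 0)
    (hmn : IsCoprime m n) (hn7 : 7 ∣ n) (hns : 49 * n = e * s ^ 14) (he : e ∣ M ^ N) (t : R) :
    cubicForm m n ≠ 7 * t ^ 7 := by
  intro h
  have hL := hζ.prime_sub_one
  have hLe : ¬ζ - 1 ∣ e := fun hdvd => hM (hL.dvd_of_dvd_pow (hdvd.trans he))
  obtain ⟨ε, hε⟩ := hζ.associated_sub_one_pow
  have h7 : (7 : R) = (ζ - 1) ^ 6 * ε := by simpa using hε.symm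
  obtain ⟨n', rfl⟩ := hn7
  have hLs : ζ - 1 ∣ s := by
    have hdvd : ζ - 1 ∣ e * s ^ 14 :=
      Dvd.intro ((ζ - 1) ^ 5 * ε * 49 * n') (by linear_combination hns - 49 * n' * h7)
    exact hL.dvd_of_dvd_pow ((hL.dvd_or_dvd hdvd).resolve_left hLe)
  obtain ⟨s', rfl⟩ := hLs
  set k := (ζ - 1) ^ 4 * ε * n' with hk
  have hnk : 7 * n' = (ζ - 1) ^ 2 * k := by linear_combination n' * h7
  have hks : (ε : R) ^ 2 * k = e * (s' ^ 2) ^ 7 := by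
    refine mul_left_cancel₀ (pow_ne_zero 14 hL.ne_zero) ?_
    linear_combination hns - 49 * hnk - (7 + (ζ - 1) ^ 6 * ε) * (ζ - 1) ^ 2 * k * h7
  have hLw : ζ - 1 ∣ s' ^ 2 := by
    have hdvd : ζ - 1 ∣ e * (s' ^ 2) ^ 7 :=
      Dvd.intro ((ζ - 1) ^ 3 * ε ^ 3 * n') (by linear_combination hks - ε ^ 2 * hk)
    exact hL.dvd_of_dvd_pow ((hL.dvd_or_dvd hdvd).resolve_left hLe)
  refine not_isUnitFermatRoot_of_dvd hζ hK hM ?_ (fun hw => hn0 ?_) hLw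
    (isUnitFermatRoot_of_cubicForm_eq hζ ?_ (hnk ▸ h) (d := (ε⁻¹ ^ 2 : Rˣ) * e) ?_
      (Units.mul_left_dvd.2 he))
  · calc {P : Ideal R | P.IsMaximal ∧ M ∈ P}.encard + 3 ≤ 4 + 3 := by gcongr
      _ = (7 : ℕ) := by norm_num
  · have hk0 : k = 0 := by simpa [hw] using hks
    rw [hnk, hk0, mul_zero]
  · rw [hnk] at hmn
    exact hmn.of_mul_right_right.symm
  · rw [mul_assoc, ← hks, Units.val_pow_eq_pow_val, ← mul_assoc, ← mul_pow, ε.inv_mul, one_pow,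
      one_mul]

theorem IsTotallyRamifiedRoot.exists_mul_sub_eq_pow_of_cubicForm_eq
    (hζ : IsTotallyRamifiedRoot 7 ζ) (hK : HasKummerProperty 7 R) {m n t : R}
    (hmn : IsCoprime m n) (hn : ¬ζ - 1 ∣ n) (h : cubicForm m n = t ^ 7) {κ : R} (hκ : IsUnit κ)
    {i : ℕ} (hi : i ∈ Finset.Icc 1 3)
    (hmem : κ * (n - oneSubPowNorm 7 ζ i * m) ∈ intAddSpan (7 : R)) :
    ∃ w : R, κ * (n - oneSubPowNorm 7 ζ i * m) = w ^ 7 := by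
  have hnot {i : ℕ} (hi : i ∈ Finset.Icc 1 3) : ¬ζ - 1 ∣ n - oneSubPowNorm 7 ζ i * m :=
    have hi := Finset.mem_Icc.1 hi
    hζ.not_sub_one_dvd_sub_oneSubPowNorm_mul hn m (by lia) (by lia)
  have hcop := pairwise_isCoprime_sub_mul (s := Finset.Icc 1 3) (l := oneSubPowNorm 7 ζ) hmn.symm
    fun i hi j hj hij =>
      (((hζ.prime_sub_one.irreducible.coprime_iff_not_dvd.2 (hnot hi)).symm.pow_right
        (n := 2)).of_isCoprime_of_dvd_right
          (associated_oneSubPowNorm_sub_of_ne hζ.isPrimitiveRoot (by norm_num) hi hj hij).symm.dvd)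
  obtain ⟨v, x, hx⟩ := exists_eq_unit_mul_pow_of_prod_eq hcop one_ne_zero
    (by rw [← cubicForm_eq_prod hζ.isPrimitiveRoot, h, one_mul]) hi isCoprime_one_right
  have hLx : ¬ζ - 1 ∣ x := fun hdvd =>
    hnot hi (hx ▸ (hdvd.trans (dvd_pow_self x (by norm_num))).mul_left _)
  obtain ⟨u, rfl⟩ := hκ
  rw [hx, ← mul_assoc, ← Units.val_mul] at hmem ⊢
  exact hK.exists_eq_pow hζ hLx hmem

end CubicForm

theorem cubicForm_ne_seven_mul_pow {m n e s : ℤ} {N : ℕ} (hn0 : n ≠ 0) (hmn : IsCoprime m n)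
    (hn7 : 7 ∣ n) (hns : 49 * n = e * s ^ 14) (he : e ∣ 30 ^ N) (t : ℤ) :
    cubicForm m n ≠ 7 * t ^ 7 := by
  intro h
  let K := CyclotomicField 7 ℚ
  have := isCyclotomicExtension_toRatAlgebra 7
  have := isPrincipalIdealRing_cyclotomic_seven K
  have hζ := isTotallyRamifiedRoot_toInteger (IsCyclotomicExtension.zeta_spec 7 ℚ K)
  have hcast {a b : ℤ} (hab : a ∣ b) : ((a : ℤ) : 𝓞 K) ∣ b := Int.cast_dvd_cast _ _ hab
  refine hζ.cubicForm_ne_seven_mul_pow (hasKummerProperty_cyclotomic_seven K) (M := 30) ?_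
    (encard_isMaximal_thirty_mem_le K) (m := m) (n := n) (e := e) (s := s) (N := N)
    ?_ ?_ ?_ ?_ ?_ t ?_
  · intro hdvd
    have := hζ.dvd_of_sub_one_dvd_intCast (n := 30) (by exact_mod_cast hdvd)
    norm_num at this
  · exact_mod_cast hn0
  · exact_mod_cast hmn.map (Int.castRingHom (𝓞 K))
  · exact_mod_cast hcast hn7
  · exact_mod_cast congrArg (Int.cast : ℤ → 𝓞 K) hns
  · exact_mod_cast hcast he
  · rw [← intCast_cubicForm, h]
    push_cast
    rfl

section ModFortyThree

variable {R : Type*} [CommRing R] {ζ : R}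

theorem map_oneSubPowNorm {S : Type*} [CommRing S] (φ : R →+* S) (p : ℕ) (ζ : R) (i : ℕ) :
    φ (oneSubPowNorm p ζ i) = oneSubPowNorm p (φ ζ) i := by
  simp [oneSubPowNorm]

theorem mul_sub_oneSubPowNorm_mul_mem_intAddSpan {κ : R} {α m n : ℤ}
    (hκ : κ * (α - oneSubPowNorm 7 ζ 1) = 1) (hmod : n ≡ α * m [ZMOD 7]) :
    κ * (n - oneSubPowNorm 7 ζ 1 * m) ∈ intAddSpan (7 : R) := by
  obtain ⟨q, hq⟩ := hmod.symm.dvd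
  have hq' : (n : R) - α * m = 7 * q := mod_cast congrArg (Int.cast : ℤ → R) hq
  exact mem_intAddSpan.2 ⟨m, κ * q, by linear_combination κ * hq' + m * hκ⟩

variable [IsDomain R]

theorem sq_mul_four_sub_oneSubPowNorm (hζ : IsPrimitiveRoot ζ 7) :
    ((ζ + ζ ^ 6) * (ζ ^ 2 + ζ ^ 5)) ^ 2 * (4 - oneSubPowNorm 7 ζ 1) = 1 := by
  have hsum := geom_sum_seven_eq_zero hζ
  simp only [oneSubPowNorm, Nat.reduceSub]
  grind

theorem neg_mul_three_sub_oneSubPowNorm (hζ : IsPrimitiveRoot ζ 7) :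
    -(ζ ^ 2 + ζ ^ 5) * (3 - oneSubPowNorm 7 ζ 1) = 1 := by
  have hsum := geom_sum_seven_eq_zero hζ
  simp only [oneSubPowNorm, Nat.reduceSub]
  grind

theorem pow_seven_pow_seven_zmod : ∀ x : ZMod 43, (x ^ 7) ^ 7 = x ^ 7 := by decide

variable {K : Type*} [Field K] [NumberField K] [IsCyclotomicExtension {7} ℚ K]

-- Reducing modulo the six primes over 43, where the nonzero seventh powers are the sixth roots of
-- unity.
theorem cubicForm_ne_pow_of_mod_forty_three {ζ : K} (hζ : IsPrimitiveRoot ζ 7) {k : ℤ[X]} {α f : ℤ}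
    (hk : aeval hζ.toInteger k * (α - oneSubPowNorm 7 hζ.toInteger 1) = 1)
    (hf : ∀ σ μ : ZMod 43, σ ^ 7 = σ → (∀ c : ZMod 43, c ^ 7 = 1 → c ≠ 1 →
      (aeval c k * (f * σ ^ 2 - oneSubPowNorm 7 c 1 * μ)) ^ 7 =
        aeval c k * (f * σ ^ 2 - oneSubPowNorm 7 c 1 * μ)) → σ = 0 ∧ μ = 0)
    {m n s : ℤ} (hmn : IsCoprime m n) (hn7 : ¬7 ∣ n) (hmod : n ≡ α * m [ZMOD 7])
    (hns : n = f * s ^ 14) (t : ℤ) : cubicForm m n ≠ t ^ 7 := by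
  intro h
  have := isPrincipalIdealRing_cyclotomic_seven K
  have hζ' := isTotallyRamifiedRoot_toInteger hζ
  obtain ⟨w, hw⟩ := hζ'.exists_mul_sub_eq_pow_of_cubicForm_eq (m := m) (n := n) (t := t)
    (hasKummerProperty_cyclotomic_seven K) (by exact_mod_cast hmn.map (Int.castRingHom (𝓞 K)))
    (fun hdvd => hn7 (hζ'.dvd_of_sub_one_dvd_intCast hdvd)) (by rw [← intCast_cubicForm, h]; simp)
    (.of_mul_eq_one _ hk) (i := 1) (by simp) (mul_sub_oneSubPowNorm_mul_mem_intAddSpan hk hmod)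
  have hns' : (n : ZMod 43) = f * ((s : ZMod 43) ^ 7) ^ 2 := by rw [hns]; push_cast; ring
  obtain ⟨hσ, hμ⟩ := hf (s ^ 7) m (pow_seven_pow_seven_zmod _) fun c hc7 hc1 => by
    have : NeZero ((7 : ℕ) : ZMod 43) := ⟨by decide⟩
    have : Fact (Nat.Prime 43) := ⟨by norm_num⟩
    obtain ⟨φ, rfl⟩ := exists_ringHom_toInteger_eq hζ (isRoot_cyclotomic_iff.2
      (IsPrimitiveRoot.iff_orderOf.2 (orderOf_eq_prime hc7 hc1)))
    have haeval : φ (aeval hζ.toInteger k) = aeval (φ hζ.toInteger) k :=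
      (aeval_algHom_apply φ.toIntAlgHom _ k).symm
    have hφ := congrArg φ hw
    rw [map_mul, map_sub, map_mul, map_oneSubPowNorm, map_intCast, map_intCast, map_pow,
      haeval] at hφ
    rw [← hns', hφ, pow_seven_pow_seven_zmod]
  have h43 (a : ℤ) (ha : (a : ZMod 43) = 0) : (43 : ℤ) ∣ a :=
    (ZMod.intCast_zmod_eq_zero_iff_dvd a 43).1 ha
  exact absurd (hmn.isUnit_of_dvd' (h43 m hμ) (h43 n (by rw [hns', hσ]; ring))) (by decide)

theorem cubicForm_ne_pow_of_modEq_four_mul {m n s : ℤ} (hmn : IsCoprime m n) (hn7 : ¬7 ∣ n)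
    (hmod : n ≡ 4 * m [ZMOD 7]) (hns : n = 20 * (3 ^ 5 * 5 ^ 5) ^ 2 * s ^ 14) (t : ℤ) :
    cubicForm m n ≠ t ^ 7 := by
  have := isCyclotomicExtension_toRatAlgebra 7
  have hζ := IsCyclotomicExtension.zeta_spec 7 ℚ (CyclotomicField 7 ℚ)
  refine cubicForm_ne_pow_of_mod_forty_three hζ (k := ((X + X ^ 6) * (X ^ 2 + X ^ 5)) ^ 2) (α := 4)
    (by simpa using sq_mul_four_sub_oneSubPowNorm hζ.toInteger_isPrimitiveRoot) ?_ hmn hn7 hmod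
    hns t
  simp only [map_mul, map_add, map_pow, aeval_X]
  decide +kernel

theorem cubicForm_ne_pow_of_modEq_three_mul {m n s : ℤ} (hmn : IsCoprime m n) (hn7 : ¬7 ∣ n)
    (hmod : n ≡ 3 * m [ZMOD 7]) (hns : n = 20 * (2 ^ 4 * 3 ^ 5 * 5 ^ 5) ^ 2 * s ^ 14) (t : ℤ) :
    cubicForm m n ≠ t ^ 7 := by
  have := isCyclotomicExtension_toRatAlgebra 7
  have hζ := IsCyclotomicExtension.zeta_spec 7 ℚ (CyclotomicField 7 ℚ)
  refine cubicForm_ne_pow_of_mod_forty_three hζ (k := -(X ^ 2 + X ^ 5)) (α := 3)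
    (by simpa using neg_mul_three_sub_oneSubPowNorm hζ.toInteger_isPrimitiveRoot) ?_ hmn hn7 hmod
    hns t
  simp only [map_neg, map_add, map_pow, aeval_X]
  decide +kernel

end ModFortyThree

section SqrtNegFive

theorem exists_two_mul_abs_sub_mul_le_s11 {A : ℤ} (hA : 0 < A) (B : ℤ) :
    ∃ q : ℤ, 2 * |B - A * q| ≤ A := by
  obtain ⟨k, rfl⟩ := Int.eq_ofNat_of_zero_le hA.le
  refine ⟨(B - B.bmod k) / k, ?_⟩
  rw [Int.mul_ediv_cancel' Int.dvd_self_sub_bmod]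
  have hle := Int.le_bmod (x := B) (m := k) (by lia)
  have hlt := Int.bmod_lt (x := B) (m := k) (by lia)
  rw [sub_sub_cancel]
  rcases abs_cases (B.bmod k) with ⟨habs, -⟩ | ⟨habs, -⟩ <;> lia

-- Gauss reduction: the reduced forms of this discriminant are `x² + 5y²` and `2x² + 2xy + 3y²`.
theorem exists_form_eq_one_or_two {A B C : ℤ} (hA : 0 < A) (h : A * C - B ^ 2 = 5) :
    ∃ v : ℤ, (v = 1 ∨ v = 2) ∧ ∃ x y : ℤ, A * x ^ 2 + 2 * B * x * y + C * y ^ 2 = v := by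
  induction hN : A.toNat using Nat.strong_induction_on generalizing A B C with | _ N ih
  by_cases hA2 : A ≤ 2
  · exact ⟨A, by lia, 1, 0, by ring⟩
  obtain ⟨q, hq⟩ := exists_two_mul_abs_sub_mul_le_s11 hA B
  set b := B - A * q with hb
  set C' := C - 2 * q * B + q ^ 2 * A with hC'
  have hdisc : A * C' - b ^ 2 = 5 := by linear_combination h + A * hC' - (b + (B - A * q)) * hb
  have hC'0 : 0 < C' := by nlinarith [sq_nonneg b]
  have hC'A : C' < A := by nlinarith [sq_abs b, abs_nonneg b]
  obtain ⟨v, hv, x, y, hxy⟩ := ih C'.toNat (by lia) hC'0 (B := -b) (C := A)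
    (by linear_combination hdisc) rfl
  exact ⟨v, hv, -y - q * x, x, by rw [← hxy, hC', hb]; ring⟩

theorem isCoprime_im_of_dvd_norm {d w : ℤ} {α : ℤ√d} (hα : IsCoprime α.re α.im)
    (hw : w ∣ α.norm) : IsCoprime w α.im := by
  have hnorm : IsCoprime α.norm α.im := by
    have hα_norm : α.norm = α.re ^ 2 + α.im * (-d * α.im) := by rw [Zsqrtd.norm_def]; ring
    exact hα_norm ▸ hα.pow_left.add_mul_left_left _
  exact hnorm.of_isCoprime_of_dvd_left hw

-- The ideal `(α, w)` has norm `w`, and its norm form divided by `w` has discriminant `-20`.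
theorem exists_norm_eq_mul_of_dvd_norm {w : ℤ} {α : ℤ√(-5)} (hα : IsCoprime α.re α.im) (hw0 : 0 < w)
    (hw : w ∣ α.norm) :
    ∃ v : ℤ, (v = 1 ∨ v = 2) ∧ ∃ β γ : ℤ√(-5), (α * β + w * γ).norm = w * v := by
  obtain ⟨j, l, hjl⟩ := isCoprime_im_of_dvd_norm hα hw
  obtain ⟨q, hq⟩ := hw
  rw [Zsqrtd.norm_def] at hq
  obtain ⟨v, hv, x, y, hxy⟩ := exists_form_eq_one_or_two hw0 (B := α.re * l)
    (C := q * l ^ 2 + 5 * j * (1 + l * α.im))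
    (by linear_combination -l ^ 2 * hq + 5 * (1 + l * α.im) * hjl)
  refine ⟨v, hv, (l * y : ℤ), ⟨x, j * y⟩, ?_⟩
  have hval : α * (l * y : ℤ) + w * ⟨x, j * y⟩ = (⟨w * x + α.re * l * y, y⟩ : ℤ√(-5)) := by
    ext
    · simp only [Zsqrtd.re_add, Zsqrtd.re_mul, Zsqrtd.re_intCast, Zsqrtd.im_intCast]
      ring
    · simp only [Zsqrtd.im_add, Zsqrtd.im_mul, Zsqrtd.re_intCast, Zsqrtd.im_intCast]
      linear_combination y * hjl
  rw [hval, Zsqrtd.norm_def, ← hxy]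
  linear_combination y ^ 2 * (l ^ 2 * hq - 5 * (1 + l * α.im) * hjl)

theorem norm_ne_two_pow {n : ℕ} (hn : Odd n) (μ : ℤ√(-5)) : μ.norm ≠ 2 ^ n := by
  intro h
  obtain ⟨k, rfl⟩ := hn
  have h5 : ∀ c e : ZMod 5, (e = 1 ∨ e = -1) → c ^ 2 ≠ 2 * e := by decide
  refine h5 μ.re ((-1) ^ k) (neg_one_pow_eq_or _ k) ?_
  rw [Zsqrtd.norm_def] at h
  have hcast := congrArg (Int.cast : ℤ → ZMod 5) h
  push_cast at hcast
  have h50 : (5 : ZMod 5) = 0 := rfl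
  have h4 : (2 : ZMod 5) ^ 2 = -1 := rfl
  rw [pow_succ, pow_mul, h4, h50] at hcast
  linear_combination hcast

theorem eq_one_or_eq_neg_one_of_norm_eq_one_s11 {μ : ℤ√(-5)} (h : μ.norm = 1) : μ = 1 ∨ μ = -1 := by
  rw [Zsqrtd.norm_def] at h
  have him : μ.im = 0 := by nlinarith [sq_nonneg μ.re, sq_nonneg μ.im]
  have hre : μ.re ^ 2 = 1 := by rw [him] at h; linarith
  exact (sq_eq_one_iff.1 hre).imp (fun h => by ext <;> simp [h, him])
    fun h => by ext <;> simp [h, him]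

theorem exists_pow_eq_of_norm_eq_pow {n : ℕ} (hn : Odd n) {w : ℤ} {α : ℤ√(-5)}
    (hα : IsCoprime α.re α.im) (h : α.norm = w ^ n) : ∃ β : ℤ√(-5), β ^ n = α := by
  have hw : 0 < w := by
    have hα0 : α ≠ 0 := by
      rintro rfl
      exact not_isCoprime_zero_zero hα
    have hnorm0 : α.norm ≠ 0 := mt (Zsqrtd.norm_eq_zero_iff (by norm_num) α).1 hα0
    exact hn.pow_pos_iff.1 (h ▸ (Zsqrtd.norm_nonneg (by norm_num) α).lt_of_ne' hnorm0)
  obtain ⟨v, hv, β, γ, hβγ⟩ := exists_norm_eq_mul_of_dvd_norm hα hw (h ▸ dvd_pow_self w hn.pos.ne')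
  set δ := α * β + w * γ with hδ
  obtain ⟨μ, hμ⟩ : α ∣ δ ^ n := by
    have hαw : α ∣ (w * γ) ^ n := by
      have hnorm := Zsqrtd.norm_eq_mul_conj α
      rw [h, Int.cast_pow] at hnorm
      rw [mul_pow, hnorm]
      exact (Dvd.intro _ rfl).mul_right _
    have hsub : α ∣ δ ^ n - (w * γ) ^ n :=
      (Dvd.intro β (by rw [hδ]; ring)).trans (sub_dvd_pow_sub_pow δ (w * γ) n)
    exact (dvd_sub_left hαw).1 hsub
  have hnorm : μ.norm = v ^ n := by
    have hpow : (δ ^ n).norm = δ.norm ^ n := map_pow Zsqrtd.normMonoidHom δ n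
    refine mul_left_cancel₀ (pow_ne_zero n hw.ne') ?_
    rw [← mul_pow, ← hβγ, ← hpow, hμ, Zsqrtd.norm_mul, h]
  rcases hv with rfl | rfl
  · rw [one_pow] at hnorm
    rcases eq_one_or_eq_neg_one_of_norm_eq_one_s11 hnorm with rfl | rfl
    · exact ⟨δ, by rw [hμ, mul_one]⟩
    · exact ⟨-δ, by rw [hn.neg_pow, hμ, mul_neg_one, neg_neg]⟩
  · exact absurd hnorm (norm_ne_two_pow hn μ)

theorem pow_seven_eq_cubicForm (β : ℤ√(-5)) :
    β ^ 7 = ⟨β.re * cubicForm (β.re ^ 2 + 5 * β.im ^ 2) (4 * β.re ^ 2),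
      -(β.im * cubicForm (β.re ^ 2 + 5 * β.im ^ 2) (20 * β.im ^ 2))⟩ := by
  ext <;>
    simp only [pow_succ, pow_zero, one_mul, Zsqrtd.re_mul, Zsqrtd.im_mul, cubicForm] <;>
    ring

end SqrtNegFive

section Congruences

theorem isCoprime_of_prime_not_dvd {p a : ℤ} (hp : Prime p) (ha : ¬p ∣ a) : IsCoprime p a :=
  hp.irreducible.coprime_iff_not_dvd.2 ha

theorem exists_eq_mul_pow_and_eq_pow_of_isCoprime {n : ℕ} (hn : Odd n) {a b c y : ℤ} (hc0 : c ≠ 0)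
    (hab : IsCoprime a b) (hcb : IsCoprime c b) (h : a * b = c * y ^ n) :
    ∃ s t : ℤ, a = c * s ^ n ∧ b = t ^ n := by
  obtain ⟨a, rfl⟩ : c ∣ a := hcb.dvd_of_dvd_mul_right (Dvd.intro _ h.symm)
  have hpow : a * b = y ^ n := mul_left_cancel₀ hc0 (by rw [← h, mul_assoc])
  obtain ⟨s, rfl⟩ := Int.eq_pow_of_mul_eq_pow_odd_left hab.of_mul_left_right hn hpow
  obtain ⟨t, rfl⟩ := Int.eq_pow_of_mul_eq_pow_odd_right hab.of_mul_left_right hn hpow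
  exact ⟨s, t, rfl, rfl⟩

theorem isCoprime_prime_cubicForm {p : ℕ} (hp : p.Prime)
    (hzero : ∀ m n : ZMod p, cubicForm m n = 0 → m = 0 ∧ n = 0) {m n : ℤ} (hmn : IsCoprime m n) :
    IsCoprime (p : ℤ) (cubicForm m n) := by
  have hp' := Nat.prime_iff_prime_int.1 hp
  refine isCoprime_of_prime_not_dvd hp' fun hdvd => ?_
  rw [← ZMod.intCast_zmod_eq_zero_iff_dvd, intCast_cubicForm] at hdvd
  obtain ⟨hm, hn⟩ := hzero m n hdvd
  rw [ZMod.intCast_zmod_eq_zero_iff_dvd] at hm hn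
  exact hp'.not_isUnit (hmn.isUnit_of_dvd' hm hn)

-- The primes 2, 3 and 5 are inert in the cubic field.
theorem isCoprime_thirty_cubicForm {m n : ℤ} (hmn : IsCoprime m n) :
    IsCoprime 30 (cubicForm m n) := by
  have h2 := isCoprime_prime_cubicForm (p := 2) (by norm_num) (by decide) hmn
  have h3 := isCoprime_prime_cubicForm (p := 3) (by norm_num) (by decide) hmn
  have h5 := isCoprime_prime_cubicForm (p := 5) (by norm_num) (by decide) hmn
  simpa using (h2.mul_left h3).mul_left h5

theorem isCoprime_cubicForm_of_dvd_thirty_pow {m n c : ℤ} {N : ℕ} (hmn : IsCoprime m n)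
    (hc : c ∣ 30 ^ N) : IsCoprime c (cubicForm m n) :=
  (isCoprime_thirty_cubicForm hmn).pow_left.of_isCoprime_of_dvd_left hc

theorem not_seven_dvd_of_mul_cubicForm_eq {m z f c w : ℤ} {N : ℕ} (hz : z ≠ 0) (hf : f ∣ 30 ^ N)
    (hc : c ∣ 30 ^ N) (hm : IsCoprime m (f * z ^ 2)) (h : z * cubicForm m (f * z ^ 2) = c * w ^ 7) :
    ¬7 ∣ z := by
  intro hz7
  have h7 : Prime (7 : ℤ) := by norm_num
  have hne {a : ℤ} (ha : a ∣ 30 ^ N) : a ≠ 0 := ne_zero_of_dvd_ne_zero (by positivity) ha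
  have hzm : IsCoprime z m := ((IsCoprime.pow_right_iff two_pos).1 hm.of_mul_right_right).symm
  obtain ⟨G, hG, hzG⟩ : ∃ G, cubicForm m (f * z ^ 2) = 7 * G ∧ IsCoprime z G := by
    obtain ⟨k, hk⟩ := hz7
    refine ⟨-m ^ 3 + z * (f ^ 3 * z ^ 4 * k - f ^ 2 * z ^ 3 * m + 2 * f * z * m ^ 2), ?_,
      hzm.pow_right.neg_right.add_mul_left_right _⟩
    rw [cubicForm]
    linear_combination f ^ 3 * z ^ 5 * hk
  have h7G : IsCoprime 7 G := hzG.of_isCoprime_of_dvd_left hz7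
  have hcG : IsCoprime c G := by
    have := isCoprime_cubicForm_of_dvd_thirty_pow hm hc
    rw [hG] at this
    exact this.of_mul_right_right
  have h7w : 7 ∣ w := by
    have h7c : ¬(7 : ℤ) ∣ c := fun hdvd =>
      absurd (h7.dvd_of_dvd_pow (hdvd.trans hc)) (by norm_num)
    exact h7.dvd_of_dvd_pow ((h7.dvd_or_dvd (h ▸ hz7.mul_right _)).resolve_left h7c)
  obtain ⟨w, rfl⟩ := h7w
  obtain ⟨s, t, hs, rfl⟩ := exists_eq_mul_pow_and_eq_pow_of_isCoprime (n := 7) (by decide) (hne hc)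
    (h7G.mul_left hzG) hcG (y := 7 * w) (by rw [← h, hG]; ring)
  refine cubicForm_ne_seven_mul_pow (e := f * c ^ 2) (s := s) (N := N + N * 2)
    (mul_ne_zero (hne hf) (pow_ne_zero 2 hz)) hm
    ((hz7.trans (dvd_pow_self z two_ne_zero)).mul_left f) ?_ ?_ t hG
  · linear_combination f * (7 * z + c * s ^ 7) * hs
  · rw [pow_add, pow_mul]
    exact mul_dvd_mul hf (pow_dvd_pow_of_dvd hc 2)

theorem exists_eq_mul_pow_and_cubicForm_eq_pow {m z f c w : ℤ} {N : ℕ} (hc : c ∣ 30 ^ N)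
    (hm : IsCoprime m (f * z ^ 2)) (hz7 : ¬7 ∣ z) (h : z * cubicForm m (f * z ^ 2) = c * w ^ 7) :
    ∃ s t : ℤ, z = c * s ^ 7 ∧ cubicForm m (f * z ^ 2) = t ^ 7 := by
  have hzm : IsCoprime z m := ((IsCoprime.pow_right_iff two_pos).1 hm.of_mul_right_right).symm
  have hz : IsCoprime z (cubicForm m (f * z ^ 2)) := by
    have hsplit : cubicForm m (f * z ^ 2) = -(7 * m ^ 3) +
        z * (f ^ 3 * z ^ 5 - 7 * f ^ 2 * z ^ 3 * m + 14 * f * z * m ^ 2) := by rw [cubicForm]; ring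
    rw [hsplit]
    exact ((isCoprime_of_prime_not_dvd (by norm_num) hz7).symm.mul_right
      hzm.pow_right).neg_right.add_mul_left_right _
  exact exists_eq_mul_pow_and_eq_pow_of_isCoprime (by decide)
    (ne_zero_of_dvd_ne_zero (by positivity) hc) hz (isCoprime_cubicForm_of_dvd_thirty_pow hm hc) h

-- The seventh powers modulo 49 are the fixed points of `x ↦ x ^ 7`.
theorem exists_zmod_of_cubicForm_eq_pow {m z f c s t : ℤ} (hz7 : ¬7 ∣ z) (hs : z = c * s ^ 7)
    (h : cubicForm m (f * z ^ 2) = t ^ 7) :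
    ∃ σ : ZMod 49, σ ^ 7 = σ ∧ σ ≠ 0 ∧ (z : ZMod 49) = c * σ ∧
      cubicForm (m : ZMod 49) (f * z ^ 2) ^ 7 = cubicForm (m : ZMod 49) (f * z ^ 2) := by
  have hpow : ∀ x : ZMod 49, (x ^ 7) ^ 7 = x ^ 7 := by decide +kernel
  have hzσ : (z : ZMod 49) = c * s ^ 7 := by rw [hs]; push_cast; rfl
  refine ⟨s ^ 7, hpow _, fun h0 => hz7 ?_, hzσ, ?_⟩
  · have h49 := (ZMod.intCast_zmod_eq_zero_iff_dvd (s ^ 7) 49).1 (by rw [Int.cast_pow, h0])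
    exact hs ▸ ((by norm_num : (7 : ℤ) ∣ (49 : ℕ)).trans h49).mul_left c
  · have ht := congrArg (Int.cast : ℤ → ZMod 49) h
    rw [intCast_cubicForm] at ht
    push_cast at ht
    rw [ht, hpow]

end Congruences

section SqAddFiveMulSq

theorem isCoprime_left_sq_add_five_mul_sq {a b : ℤ} (hab : IsCoprime a b) (ha5 : ¬5 ∣ a) :
    IsCoprime a (a ^ 2 + 5 * b ^ 2) := by
  rw [add_comm, sq a]
  exact ((isCoprime_of_prime_not_dvd (by norm_num) ha5).symm.mul_right
    hab.pow_right).add_mul_left_right a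

theorem isCoprime_right_sq_add_five_mul_sq {a b : ℤ} (hab : IsCoprime a b) :
    IsCoprime b (a ^ 2 + 5 * b ^ 2) := by
  rw [sq b, mul_left_comm]
  exact hab.symm.pow_right.add_mul_left_right (5 * b)

theorem dvd_cubicForm {R : Type*} [CommRing R] {d m n : R} (hm : d ∣ m) (hn : d ∣ n) :
    d ∣ cubicForm m n := by
  obtain ⟨m, rfl⟩ := hm
  obtain ⟨n, rfl⟩ := hn
  exact ⟨d ^ 2 * cubicForm m n, by simp only [cubicForm]; ring⟩

theorem exists_eq_mul_cubicForm_of_sq_add_five_mul_sq_eq_pow {P Q v : ℤ} (hPQ : IsCoprime P Q)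
    (hP5 : ¬5 ∣ P) (h : P ^ 2 + 5 * Q ^ 2 = v ^ 7) :
    ∃ a b m : ℤ, m = a ^ 2 + 5 * b ^ 2 ∧ IsCoprime m (4 * a ^ 2) ∧ IsCoprime m (20 * b ^ 2) ∧
      P = a * cubicForm m (4 * a ^ 2) ∧ Q = -(b * cubicForm m (20 * b ^ 2)) := by
  obtain ⟨⟨a, b⟩, hβ⟩ := exists_pow_eq_of_norm_eq_pow (n := 7) (by decide) (α := ⟨P, Q⟩) hPQ
    (w := v) (by rw [Zsqrtd.norm_def, ← h]; ring)
  rw [pow_seven_eq_cubicForm, Zsqrtd.mk.injEq] at hβ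
  obtain ⟨rfl, rfl⟩ := hβ
  have hab : IsCoprime a b :=
    ((IsCoprime.neg_right_iff _ _).1 hPQ).of_mul_left_left.of_mul_right_left
  have ha5 : ¬5 ∣ a := fun hdvd => hP5 (hdvd.mul_right _)
  set m := a ^ 2 + 5 * b ^ 2 with hm
  have hm2 : IsCoprime m 2 := by
    refine (isCoprime_of_prime_not_dvd Int.prime_two fun hdvd => ?_).symm
    refine Int.prime_two.not_isUnit (hPQ.isUnit_of_dvd' ?_ (dvd_neg.2 ?_))
    · exact (dvd_cubicForm hdvd (Dvd.intro (2 * a ^ 2) (by ring))).mul_left a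
    · exact (dvd_cubicForm hdvd (Dvd.intro (10 * b ^ 2) (by ring))).mul_left b
  have hm5 : IsCoprime m 5 :=
    (((isCoprime_of_prime_not_dvd (by norm_num) ha5).pow_right).add_mul_left_right _).symm
  have hma : IsCoprime m a := (isCoprime_left_sq_add_five_mul_sq hab ha5).symm
  have hmb : IsCoprime m b := (isCoprime_right_sq_add_five_mul_sq hab).symm
  refine ⟨a, b, m, hm, ?_, ?_, rfl, rfl⟩
  · exact (hm2.pow_right (n := 2)).mul_right hma.pow_right
  · exact ((hm2.pow_right (n := 2)).mul_right hm5).mul_right hmb.pow_right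

theorem zmod_cubicForm_pow_seven_ne : ∀ c : ZMod 49, c = 3 ^ 5 ∨ c = 2 ^ 4 * 3 ^ 5 →
    ∀ σ : ZMod 49, σ ^ 7 = σ → σ ≠ 0 → ∀ b : ZMod 49,
      cubicForm ((c * σ) ^ 2 + 5 * b ^ 2) (4 * (c * σ) ^ 2) ^ 7 ≠
        cubicForm ((c * σ) ^ 2 + 5 * b ^ 2) (4 * (c * σ) ^ 2) := by
  decide +kernel

theorem sq_add_five_mul_sq_ne_pow_of_left_eq {P Q w c : ℤ} (hc : c = 3 ^ 5 ∨ c = 2 ^ 4 * 3 ^ 5)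
    (hP0 : P ≠ 0) (hP5 : ¬5 ∣ P) (hPQ : IsCoprime P Q) (hP : P = c * w ^ 7) (v : ℤ) :
    P ^ 2 + 5 * Q ^ 2 ≠ v ^ 7 := by
  intro h
  obtain ⟨a, b, m, hm, hma, -, rfl, -⟩ :=
    exists_eq_mul_cubicForm_of_sq_add_five_mul_sq_eq_pow hPQ hP5 h
  have hc30 : c ∣ 30 ^ 5 := by rcases hc with rfl | rfl <;> norm_num
  have ha7 := not_seven_dvd_of_mul_cubicForm_eq (left_ne_zero_of_mul hP0) (by norm_num) hc30 hma hP
  obtain ⟨s, t, hs, ht⟩ := exists_eq_mul_pow_and_cubicForm_eq_pow hc30 hma ha7 hP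
  obtain ⟨σ, hσ, hσ0, ha, hpow⟩ := exists_zmod_of_cubicForm_eq_pow ha7 hs ht
  have hmσ : (m : ZMod 49) = (c * σ) ^ 2 + 5 * b ^ 2 := by rw [hm, ← ha]; push_cast; rfl
  rw [hmσ, ha] at hpow
  exact zmod_cubicForm_pow_seven_ne c (by rcases hc with rfl | rfl <;> decide) σ hσ hσ0 b hpow

theorem zmod_mul_sub_eq_zero_of_cubicForm_pow_seven_eq {α c : ZMod 49}
    (hα : α = 4 ∧ c = 3 ^ 5 * 5 ^ 5 ∨ α = 3 ∧ c = 2 ^ 4 * 3 ^ 5 * 5 ^ 5) :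
    ∀ σ : ZMod 49, σ ^ 7 = σ → σ ≠ 0 → ∀ a : ZMod 49,
      cubicForm (a ^ 2 + 5 * (c * σ) ^ 2) (20 * (c * σ) ^ 2) ^ 7 =
        cubicForm (a ^ 2 + 5 * (c * σ) ^ 2) (20 * (c * σ) ^ 2) →
      7 * (α * (a ^ 2 + 5 * (c * σ) ^ 2) - 20 * (c * σ) ^ 2) = 0 := by
  rcases hα with ⟨rfl, rfl⟩ | ⟨rfl, rfl⟩ <;> decide +kernel

theorem modEq_mul_of_cubicForm_eq_pow {a b m α c s t : ℤ}
    (hα : α = 4 ∧ c = 3 ^ 5 * 5 ^ 5 ∨ α = 3 ∧ c = 2 ^ 4 * 3 ^ 5 * 5 ^ 5)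
    (hm : m = a ^ 2 + 5 * b ^ 2) (hb7 : ¬7 ∣ b) (hs : b = c * s ^ 7)
    (ht : cubicForm m (20 * b ^ 2) = t ^ 7) : 20 * b ^ 2 ≡ α * m [ZMOD 7] := by
  obtain ⟨σ, hσ, hσ0, hb, hpow⟩ := exists_zmod_of_cubicForm_eq_pow hb7 hs ht
  have hmσ : (m : ZMod 49) = a ^ 2 + 5 * (c * σ) ^ 2 := by rw [hm, ← hb]; push_cast; rfl
  rw [hmσ, hb] at hpow
  have hzero := zmod_mul_sub_eq_zero_of_cubicForm_pow_seven_eq (α := α) (c := c)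
    (by rcases hα with ⟨rfl, rfl⟩ | ⟨rfl, rfl⟩ <;> decide) σ hσ hσ0 a hpow
  rw [← hmσ, ← hb] at hzero
  have h49 : ((49 : ℕ) : ℤ) ∣ 7 * (α * m - 20 * b ^ 2) :=
    (ZMod.intCast_zmod_eq_zero_iff_dvd _ 49).1 (by push_cast; exact hzero)
  exact Int.modEq_iff_dvd.2 ((mul_dvd_mul_iff_left (by norm_num : (7 : ℤ) ≠ 0)).1 h49)

theorem sq_add_five_mul_sq_ne_pow_of_right_eq {P Q w c : ℤ}
    (hc : c = 3 ^ 5 * 5 ^ 5 ∨ c = 2 ^ 4 * 3 ^ 5 * 5 ^ 5) (hQ0 : Q ≠ 0) (hP5 : ¬5 ∣ P)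
    (hPQ : IsCoprime P Q) (hQ : Q = c * w ^ 7) (v : ℤ) : P ^ 2 + 5 * Q ^ 2 ≠ v ^ 7 := by
  intro h
  obtain ⟨a, b, m, hm, -, hmb, -, rfl⟩ :=
    exists_eq_mul_cubicForm_of_sq_add_five_mul_sq_eq_pow hPQ hP5 h
  have hc30 : c ∣ 30 ^ 5 := by rcases hc with rfl | rfl <;> norm_num
  have hb : b * cubicForm m (20 * b ^ 2) = c * (-w) ^ 7 := by linear_combination -hQ
  have hb7 := not_seven_dvd_of_mul_cubicForm_eq (left_ne_zero_of_mul (neg_ne_zero.1 hQ0))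
    (by norm_num) hc30 hmb hb
  obtain ⟨s, t, hs, ht⟩ := exists_eq_mul_pow_and_cubicForm_eq_pow hc30 hmb hb7 hb
  have hn7 : ¬7 ∣ 20 * b ^ 2 := fun hdvd => by
    have h7 : Prime (7 : ℤ) := by norm_num
    exact hb7 (h7.dvd_of_dvd_pow ((h7.dvd_or_dvd hdvd).resolve_left (by norm_num)))
  have hns : 20 * b ^ 2 = 20 * c ^ 2 * s ^ 14 := by rw [hs]; ring
  rcases hc with rfl | rfl
  · have hmod := modEq_mul_of_cubicForm_eq_pow (.inl ⟨rfl, rfl⟩) hm hb7 hs ht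
    exact cubicForm_ne_pow_of_modEq_four_mul hmb hn7 hmod hns t ht
  · have hmod := modEq_mul_of_cubicForm_eq_pow (.inr ⟨rfl, rfl⟩) hm hb7 hs ht
    exact cubicForm_ne_pow_of_modEq_three_mul hmb hn7 hmod hns t ht

end SqAddFiveMulSq

section Reduction

-- For odd `a` and `b` the left-hand side is congruent to `6 * a` modulo 8.
theorem mul_sq_add_five_mul_sq_ne_of_odd {a b : ℤ} (ha : Odd a) (hb : Odd b) (k : ℤ) :
    a * (a ^ 2 + 5 * b ^ 2) ≠ 2 ^ 4 * k := by
  obtain ⟨i, hi⟩ := Int.eight_dvd_sq_sub_one_of_odd ha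
  obtain ⟨j, hj⟩ := Int.eight_dvd_sq_sub_one_of_odd hb
  obtain ⟨l, rfl⟩ := ha
  have hmod : (2 * l + 1) * ((2 * l + 1) ^ 2 + 5 * b ^ 2) =
      4 * (2 * ((2 * l + 1) * (i + 5 * j)) + 3 * l + 1) + 2 := by
    linear_combination (2 * l + 1) * (hi + 5 * hj)
  lia

theorem isCoprime_six_sq_add_five_mul_sq {x r : ℤ} (hxr : IsCoprime x r) (h3 : 3 ∣ x)
    (h2 : Odd (x + r)) : IsCoprime 6 (x ^ 2 + 5 * r ^ 2) := by
  have h3' : IsCoprime 3 (x ^ 2 + 5 * r ^ 2) := by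
    have h3r : IsCoprime 3 r := hxr.of_isCoprime_of_dvd_left h3
    obtain ⟨k, hk⟩ := h3
    have hsum : x ^ 2 + 5 * r ^ 2 = 5 * r ^ 2 + 3 * (k * x) := by linear_combination x * hk
    rw [hsum]
    exact (IsCoprime.mul_right (by norm_num) h3r.pow_right).add_mul_left_right _
  have h2' : IsCoprime 2 (x ^ 2 + 5 * r ^ 2) := by
    rw [Int.isCoprime_two_left]
    have hsum : x ^ 2 + 5 * r ^ 2 = (x + r) ^ 2 + 2 * (r * (2 * r - x)) := by ring
    exact hsum ▸ h2.pow.add_even (even_two_mul _)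
  exact h2'.mul_left h3'

theorem exists_mul_sq_add_five_mul_sq_eq {x r y : ℤ} (hx : x ≠ 0) (hxr : IsCoprime x r)
    (h3 : 3 ∣ x) (h : x * (x ^ 2 + 20 * r ^ 2) = 3 ^ 5 * y ^ 7) :
    ∃ x' r' y' c : ℤ, (c = 3 ^ 5 ∨ c = 2 ^ 4 * 3 ^ 5) ∧ x' ≠ 0 ∧ IsCoprime x' r' ∧ 3 ∣ x' ∧
      Odd (x' + r') ∧ x' * (x' ^ 2 + 5 * r' ^ 2) = c * y' ^ 7 := by
  rcases Int.even_or_odd x with hx2 | hx2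
  · obtain ⟨k, rfl⟩ := hx2.two_dvd
    have hr : Odd r := Int.isCoprime_two_left.1 hxr.of_mul_left_left
    obtain ⟨z, rfl⟩ : 2 ∣ y := by
      have hdvd : 2 ∣ 3 ^ 5 * y ^ 7 := h ▸ (Dvd.intro k rfl).mul_right _
      exact Int.prime_two.dvd_of_dvd_pow
        ((Int.prime_two.dvd_or_dvd hdvd).resolve_left (by norm_num))
    have hk : k * (k ^ 2 + 5 * r ^ 2) = 2 ^ 4 * 3 ^ 5 * z ^ 7 := by linarith
    have hk2 : Even k := Int.not_odd_iff_even.1 fun hodd =>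
      mul_sq_add_five_mul_sq_ne_of_odd hodd hr _ (hk.trans (mul_assoc _ _ _))
    exact ⟨k, r, z, _, .inr rfl, right_ne_zero_of_mul hx, hxr.of_mul_left_right, by lia,
      hk2.add_odd hr, hk⟩
  · exact ⟨x, 2 * r, y, _, .inl rfl, hx, (Int.isCoprime_two_right.2 hx2).mul_right hxr, h3,
      hx2.add_even (even_two_mul r), by linear_combination h⟩

theorem mul_sq_add_five_mul_sq_ne_mul_pow {x r c : ℤ} (hc : c = 3 ^ 5 ∨ c = 2 ^ 4 * 3 ^ 5)
    (hx : x ≠ 0) (hxr : IsCoprime x r) (h3 : 3 ∣ x) (h2 : Odd (x + r)) (y : ℤ) :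
    x * (x ^ 2 + 5 * r ^ 2) ≠ c * y ^ 7 := by
  intro h
  have h6 := isCoprime_six_sq_add_five_mul_sq hxr h3 h2
  have hc6 : c ∣ 6 ^ 5 := by rcases hc with rfl | rfl <;> norm_num
  have hc0 : c ≠ 0 := ne_zero_of_dvd_ne_zero (by norm_num) hc6
  by_cases hx5 : 5 ∣ x
  · have h5 : Prime (5 : ℤ) := by norm_num
    have hr5 : IsCoprime 5 r := hxr.of_isCoprime_of_dvd_left hx5
    obtain ⟨z, rfl⟩ : 5 ∣ y := by
      have hc5 : ¬5 ∣ c := by rcases hc with rfl | rfl <;> norm_num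
      exact h5.dvd_of_dvd_pow ((h5.dvd_or_dvd (h ▸ hx5.mul_right _)).resolve_left hc5)
    obtain ⟨k, rfl⟩ := hx5
    have hfactor : (5 * k) ^ 2 + 5 * r ^ 2 = 5 * (r ^ 2 + 5 * k ^ 2) := by ring
    have hrk := hxr.of_mul_left_right.symm
    have hcop5 : IsCoprime 5 (r ^ 2 + 5 * k ^ 2) := hr5.pow_right.add_mul_left_right _
    have hcopc : IsCoprime c (r ^ 2 + 5 * k ^ 2) :=
      ((hfactor ▸ h6).of_mul_right_right.pow_left).of_isCoprime_of_dvd_left hc6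
    obtain ⟨s, t, hs, ht⟩ := exists_eq_mul_pow_and_eq_pow_of_isCoprime (n := 7) (c := c * 5 ^ 5)
      (y := z) (by decide) (by positivity) (isCoprime_right_sq_add_five_mul_sq hrk)
      (hcopc.mul_left hcop5.pow_left) (by linarith)
    exact sq_add_five_mul_sq_ne_pow_of_right_eq (hc.imp (by rw [·]) (by rw [·]))
      (right_ne_zero_of_mul hx) (fun hdvd => h5.not_isUnit (hr5.isUnit_of_dvd' dvd_rfl hdvd)) hrk hs
      t ht
  · obtain ⟨s, t, hs, ht⟩ := exists_eq_mul_pow_and_eq_pow_of_isCoprime (by decide) hc0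
      (isCoprime_left_sq_add_five_mul_sq hxr hx5) (h6.pow_left.of_isCoprime_of_dvd_left hc6) h
    exact sq_add_five_mul_sq_ne_pow_of_left_eq hc hx hx5 hxr hs t ht

end Reduction

theorem no_solutions_exponent_seven (x r y : ℤ) (hgcd : Int.gcd x r = 1)
    (hr : 0 < r) (h3 : 3 ∣ x)
    (h : (x - 4*r)^3 + (x - 3*r)^3 + (x - 2*r)^3 + (x - r)^3 + x^3
        + (x + r)^3 + (x + 2*r)^3 + (x + 3*r)^3 + (x + 4*r)^3 = y ^ 7) :
    x * y = 0 := by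
  by_contra hxy
  have hsum : 9 * (x * (x ^ 2 + 20 * r ^ 2)) = y ^ 7 := by rw [← h]; ring
  obtain ⟨z, rfl⟩ : 3 ∣ y :=
    Int.prime_three.dvd_of_dvd_pow (hsum ▸ Dvd.dvd.mul_right (by norm_num) _)
  have hprod : x * (x ^ 2 + 20 * r ^ 2) = 3 ^ 5 * z ^ 7 := by linarith
  obtain ⟨x', r', y', c, hc, hx', hxr', h3', h2', h'⟩ := exists_mul_sq_add_five_mul_sq_eq
    (left_ne_zero_of_mul hxy) (Int.isCoprime_iff_gcd_eq_one.2 hgcd) h3 hprod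
  exact mul_sq_add_five_mul_sq_ne_mul_pow hc hx' hxr' h3' h2' y' h'
end

section
/- Let p ≥ 3 be a prime and let x, r, y be integers with gcd(x, r) = 1 such that 2 ∣ x and 4 ∤ x. Then the equation 9x(x² + 20r²) = y^p has no solutions; that is, there are no integers x, r, y with gcd(x, r) = 1, x ≡ 2 (mod 4), and 9x(x² + 20r²) = y^p. -/
/-!
Write `x = 2k` with `k` odd; coprimality makes `r` odd as well. Then
`x² + 20r² = 4(k² + 5r²)` with `k² + 5r² ≡ 2 (mod 4)`, so `9x(x² + 20r²)` has 2-adic valuation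
`0 + 1 + 3 = 4`. The 2-adic valuation of `y ^ p` is a multiple of `p`, hence `p ∣ 4`.
-/

theorem dvd_of_emultiplicity_pow_eq_coe {α : Type*} [CommMonoidWithZero α] [IsCancelMulZero α]
    {q a : α} (hq : Prime q) {n k : ℕ} (h : emultiplicity q (a ^ n) = k) : n ∣ k := by
  rw [emultiplicity_pow hq] at h
  obtain rfl | hn := eq_or_ne n 0
  · simpa [eq_comm] using h
  · cases hm : emultiplicity q a with
    | top => simp [hm, hn] at h
    | coe m =>
      rw [hm] at h
      exact ⟨m, by exact_mod_cast h.symm⟩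

theorem emultiplicity_two_eq_one_iff_emod_four {n : ℤ} : emultiplicity 2 n = 1 ↔ n % 4 = 2 := by
  rw [← Nat.cast_one, emultiplicity_eq_coe]
  omega

theorem emultiplicity_two_sq_add_mul_sq {a b c : ℤ} (ha : Odd a) (hb : Odd b)
    (hc : c ≡ 1 [ZMOD 4]) : emultiplicity 2 (a ^ 2 + c * b ^ 2) = 1 := by
  have ha_sq : a ^ 2 ≡ 1 [ZMOD 4] := Int.sq_mod_four_eq_one_of_odd ha
  have hb_sq : b ^ 2 ≡ 1 [ZMOD 4] := Int.sq_mod_four_eq_one_of_odd hb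
  exact emultiplicity_two_eq_one_iff_emod_four.2 (ha_sq.add (hc.mul hb_sq))

theorem emultiplicity_two_sq_add_twenty_mul_sq {x r : ℤ} (hx : x % 4 = 2) (hr : Odd r) :
    emultiplicity 2 (x ^ 2 + 20 * r ^ 2) = 3 := by
  obtain ⟨k, rfl⟩ : 2 ∣ x := by omega
  have hk : Odd k := Int.odd_iff.2 (by omega)
  have hfactor : (2 * k) ^ 2 + 20 * r ^ 2 = 2 ^ 2 * (k ^ 2 + 5 * r ^ 2) := by ring
  rw [hfactor, emultiplicity_mul Int.prime_two, emultiplicity_pow_self_of_prime Int.prime_two,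
    emultiplicity_two_sq_add_mul_sq hk hr (by decide)]
  norm_num

theorem emultiplicity_two_nine_mul_mul_sq_add {x r : ℤ} (hx : x % 4 = 2) (hr : Odd r) :
    emultiplicity 2 (9 * x * (x ^ 2 + 20 * r ^ 2)) = 4 := by
  have hnine : emultiplicity (2 : ℤ) 9 = 0 := emultiplicity_eq_zero.2 (by decide)
  rw [emultiplicity_mul Int.prime_two, emultiplicity_mul Int.prime_two, hnine,
    emultiplicity_two_eq_one_iff_emod_four.2 hx, emultiplicity_two_sq_add_twenty_mul_sq hx hr]
  norm_num

theorem no_solutions_x_exactly_div_by_two_general {p : ℕ} (hp : ¬ p ∣ 4) {x r : ℤ}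
    (hx : x % 4 = 2) (hr : Odd r) (y : ℤ) : 9 * x * (x ^ 2 + 20 * r ^ 2) ≠ y ^ p := by
  intro h
  have hval : emultiplicity 2 (y ^ p) = 4 := h ▸ emultiplicity_two_nine_mul_mul_sq_add hx hr
  exact hp (dvd_of_emultiplicity_pow_eq_coe Int.prime_two hval)

theorem no_solutions_x_exactly_div_by_two (p : ℕ) (hp : p.Prime) (hp3 : 3 ≤ p)
    (x r y : ℤ) (hgcd : Int.gcd x r = 1) (h2 : 2 ∣ x) (h4 : ¬ 4 ∣ x) :
    9 * x * (x ^ 2 + 20 * r ^ 2) ≠ y ^ p := by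
  have hp4 : ¬ p ∣ 2 ^ 2 := fun h ↦
    (Nat.le_of_dvd two_pos (hp.dvd_of_dvd_pow h)).not_gt hp3
  have hr : Odd r :=
    Int.isCoprime_two_left.1 ((Int.isCoprime_iff_gcd_eq_one.2 hgcd).of_isCoprime_of_dvd_left h2)
  exact no_solutions_x_exactly_div_by_two_general hp4 (by omega) hr y
end
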